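/- Let m ≥ 1, let C_i : ℝⁿ → ℝ^{n_i} (i = 1,…,m) be surjective linear maps with ⋂_{i=1}^m ker C_i = {0}, let p_i > 0 be reals, let I ⊆ {1,…,m}, and let Q_i be symmetric positive definite matrices on ℝ^{n_i}. Suppose that for each i ∈ I the nonnegative function g_i ∈ L¹(ℝ^{n_i}) is more log-concave than g_{Q_i^{-1}}, and for each j ∉ I the nonnegative function g_j ∈ L¹(ℝ^{n_j}) is more log-convex than g_{Q_j^{-1}}. Then the outer integral ∫_{ℝⁿ} sup{ ∏_{j=1}^m g_j(y_j)^{p_j} : y_j ∈ ℝ^{n_j}, ∑_{j=1}^m p_j C_jᵀ y_j = x } dx ≥ E · ∏_{i=1}^m (∫_{ℝ^{n_i}} g_i)^{p_i}, where E = inf{ (det(∑_{i=1}^m p_i C_iᵀ B_i C_i) / ∏_{i=1}^m det(B_i)^{p_i})^{1/2} : B_i symmetric with 0 < B_i ≤ Q_i for i ∈ I and B_j ≥ Q_j for j ∉ I }. -/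

import Mathlib

open MeasureTheory Matrix
open scoped ENNReal

noncomputable section

/-- The centered Gaussian function attached to a matrix `Q` : `g_Q(x) = exp(-π⟨Qx,x⟩)`. -/
def gaussFn {k : ℕ} (Q : Matrix (Fin k) (Fin k) ℝ) (x : Fin k → ℝ) : ℝ :=
  Real.exp (-Real.pi * (Q.mulVec x ⬝ᵥ x))

/-- A nonnegative log-convex function. -/
def LogConvexFun {k : ℕ} (h : (Fin k → ℝ) → ℝ) : Prop :=
  (∀ x, 0 ≤ h x) ∧
    ∀ x y : Fin k → ℝ, ∀ a b : ℝ, 0 ≤ a → 0 ≤ b → a + b = 1 →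
      h (a • x + b • y) ≤ h x ^ a * h y ^ b

/-- A nonnegative log-concave function. -/
def LogConcaveFun {k : ℕ} (h : (Fin k → ℝ) → ℝ) : Prop :=
  (∀ x, 0 ≤ h x) ∧
    ∀ x y : Fin k → ℝ, ∀ a b : ℝ, 0 ≤ a → 0 ≤ b → a + b = 1 →
      h x ^ a * h y ^ b ≤ h (a • x + b • y)

/-- `f` is more log-convex than `g_Q`, i.e. `f = g_Q · h` with `h` log-convex. -/
def MoreLogConvex {k : ℕ} (f : (Fin k → ℝ) → ℝ) (Q : Matrix (Fin k) (Fin k) ℝ) : Prop :=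
  ∃ h : (Fin k → ℝ) → ℝ, LogConvexFun h ∧ f = fun x => gaussFn Q x * h x

/-- `f` is more log-concave than `g_Q`, i.e. `f = g_Q · h` with `h` log-concave. -/
def MoreLogConcave {k : ℕ} (f : (Fin k → ℝ) → ℝ) (Q : Matrix (Fin k) (Fin k) ℝ) : Prop :=
  ∃ h : (Fin k → ℝ) → ℝ, LogConcaveFun h ∧ f = fun x => gaussFn Q x * h x

set_option linter.unusedSectionVars false

open scoped Pointwise in
/-- The Brunn–Minkowski inequality on the real line. -/
theorem Real.volume_add_le_volume_add_set {A B : Set ℝ} (hA : MeasurableSet A)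
    (hB : MeasurableSet B) (hA' : A.Nonempty) (hB' : B.Nonempty) :
    volume A + volume B ≤ volume (A + B) := by
  have key : ∀ K L : Set ℝ, IsCompact K → IsCompact L → K.Nonempty → L.Nonempty → K ⊆ A → L ⊆ B →
      volume K + volume L ≤ volume (A + B) := by
    intro K L hK hL hK' hL' hKA hLB
    obtain ⟨x, hx⟩ := hK.exists_isGreatest hK'
    obtain ⟨y, hy⟩ := hL.exists_isLeast hL'
    have h1 : volume ((fun z => z + y) '' K ∪ (fun z => x + z) '' L) = volume K + volume L := by
      rw [measure_union₀]
      · congr 1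
        · rw [Set.image_add_right, measure_preimage_add_right]
        · rw [Set.image_add_left, measure_preimage_add]
      · exact (hL.image (by fun_prop)).measurableSet.nullMeasurableSet
      · refine measure_mono_null (t := {x + y}) ?_ (by simp)
        rintro z ⟨⟨u, hu, rfl⟩, ⟨v, hv, hv'⟩⟩
        have := hx.2 hu
        have := hy.2 hv
        simp only [Set.mem_singleton_iff] at *
        linarith
    rw [← h1]
    refine measure_mono ?_
    rintro z (⟨u, hu, rfl⟩ | ⟨v, hv, rfl⟩)
    · exact Set.add_mem_add (hKA hu) (hLB hy.1)
    · exact Set.add_mem_add (hKA hx.1) (hLB hv)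
  have exK : ∀ S : Set ℝ, MeasurableSet S → S.Nonempty →
      volume S = ⨆ K : {K : Set ℝ // IsCompact K ∧ K.Nonempty ∧ K ⊆ S}, volume (K : Set ℝ) := by
    intro S hS hS'
    refine le_antisymm ?_ (iSup_le fun K => measure_mono K.2.2.2)
    refine le_of_forall_lt fun r hr => ?_
    obtain ⟨K, hKS, hK, hrK⟩ := hS.exists_lt_isCompact hr
    have : K.Nonempty := by
      by_contra h
      rw [Set.not_nonempty_iff_eq_empty.1 h] at hrK
      simp at hrK
    exact lt_of_lt_of_le hrK (le_iSup (fun K : {K : Set ℝ // IsCompact K ∧ K.Nonempty ∧ K ⊆ S} =>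
      volume (K : Set ℝ)) ⟨K, hK, this, hKS⟩)
  rw [exK A hA hA', exK B hB hB']
  obtain ⟨x, hx⟩ := hA'
  obtain ⟨y, hy⟩ := hB'
  have : Nonempty {K : Set ℝ // IsCompact K ∧ K.Nonempty ∧ K ⊆ A} :=
    ⟨⟨{x}, isCompact_singleton, Set.singleton_nonempty x, by simpa using hx⟩⟩
  have : Nonempty {K : Set ℝ // IsCompact K ∧ K.Nonempty ∧ K ⊆ B} :=
    ⟨⟨{y}, isCompact_singleton, Set.singleton_nonempty y, by simpa using hy⟩⟩
  exact ENNReal.iSup_add_iSup_le fun K L =>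
    key K L K.2.1 L.2.1 K.2.2.1 L.2.2.1 K.2.2.2 L.2.2.2

/-- Layer cake formula for functions with values in `[0, 1]`. -/
theorem lintegral_eq_setLIntegral_Ioo_meas_lt {α : Type*} [MeasurableSpace α] {μ : Measure α}
    {f : α → ℝ≥0∞} (hf : Measurable f) (hf1 : ∀ x, f x ≤ 1) :
    ∫⁻ x, f x ∂μ = ∫⁻ t in Set.Ioo (0 : ℝ) 1, μ {x | ENNReal.ofReal t < f x} := by
  have hfin : ∀ x, f x ≠ ∞ := fun x => ne_top_of_le_ne_top ENNReal.one_ne_top (hf1 x)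
  have h1 : ∫⁻ x, f x ∂μ = ∫⁻ x, ENNReal.ofReal (f x).toReal ∂μ := by
    simp_rw [ENNReal.ofReal_toReal (hfin _)]
  rw [h1, lintegral_eq_lintegral_meas_lt μ (Filter.Eventually.of_forall fun x => by positivity)
    hf.ennreal_toReal.aemeasurable, ← Set.Ioo_union_Ici_eq_Ioi (zero_lt_one' ℝ),
    lintegral_union measurableSet_Ici]
  · have h2 : ∫⁻ t in Set.Ici (1 : ℝ), μ {a | t < (f a).toReal} = 0 := by
      refine (setLIntegral_congr_fun measurableSet_Ici ?_).trans (lintegral_zero)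
      intro t ht
      have : {a | t < (f a).toReal} = ∅ := by
        ext a
        simp only [Set.mem_ofPred_eq, Set.mem_empty_iff_false, iff_false, not_lt]
        refine le_trans ?_ (Set.mem_Ici.1 ht)
        simpa using ENNReal.toReal_mono ENNReal.one_ne_top (hf1 a)
      simp [this]
    rw [h2, add_zero]
    refine setLIntegral_congr_fun measurableSet_Ioo fun t ht => ?_
    congr 1
    ext a
    exact (ENNReal.ofReal_lt_iff_lt_toReal ht.1.le (hfin a)).symm
  · refine Set.disjoint_left.2 fun t ht ht' => ?_
    exact absurd ht.2 (not_lt.2 ht')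

open scoped Pointwise in
/-- Prékopa–Leindler on the line in arithmetic form, for functions with essential height one. -/
theorem arith_prekopa_leindler_real {a b : ℝ} (ha : 0 < a) (hb : 0 < b) (hab : a + b = 1)
    {f g h : ℝ → ℝ≥0∞} (hf : Measurable f) (hg : Measurable g) (hh : Measurable h)
    (hf1 : ∀ x, f x ≤ 1) (hg1 : ∀ x, g x ≤ 1)
    (hf2 : ∀ s < 1, ∃ x, s < f x) (hg2 : ∀ s < 1, ∃ x, s < g x)
    (H : ∀ x y, f x ^ a * g y ^ b ≤ h (a * x + b * y)) :
    ENNReal.ofReal a * (∫⁻ x, f x) + ENNReal.ofReal b * (∫⁻ x, g x) ≤ ∫⁻ x, h x := by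
  have hmono : ∫⁻ x, min (h x) 1 ≤ ∫⁻ x, h x := lintegral_mono fun x => min_le_left _ _
  refine le_trans ?_ hmono
  rw [lintegral_eq_setLIntegral_Ioo_meas_lt hf hf1, lintegral_eq_setLIntegral_Ioo_meas_lt hg hg1,
    lintegral_eq_setLIntegral_Ioo_meas_lt (hh.min measurable_const) (fun x => min_le_right _ _)]
  have hm : ∀ {u : ℝ → ℝ≥0∞}, Measurable fun t : ℝ => volume {x | ENNReal.ofReal t < u x} := by
    intro u
    refine Antitone.measurable fun s t hst => measure_mono fun x hx => ?_
    exact lt_of_le_of_lt (ENNReal.ofReal_le_ofReal hst) hx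
  rw [← lintegral_const_mul _ hm, ← lintegral_const_mul _ hm,
    ← lintegral_add_left (hm.const_mul _)]
  refine setLIntegral_mono hm fun t ht => ?_
  have ht1 : ENNReal.ofReal t < 1 := by
    simpa using (ENNReal.ofReal_lt_ofReal_iff zero_lt_one).2 ht.2
  have hsub : a • {x | ENNReal.ofReal t < f x} + b • {x | ENNReal.ofReal t < g x} ⊆
      {x | ENNReal.ofReal t < min (h x) 1} := by
    rintro _ ⟨_, ⟨x, hx, rfl⟩, _, ⟨y, hy, rfl⟩, rfl⟩
    refine lt_min (lt_of_lt_of_le ?_ (H x y)) ht1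
    calc ENNReal.ofReal t = ENNReal.ofReal t ^ a * ENNReal.ofReal t ^ b := by
          rw [← ENNReal.rpow_add _ _ (by simpa using ht.1) (by simp), hab, ENNReal.rpow_one]
      _ < f x ^ a * g y ^ b := ENNReal.mul_lt_mul (ENNReal.rpow_lt_rpow hx ha)
          (ENNReal.rpow_lt_rpow hy hb)
  have hA : ∀ {u : ℝ → ℝ≥0∞}, Measurable u → MeasurableSet {x | ENNReal.ofReal t < u x} :=
    fun hu => measurableSet_lt measurable_const hu
  calc _ = volume (a • {x | ENNReal.ofReal t < f x}) + volume (b • {x | ENNReal.ofReal t < g x}) := by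
        simp [Measure.addHaar_smul, abs_of_pos ha, abs_of_pos hb]
    _ ≤ volume (a • {x | ENNReal.ofReal t < f x} + b • {x | ENNReal.ofReal t < g x}) := by
        refine Real.volume_add_le_volume_add_set ((hA hf).const_smul₀ a) ((hA hg).const_smul₀ b) ?_ ?_
        · obtain ⟨x, hx⟩ := hf2 _ ht1
          exact ⟨a • x, Set.smul_mem_smul_set hx⟩
        · obtain ⟨x, hx⟩ := hg2 _ ht1
          exact ⟨b • x, Set.smul_mem_smul_set hx⟩
    _ ≤ _ := measure_mono hsub

theorem ENNReal.geom_mean_le_arith_mean_two_weighted {a b : ℝ} (ha : 0 < a) (hb : 0 < b)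
    (hab : a + b = 1) (x y : ℝ≥0∞) :
    x ^ a * y ^ b ≤ ENNReal.ofReal a * x + ENNReal.ofReal b * y := by
  rcases eq_or_ne x ∞ with rfl | hx
  · simp [ENNReal.mul_top, ha]
  rcases eq_or_ne y ∞ with rfl | hy
  · simp [ENNReal.mul_top, hb]
  lift x to NNReal using hx
  lift y to NNReal using hy
  have := Real.geom_mean_le_arith_mean2_weighted ha.le hb.le x.coe_nonneg y.coe_nonneg hab
  rw [← ENNReal.ofReal_coe_nnreal (p := x), ← ENNReal.ofReal_coe_nnreal (p := y),
    ENNReal.ofReal_rpow_of_nonneg x.coe_nonneg ha.le, ENNReal.ofReal_rpow_of_nonneg y.coe_nonneg hb.le,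
    ← ENNReal.ofReal_mul (by positivity), ← ENNReal.ofReal_mul ha.le, ← ENNReal.ofReal_mul hb.le,
    ← ENNReal.ofReal_add (by positivity) (by positivity)]
  exact ENNReal.ofReal_le_ofReal this

theorem prekopa_leindler_real_of_bounded {a b : ℝ} (ha : 0 < a) (hb : 0 < b) (hab : a + b = 1)
    {f g h : ℝ → ℝ≥0∞} (hf : Measurable f) (hg : Measurable g) (hh : Measurable h)
    {N : ℝ≥0∞} (hN : N ≠ ∞) (hfN : ∀ x, f x ≤ N) (hgN : ∀ x, g x ≤ N)
    (H : ∀ x y, f x ^ a * g y ^ b ≤ h (a * x + b * y)) :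
    (∫⁻ x, f x) ^ a * (∫⁻ x, g x) ^ b ≤ ∫⁻ x, h x := by
  set F := ⨆ x, f x with hF
  set G := ⨆ x, g x with hG
  have hFt : F ≠ ∞ := ne_top_of_le_ne_top hN (iSup_le hfN)
  have hGt : G ≠ ∞ := ne_top_of_le_ne_top hN (iSup_le hgN)
  rcases eq_or_ne F 0 with hF0 | hF0
  · have : ∀ x, f x = 0 := fun x => le_zero_iff.1 (hF0 ▸ le_iSup f x)
    simp [this, ha]
  rcases eq_or_ne G 0 with hG0 | hG0
  · have : ∀ x, g x = 0 := fun x => le_zero_iff.1 (hG0 ▸ le_iSup g x)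
    simp [this, hb]
  set c := F ^ a * G ^ b with hc
  have hc0 : c ≠ 0 := by
    simp [hc, ENNReal.rpow_eq_zero_iff, hF0, hG0, hFt, hGt]
  have hct : c ≠ ∞ := ENNReal.mul_ne_top (ENNReal.rpow_lt_top_of_nonneg ha.le hFt).ne
    (ENNReal.rpow_lt_top_of_nonneg hb.le hGt).ne
  have sup1 : ∀ {u : ℝ → ℝ≥0∞}, (⨆ x, u x) ≠ 0 → (⨆ x, u x) ≠ ∞ → ∀ s < 1,
      ∃ x, s < u x / ⨆ x, u x := by
    intro u h0 ht s hs
    have : s * (⨆ x, u x) < ⨆ x, u x := by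
      conv_rhs => rw [← one_mul (⨆ x, u x)]
      exact (ENNReal.mul_lt_mul_iff_left h0 ht).2 hs
    obtain ⟨x, hx⟩ := lt_iSup_iff.1 this
    exact ⟨x, (ENNReal.lt_div_iff_mul_lt (Or.inl h0) (Or.inl ht)).2 hx⟩
  have key := arith_prekopa_leindler_real ha hb hab (f := fun x => f x / F) (g := fun x => g x / G)
    (h := fun x => h x / c) (hf.div_const _) (hg.div_const _) (hh.div_const _)
    (fun x => ENNReal.div_le_of_le_mul (by simpa using le_iSup f x))
    (fun x => ENNReal.div_le_of_le_mul (by simpa using le_iSup g x))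
    (sup1 hF0 hFt) (sup1 hG0 hGt) (fun x y => by
      rw [ENNReal.div_rpow_of_nonneg _ _ ha.le, ENNReal.div_rpow_of_nonneg _ _ hb.le]
      calc f x ^ a / F ^ a * (g y ^ b / G ^ b) = f x ^ a * g y ^ b / c := by
            rw [hc, ENNReal.div_eq_inv_mul, ENNReal.div_eq_inv_mul, ENNReal.div_eq_inv_mul,
              ENNReal.mul_inv (Or.inr (ENNReal.rpow_lt_top_of_nonneg hb.le hGt).ne)
              (Or.inl (ENNReal.rpow_lt_top_of_nonneg ha.le hFt).ne)]
            ring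
        _ ≤ _ := ENNReal.div_le_div_right (H x y) _)
  have key2 := (ENNReal.geom_mean_le_arith_mean_two_weighted ha hb hab _ _).trans key
  simp_rw [div_eq_mul_inv] at key2
  rw [lintegral_mul_const _ hf, lintegral_mul_const _ hg, lintegral_mul_const _ hh,
    ENNReal.mul_rpow_of_nonneg _ _ ha.le, ENNReal.mul_rpow_of_nonneg _ _ hb.le,
    ENNReal.inv_rpow, ENNReal.inv_rpow, ← div_eq_mul_inv (∫⁻ x, h x),
    ENNReal.le_div_iff_mul_le (Or.inl hc0) (Or.inl hct)] at key2
  refine le_trans (le_of_eq ?_) key2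
  have hFa : (F ^ a)⁻¹ * F ^ a = 1 := ENNReal.inv_mul_cancel
    (by simp [ENNReal.rpow_eq_zero_iff, hF0, hFt]) (ENNReal.rpow_lt_top_of_nonneg ha.le hFt).ne
  have hGb : (G ^ b)⁻¹ * G ^ b = 1 := ENNReal.inv_mul_cancel
    (by simp [ENNReal.rpow_eq_zero_iff, hG0, hGt]) (ENNReal.rpow_lt_top_of_nonneg hb.le hGt).ne
  calc _ = (∫⁻ x, f x) ^ a * (∫⁻ x, g x) ^ b * ((F ^ a)⁻¹ * F ^ a) * ((G ^ b)⁻¹ * G ^ b) := by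
        rw [hFa, hGb]; simp
    _ = _ := by rw [hc]; ring

theorem lintegral_eq_iSup_min_nat {α : Type*} [MeasurableSpace α] {μ : Measure α}
    {f : α → ℝ≥0∞} (hf : Measurable f) :
    ∫⁻ x, f x ∂μ = ⨆ N : ℕ, ∫⁻ x, min (f x) N ∂μ := by
  rw [← lintegral_iSup (fun N => hf.min measurable_const)]
  · refine lintegral_congr fun x => ?_
    rw [← inf_iSup_eq, ENNReal.iSup_natCast, inf_top_eq]
  · intro N M hNM x
    exact min_le_min le_rfl (by exact_mod_cast hNM)

theorem prekopa_leindler_real {a b : ℝ} (ha : 0 < a) (hb : 0 < b) (hab : a + b = 1)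
    {f g h : ℝ → ℝ≥0∞} (hf : Measurable f) (hg : Measurable g) (hh : Measurable h)
    (H : ∀ x y, f x ^ a * g y ^ b ≤ h (a * x + b * y)) :
    (∫⁻ x, f x) ^ a * (∫⁻ x, g x) ^ b ≤ ∫⁻ x, h x := by
  have hlim : ∀ {u : ℝ → ℝ≥0∞}, Measurable u → Filter.Tendsto
      (fun N : ℕ => ∫⁻ x, min (u x) N) Filter.atTop (nhds (∫⁻ x, u x)) := by
    intro u hu
    rw [lintegral_eq_iSup_min_nat hu]
    refine tendsto_atTop_iSup fun N M hNM => lintegral_mono fun x => ?_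
    exact min_le_min le_rfl (by exact_mod_cast hNM)
  have hbd : ∀ N : ℕ, (∫⁻ x, min (f x) N) ^ a * (∫⁻ x, min (g x) N) ^ b ≤ ∫⁻ x, h x := fun N =>
    prekopa_leindler_real_of_bounded ha hb hab (hf.min measurable_const) (hg.min measurable_const)
      hh (ENNReal.natCast_ne_top N) (fun x => min_le_right _ _) (fun x => min_le_right _ _)
      (fun x y => le_trans (mul_le_mul' (ENNReal.rpow_le_rpow (min_le_left _ _) ha.le)
        (ENNReal.rpow_le_rpow (min_le_left _ _) hb.le)) (H x y))
  rcases eq_or_ne (∫⁻ x, f x) 0 with h0 | h0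
  · simp [h0, ha]
  rcases eq_or_ne (∫⁻ x, g x) 0 with h1 | h1
  · simp [h1, hb]
  refine le_of_tendsto (ENNReal.Tendsto.mul ((hlim hf).ennrpow_const a) ?_
    ((hlim hg).ennrpow_const b) ?_) (Filter.Eventually.of_forall hbd)
  · left; simp [ENNReal.rpow_eq_zero_iff, h0, ha.not_gt]
  · left; simp [ENNReal.rpow_eq_zero_iff, h1, hb.not_gt]

theorem prekopa_leindler_pi (k : ℕ) {a b : ℝ} (ha : 0 < a) (hb : 0 < b) (hab : a + b = 1)
    {f g h : (Fin k → ℝ) → ℝ≥0∞} (hf : Measurable f) (hg : Measurable g) (hh : Measurable h)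
    (H : ∀ x y, f x ^ a * g y ^ b ≤ h (a • x + b • y)) :
    (∫⁻ x, f x) ^ a * (∫⁻ x, g x) ^ b ≤ ∫⁻ x, h x := by
  induction k with
  | zero =>
    rw [Measure.volume_pi_eq_dirac]
    simp only [lintegral_dirac]
    exact (H _ _).trans (le_of_eq (congrArg h (Subsingleton.elim _ _)))
  | succ k ih =>
    have hsplit : ∀ {u : (Fin (k + 1) → ℝ) → ℝ≥0∞}, Measurable u →
        ∫⁻ x, u x = ∫⁻ t : ℝ, ∫⁻ x : Fin k → ℝ, u (Fin.cons t x) := by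
      intro u hu
      have e := (volume_preserving_piFinSuccAbove (fun _ : Fin (k + 1) => ℝ) 0).symm
      rw [← e.lintegral_comp hu, Measure.volume_eq_prod, lintegral_prod]
      · refine lintegral_congr fun t => lintegral_congr fun x => ?_
        simp [MeasurableEquiv.piFinSuccAbove, Fin.insertNthEquiv]
      · exact (hu.comp e.measurable).aemeasurable
    have hcons : Measurable fun z : ℝ × (Fin k → ℝ) => (Fin.cons z.1 z.2 : Fin (k + 1) → ℝ) := by
      refine measurable_pi_iff.2 fun i => ?_
      refine Fin.cases ?_ (fun j => ?_) i
      · simpa using measurable_fst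
      · simp only [Fin.cons_succ]; fun_prop
    have hcons' : ∀ t : ℝ, Measurable fun x : Fin k → ℝ => (Fin.cons t x : Fin (k + 1) → ℝ) :=
      fun t => hcons.comp (measurable_const.prodMk measurable_id)
    rw [hsplit hf, hsplit hg, hsplit hh]
    refine prekopa_leindler_real ha hb hab (hf.comp hcons).lintegral_prod_right'
      (hg.comp hcons).lintegral_prod_right' (hh.comp hcons).lintegral_prod_right' fun s t => ?_
    refine ih (hf.comp (hcons' s)) (hg.comp (hcons' t)) (hh.comp (hcons' _)) fun x y => ?_
    refine (H (Fin.cons s x) (Fin.cons t y)).trans (le_of_eq ?_)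
    congr 1
    ext i
    refine Fin.cases ?_ (fun j => ?_) i <;> simp

theorem AEMeasurable.exists_measurable_ge_ae_eq {α : Type*} [MeasurableSpace α] {μ : Measure α}
    {h : α → ℝ≥0∞} (hh : AEMeasurable h μ) : ∃ h', Measurable h' ∧ h ≤ h' ∧ h' =ᵐ[μ] h := by
  classical
  set N := toMeasurable μ {x | ¬ h x = hh.mk h x}
  have hN : μ N = 0 := by
    rw [measure_toMeasurable]
    exact hh.ae_eq_mk
  refine ⟨N.piecewise (fun _ => ∞) (hh.mk h), ?_, fun x => ?_, ?_⟩
  · exact Measurable.piecewise (measurableSet_toMeasurable _ _) measurable_const hh.measurable_mk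
  · by_cases hx : x ∈ N
    · simp [hx]
    · have : h x = hh.mk h x := by
        by_contra h'
        exact hx (subset_toMeasurable _ _ h')
      simp [hx, this]
  · filter_upwards [hh.ae_eq_mk, measure_eq_zero_iff_ae_notMem.1 hN] with x hx hxN
    simp [hxN, hx]

/-- The Prékopa–Leindler inequality on Euclidean space. -/
theorem prekopa_leindler {k : ℕ} {a b : ℝ} (ha : 0 < a) (hb : 0 < b) (hab : a + b = 1)
    {f g h : EuclideanSpace ℝ (Fin k) → ℝ≥0∞} (hh : AEMeasurable h)
    (H : ∀ x y, f x ^ a * g y ^ b ≤ h (a • x + b • y)) :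
    (∫⁻ x, f x) ^ a * (∫⁻ x, g x) ^ b ≤ ∫⁻ x, h x := by
  obtain ⟨f', hf', hff', hfi⟩ := exists_measurable_le_lintegral_eq volume f
  obtain ⟨g', hg', hgg', hgi⟩ := exists_measurable_le_lintegral_eq volume g
  obtain ⟨h', hh', hhh', hhi⟩ := hh.exists_measurable_ge_ae_eq
  rw [hfi, hgi, ← lintegral_congr_ae hhi]
  have e := PiLp.volume_preserving_toLp (Fin k)
  rw [← e.lintegral_comp hf', ← e.lintegral_comp hg', ← e.lintegral_comp hh']
  refine prekopa_leindler_pi k ha hb hab (hf'.comp e.measurable) (hg'.comp e.measurable)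
    (hh'.comp e.measurable) fun x y => ?_
  refine (mul_le_mul' (ENNReal.rpow_le_rpow (hff' _) ha.le)
    (ENNReal.rpow_le_rpow (hgg' _) hb.le)).trans ((H _ _).trans ?_)
  simpa using hhh' _

theorem Real.sq_le_exp_add_exp_neg_sub_two (t : ℝ) :
    t ^ 2 ≤ Real.exp t + Real.exp (-t) - 2 := by
  wlog h : 0 ≤ t generalizing t
  · have := this (-t) (by linarith)
    rw [neg_neg] at this
    nlinarith
  have h1 : t / 2 ≤ Real.sinh (t / 2) := Real.self_le_sinh_iff.2 (by linarith)
  have h2 : (t / 2) ^ 2 ≤ Real.sinh (t / 2) ^ 2 := pow_le_pow_left₀ (by linarith) h1 2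
  have h3 := Real.cosh_sq (t / 2)
  have h4 := Real.cosh_two_mul (t / 2)
  rw [mul_div_cancel₀ t (two_ne_zero)] at h4
  rw [Real.cosh_eq t] at h4
  linarith

section LogLaplace

variable {E : Type*} [NormedAddCommGroup E] [InnerProductSpace ℝ E] [MeasurableSpace E]
  {μ : Measure E} {u : E → ℝ} {l : ℝ}

/-- All exponential moments of `exp (-u) μ` are finite. -/
def ExpIntegrable (μ : Measure E) (u : E → ℝ) : Prop :=
  ∀ c : ℝ, Integrable (fun x => Real.exp (c * ‖x‖ - u x)) μ

/-- The tilted density `exp (l ⟪x, y⟫ - u x)`. -/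
def tilt (l : ℝ) (u : E → ℝ) (y x : E) : ℝ := Real.exp (l * inner ℝ x y - u x)

/-- The Laplace transform of `exp (-u) μ`. -/
def laplace (l : ℝ) (μ : Measure E) (u : E → ℝ) (y : E) : ℝ := ∫ x, tilt l u y x ∂μ

/-- The log-Laplace transform of `exp (-u) μ`. -/
def logLaplace (l : ℝ) (μ : Measure E) (u : E → ℝ) (y : E) : ℝ := Real.log (laplace l μ u y)

/-- The barycenter of the probability measure proportional to `tilt l u y • μ`. -/
def tiltMean (l : ℝ) (μ : Measure E) (u : E → ℝ) (y : E) : E :=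
  (laplace l μ u y)⁻¹ • ∫ x, tilt l u y x • x ∂μ

theorem tilt_pos (l : ℝ) (u : E → ℝ) (y x : E) : 0 < tilt l u y x := Real.exp_pos _

theorem tilt_add (l : ℝ) (u : E → ℝ) (y h x : E) :
    tilt l u (y + h) x = tilt l u y x * Real.exp (l * inner ℝ x h) := by
  rw [tilt, tilt, ← Real.exp_add, inner_add_right]
  ring_nf

variable [BorelSpace E] [SecondCountableTopology E]

theorem ExpIntegrable.exp_mul_tilt (hu : ExpIntegrable μ u) (l c : ℝ) (y : E) :
    Integrable (fun x => Real.exp (c * ‖x‖) * tilt l u y x) μ := by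
  have h0 := hu 0
  refine (hu (c + |l| * ‖y‖)).mono' ?_ (Filter.Eventually.of_forall fun x => ?_)
  · have : (fun x => Real.exp (c * ‖x‖) * tilt l u y x) = fun x =>
        Real.exp (c * ‖x‖ + l * inner ℝ x y) * Real.exp (0 * ‖x‖ - u x) := by
      ext x
      rw [tilt, ← Real.exp_add, ← Real.exp_add]
      ring_nf
    rw [this]
    exact (Continuous.aestronglyMeasurable (by fun_prop)).mul h0.aestronglyMeasurable
  · rw [Real.norm_of_nonneg (by have := tilt_pos l u y x; positivity), tilt, ← Real.exp_add,
      Real.exp_le_exp]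
    have h1 : l * inner ℝ x y ≤ |l| * (‖x‖ * ‖y‖) := by
      refine (le_abs_self _).trans ?_
      rw [abs_mul]
      exact mul_le_mul_of_nonneg_left (abs_real_inner_le_norm x y) (abs_nonneg l)
    nlinarith

theorem ExpIntegrable.tilt (hu : ExpIntegrable μ u) (l : ℝ) (y : E) :
    Integrable (tilt l u y) μ := by
  simpa using hu.exp_mul_tilt l 0 y

theorem ExpIntegrable.tilt_smul (hu : ExpIntegrable μ u) (l : ℝ) (y : E) :
    Integrable (fun x => _root_.tilt l u y x • x) μ := by
  refine (hu.exp_mul_tilt l 1 y).mono' ?_ (Filter.Eventually.of_forall fun x => ?_)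
  · exact (hu.tilt l y).aestronglyMeasurable.smul continuous_id.aestronglyMeasurable
  · rw [norm_smul, Real.norm_of_nonneg (tilt_pos l u y x).le, mul_comm]
    refine mul_le_mul_of_nonneg_right ?_ (tilt_pos l u y x).le
    have := Real.add_one_le_exp (1 * ‖x‖)
    linarith

theorem ExpIntegrable.tilt_mul_inner (hu : ExpIntegrable μ u) (l : ℝ) (y h : E) :
    Integrable (fun x => _root_.tilt l u y x * inner ℝ x h) μ := by
  simpa [inner_smul_left] using (hu.tilt_smul l y).inner_const (𝕜 := ℝ) h

theorem ExpIntegrable.tilt_mul_norm_sub_sq (hu : ExpIntegrable μ u) (l : ℝ) (y p : E) :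
    Integrable (fun x => _root_.tilt l u y x * ‖x - p‖ ^ 2) μ := by
  refine ((hu.exp_mul_tilt l 1 y).const_mul (2 * Real.exp ‖p‖)).mono' ?_
    (Filter.Eventually.of_forall fun x => ?_)
  · exact (hu.tilt l y).aestronglyMeasurable.mul (Continuous.aestronglyMeasurable (by fun_prop))
  · have h1 := tilt_pos l u y x
    rw [Real.norm_of_nonneg (by positivity)]
    have h2 : ‖x - p‖ ^ 2 ≤ 2 * (Real.exp ‖p‖ * Real.exp (1 * ‖x‖)) := by
      rw [← Real.exp_add]
      have h3 := norm_sub_le x p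
      have h4 := Real.quadratic_le_exp_of_nonneg (norm_nonneg (x - p))
      have h5 : Real.exp ‖x - p‖ ≤ Real.exp (‖p‖ + 1 * ‖x‖) := Real.exp_le_exp.2 (by linarith)
      have := norm_nonneg (x - p)
      linarith
    calc _ ≤ _root_.tilt l u y x * (2 * (Real.exp ‖p‖ * Real.exp (1 * ‖x‖))) :=
          mul_le_mul_of_nonneg_left h2 h1.le
      _ = _ := by ring

theorem laplace_pos (hu : ExpIntegrable μ u) (hμ : μ ≠ 0) (l : ℝ) (y : E) :
    0 < laplace l μ u y := by
  have : NeZero μ := ⟨hμ⟩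
  exact integral_exp_pos (hu.tilt l y)

theorem exp_logLaplace (hu : ExpIntegrable μ u) (hμ : μ ≠ 0) (l : ℝ) (y : E) :
    Real.exp (logLaplace l μ u y) = laplace l μ u y :=
  Real.exp_log (laplace_pos hu hμ l y)

variable [CompleteSpace E]

theorem integral_tilt_mul_inner (hu : ExpIntegrable μ u) (hμ : μ ≠ 0) (l : ℝ) (y h : E) :
    ∫ x, tilt l u y x * inner ℝ x h ∂μ = laplace l μ u y * inner ℝ (tiltMean l μ u y) h := by
  have h1 : ∫ x, tilt l u y x * inner ℝ x h ∂μ = inner ℝ (∫ x, tilt l u y x • x ∂μ) h := by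
    rw [real_inner_comm, ← integral_inner (hu.tilt_smul l y)]
    simp [inner_smul_right, real_inner_comm]
  rw [h1, tiltMean, inner_smul_left]
  have := (laplace_pos hu hμ l y).ne'
  simp [this]

/-- The tilted mean is a subgradient of the log-Laplace transform. -/
theorem logLaplace_add_ge (hu : ExpIntegrable μ u) (hμ : μ ≠ 0) (l : ℝ) (y h : E) :
    logLaplace l μ u y + l * inner ℝ (tiltMean l μ u y) h ≤ logLaplace l μ u (y + h) := by
  set p := tiltMean l μ u y
  have hZ := laplace_pos hu hμ l y
  rw [logLaplace, logLaplace, ← Real.log_exp (l * inner ℝ p h),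
    ← Real.log_mul hZ.ne' (Real.exp_ne_zero _)]
  refine Real.log_le_log (by positivity) ?_
  have h1 : ∫ x, tilt l u y x * (1 + l * (inner ℝ x h - inner ℝ p h)) ∂μ = laplace l μ u y := by
    have : ∀ x, tilt l u y x * (1 + l * (inner ℝ x h - inner ℝ p h)) =
        (1 - l * inner ℝ p h) * tilt l u y x + l * (tilt l u y x * inner ℝ x h) := fun x => by ring
    simp_rw [this]
    rw [integral_add ((hu.tilt l y).const_mul _) ((hu.tilt_mul_inner l y h).const_mul _),
      integral_const_mul, integral_const_mul, integral_tilt_mul_inner hu hμ]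
    change (1 - l * inner ℝ p h) * laplace l μ u y + l * (laplace l μ u y * inner ℝ p h) = _
    ring
  rw [← h1, mul_comm, ← integral_const_mul]
  refine integral_mono (Integrable.const_mul ?_ _) (hu.tilt l (y + h)) fun x => ?_
  · have : ∀ x, tilt l u y x * (1 + l * (inner ℝ x h - inner ℝ p h)) =
        (1 - l * inner ℝ p h) * tilt l u y x + l * (tilt l u y x * inner ℝ x h) := fun x => by ring
    simp_rw [this]
    exact ((hu.tilt l y).const_mul _).add ((hu.tilt_mul_inner l y h).const_mul _)
  · have h2 := Real.add_one_le_exp (l * (inner ℝ x h - inner ℝ p h))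
    have h3 : Real.exp (l * inner ℝ x h) =
        Real.exp (l * inner ℝ p h) * Real.exp (l * (inner ℝ x h - inner ℝ p h)) := by
      rw [← Real.exp_add]
      ring_nf
    have h4 := tilt_pos l u y x
    simp only [tilt_add, h3]
    rw [mul_left_comm]
    gcongr
    linarith

theorem tilt_mul_inner_sub_sq_integral_le (hu : ExpIntegrable μ u) (l : ℝ)
    (y h p : E) : ∫ x, tilt l u y x * (l * inner ℝ (x - p) h) ^ 2 ∂μ ≤
      Real.exp (-(l * inner ℝ p h)) * laplace l μ u (y + h) +
      Real.exp (l * inner ℝ p h) * laplace l μ u (y - h) - 2 * laplace l μ u y := by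
  have i1 := (hu.tilt l (y + h)).const_mul (Real.exp (-(l * inner ℝ p h)))
  have i2 := (hu.tilt l (y - h)).const_mul (Real.exp (l * inner ℝ p h))
  have i3 := (hu.tilt l y).const_mul 2
  rw [laplace, laplace, laplace, ← integral_const_mul, ← integral_const_mul,
    ← integral_const_mul, ← integral_add i1 i2]
  refine le_of_le_of_eq ?_ (integral_sub (i1.add i2) i3)
  refine integral_mono_of_nonneg (Filter.Eventually.of_forall fun x => ?_)
    ((i1.add i2).sub i3) (Filter.Eventually.of_forall fun x => ?_)
  · exact mul_nonneg (tilt_pos l u y x).le (sq_nonneg _)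
  · have h4 := tilt_pos l u y x
    set t := l * inner ℝ (x - p) h with ht
    have e1 : Real.exp (-(l * inner ℝ p h)) * tilt l u (y + h) x = tilt l u y x * Real.exp t := by
      rw [tilt_add, ht, inner_sub_left, mul_left_comm, ← Real.exp_add]
      ring_nf
    have e2 : Real.exp (l * inner ℝ p h) * tilt l u (y - h) x = tilt l u y x * Real.exp (-t) := by
      rw [sub_eq_add_neg, tilt_add, ht, inner_sub_left, inner_neg_right, mul_left_comm,
        ← Real.exp_add]
      ring_nf
    simp only [e1, e2]
    have h5 := Real.sq_le_exp_add_exp_neg_sub_two t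
    nlinarith

end LogLaplace

section SmoothConvex

variable {E : Type*} [NormedAddCommGroup E] [InnerProductSpace ℝ E]

/-- `T` is the gradient of the convex function `φ`, which satisfies `∇²φ ≤ a` in the
weak sense. -/
def IsSmoothConvexGrad (a : ℝ) (φ : E → ℝ) (T : E → E) : Prop :=
  ∀ x h, φ x + inner ℝ (T x) h ≤ φ (x + h) ∧
    φ (x + h) ≤ φ x + inner ℝ (T x) h + a / 2 * ‖h‖ ^ 2

/-- `u - α ‖·‖² / 2` is concave. -/
def Semiconcave (α : ℝ) (u : E → ℝ) : Prop :=
  ∀ x y : E, ∀ t s : ℝ, 0 < t → 0 < s → t + s = 1 →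
    t * u x + s * u y - α / 2 * (t * s) * ‖x - y‖ ^ 2 ≤ u (t • x + s • y)

/-- `v - κ ‖·‖² / 2` is convex. -/
def Semiconvex (κ : ℝ) (v : E → ℝ) : Prop :=
  ∀ x y : E, ∀ t s : ℝ, 0 < t → 0 < s → t + s = 1 →
    v (t • x + s • y) ≤ t * v x + s * v y - κ / 2 * (t * s) * ‖x - y‖ ^ 2

theorem Semiconcave.le_of_subgradient {α : ℝ} {u : E → ℝ} (hu : Semiconcave α u) {x p : E}
    (hp : ∀ h, u x + inner ℝ p h ≤ u (x + h)) (h : E) :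
    u (x + h) ≤ u x + inner ℝ p h + α / 2 * ‖h‖ ^ 2 := by
  have key : ∀ s : ℝ, 0 < s → s < 1 → s * (u (x + h) - u x - inner ℝ p h) ≤ α / 2 * ‖h‖ ^ 2 := by
    intro s hs hs1
    have h1 := hu (x + h) (x + (-((1 - s) / s)) • h) (1 - s) s (by linarith) hs (by ring)
    have h2 := hp ((-((1 - s) / s)) • h)
    have e1 : (1 - s) • (x + h) + s • (x + (-((1 - s) / s)) • h) = x := by
      rw [smul_add, smul_add, smul_smul]
      have : s * -((1 - s) / s) = -(1 - s) := by field_simp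
      rw [this]
      module
    have e2 : x + h - (x + (-((1 - s) / s)) • h) = (1 / s) • h := by
      have : (1 / s) • h = (1 + (1 - s) / s) • h := by
        congr 1
        field_simp
        ring
      rw [this]
      module
    rw [e1, e2, norm_smul, mul_pow, Real.norm_eq_abs, sq_abs] at h1
    rw [inner_smul_right] at h2
    have h3 : s * (u x + -((1 - s) / s) * inner ℝ p h) = s * u x - (1 - s) * inner ℝ p h := by
      field_simp
      ring
    have h4 := mul_le_mul_of_nonneg_left h2 hs.le
    rw [h3] at h4
    have h5 : α / 2 * ((1 - s) * s) * ((1 / s) ^ 2 * ‖h‖ ^ 2) =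
        (1 - s) * (α / 2 * ‖h‖ ^ 2) / s := by
      field_simp
    rw [h5] at h1
    have h6 : (1 - s) * (u (x + h) - u x - inner ℝ p h) ≤ (1 - s) * (α / 2 * ‖h‖ ^ 2) / s := by
      linarith
    rw [le_div_iff₀ hs, mul_assoc] at h6
    have := le_of_mul_le_mul_left h6 (by linarith)
    linarith
  have : Filter.Tendsto (fun s : ℝ => s * (u (x + h) - u x - inner ℝ p h))
      (nhdsWithin 1 (Set.Iio 1)) (nhds (1 * (u (x + h) - u x - inner ℝ p h))) :=
    ((continuous_id.mul continuous_const).tendsto 1).mono_left nhdsWithin_le_nhds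
  have := le_of_tendsto this (b := α / 2 * ‖h‖ ^ 2) (by
    filter_upwards [Ioo_mem_nhdsLT (zero_lt_one' ℝ)] with s hs using key s hs.1 hs.2)
  linarith

end SmoothConvex

section Regularity

/-- The exponential function with values in `[0, ∞]`. -/
def eexp (r : ℝ) : ℝ≥0∞ := ENNReal.ofReal (Real.exp r)

theorem eexp_add (r s : ℝ) : eexp (r + s) = eexp r * eexp s := by
  rw [eexp, Real.exp_add, ENNReal.ofReal_mul (Real.exp_pos _).le, eexp, eexp]

theorem eexp_rpow (r t : ℝ) : eexp r ^ t = eexp (t * r) := by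
  rw [eexp, ENNReal.ofReal_rpow_of_pos (Real.exp_pos _), ← Real.exp_mul, eexp, mul_comm]

theorem eexp_le_eexp {r s : ℝ} : eexp r ≤ eexp s ↔ r ≤ s := by
  rw [eexp, eexp, ENNReal.ofReal_le_ofReal_iff (Real.exp_pos _).le, Real.exp_le_exp]

theorem eexp_ne_top (r : ℝ) : eexp r ≠ ∞ := ENNReal.ofReal_ne_top

@[fun_prop]
theorem measurable_eexp : Measurable eexp := by
  unfold eexp
  fun_prop

variable {k : ℕ}

local notation "𝔼" => EuclideanSpace ℝ (Fin k)

/-- `F · exp (b ‖·‖² / 2)` is log-convex. -/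
def LogSemiconvex (b : ℝ) (F : EuclideanSpace ℝ (Fin k) → ℝ≥0∞) : Prop :=
  ∀ x y, ∀ t s : ℝ, 0 < t → 0 < s → t + s = 1 →
    F (t • x + s • y) ≤ F x ^ t * F y ^ s * eexp (b / 2 * (t * s) * ‖x - y‖ ^ 2)

/-- `G · exp (β ‖·‖² / 2)` is log-concave. -/
def LogSemiconcave (β : ℝ) (G : EuclideanSpace ℝ (Fin k) → ℝ≥0∞) : Prop :=
  ∀ x y, ∀ t s : ℝ, 0 < t → 0 < s → t + s = 1 →
    G x ^ t * G y ^ s * eexp (β / 2 * (t * s) * ‖x - y‖ ^ 2) ≤ G (t • x + s • y)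

theorem eexp_logLaplace {F : 𝔼 → ℝ≥0∞} (hF : AEMeasurable F) {u : 𝔼 → ℝ}
    (hu : ExpIntegrable (volume.withDensity F) u) (hμ : volume.withDensity F ≠ 0) (l : ℝ) (y : 𝔼) :
    eexp (logLaplace l (volume.withDensity F) u y) =
      ∫⁻ x, F x * eexp (l * inner ℝ x y - u x) := by
  rw [eexp, exp_logLaplace hu hμ, laplace, ofReal_integral_eq_lintegral_ofReal (hu.tilt l y)
    (Filter.Eventually.of_forall fun x => (tilt_pos l u y x).le),
    lintegral_withDensity_eq_lintegral_mul₀' hF]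
  · rfl
  · exact (hu.tilt l y).aestronglyMeasurable.aemeasurable.ennreal_ofReal

theorem norm_add_inner_combo {E : Type*} [NormedAddCommGroup E] [InnerProductSpace ℝ E]
    {t s : ℝ} (hts : t + s = 1) (x₁ x₂ y₁ y₂ : E) :
    t * inner ℝ x₁ y₁ + s * inner ℝ x₂ y₂ - t * s * inner ℝ (x₁ - x₂) (y₁ - y₂) =
      inner ℝ (t • x₁ + s • x₂) (t • y₁ + s • y₂) := by
  obtain rfl : s = 1 - t := by linarith
  simp only [inner_add_left, inner_add_right, inner_sub_left, inner_sub_right, inner_smul_left,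
    inner_smul_right, RCLike.conj_to_real]
  ring

theorem semiconvex_logLaplace {F : 𝔼 → ℝ≥0∞} (hF : AEMeasurable F) {b : ℝ}
    (hFb : LogSemiconvex b F) {u : 𝔼 → ℝ} {α : ℝ} (hu : Semiconcave α u)
    (hm : Measurable u)
    (hui : ExpIntegrable (volume.withDensity F) u) (hμ : volume.withDensity F ≠ 0) (l : ℝ)
    (hK : 0 < α + b) :
    Semiconvex (l ^ 2 / (α + b)) (logLaplace l (volume.withDensity F) u) := by
  intro y₁ y₂ t s ht hs hts
  set K := α + b
  set d := (l / K) • (y₁ - y₂) with hd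
  set A : 𝔼 → ℝ≥0∞ := fun x => F x * eexp (l * inner ℝ x y₁ - u x)
  set B : 𝔼 → ℝ≥0∞ := fun x => F x * eexp (l * inner ℝ x y₂ - u x)
  have hA : AEMeasurable A := hF.mul (Measurable.aemeasurable (by fun_prop))
  have hB : AEMeasurable B := hF.mul (Measurable.aemeasurable (by fun_prop))
  have key : ∀ x, F x * eexp (l * inner ℝ x (t • y₁ + s • y₂) - u x) ≤
      eexp (-(l ^ 2 / K / 2 * (t * s) * ‖y₁ - y₂‖ ^ 2)) * (A (x + s • d) ^ t * B (x + (-t) • d) ^ s) := by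
    intro x
    have e1 : t • (x + s • d) + s • (x + (-t) • d) = x := by
      obtain rfl : s = 1 - t := by linarith
      module
    have e2 : x + s • d - (x + (-t) • d) = d := by
      obtain rfl : s = 1 - t := by linarith
      module
    have h1 := hFb (x + s • d) (x + (-t) • d) t s ht hs hts
    have h2 := hu (x + s • d) (x + (-t) • d) t s ht hs hts
    have h3 := norm_add_inner_combo hts (x + s • d) (x + (-t) • d) y₁ y₂
    rw [e1, e2] at h1 h2 h3
    have e3 : ‖d‖ ^ 2 = (l / K) ^ 2 * ‖y₁ - y₂‖ ^ 2 := by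
      rw [hd, norm_smul, mul_pow, Real.norm_eq_abs, sq_abs]
    have e4 : inner ℝ d (y₁ - y₂) = l / K * ‖y₁ - y₂‖ ^ 2 := by
      rw [hd, inner_smul_left, real_inner_self_eq_norm_sq]
      rfl
    rw [e3] at h1 h2
    rw [e4] at h3
    set N := ‖y₁ - y₂‖ ^ 2
    calc _ ≤ F (x + s • d) ^ t * F (x + (-t) • d) ^ s * eexp (b / 2 * (t * s) * ((l / K) ^ 2 * N)) *
          eexp (l * inner ℝ x (t • y₁ + s • y₂) - u x) := by gcongr
      _ = F (x + s • d) ^ t * F (x + (-t) • d) ^ s * eexp (b / 2 * (t * s) * ((l / K) ^ 2 * N) +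
          (l * inner ℝ x (t • y₁ + s • y₂) - u x)) := by rw [mul_assoc, ← eexp_add]
      _ ≤ F (x + s • d) ^ t * F (x + (-t) • d) ^ s * eexp (-(l ^ 2 / K / 2 * (t * s) * N) +
          (t * (l * inner ℝ (x + s • d) y₁ - u (x + s • d)) +
          s * (l * inner ℝ (x + (-t) • d) y₂ - u (x + (-t) • d)))) := by
        gcongr
        rw [eexp_le_eexp]
        rw [← h3]
        have e5 : l * (t * s * (l / K * N)) = t * s * (l ^ 2 / K) * N := by ring
        have e6 : (l / K) ^ 2 * N * K = l ^ 2 / K * N := by field_simp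
        have e7 : α = K - b := by simp [K]
        rw [e7] at h2
        have e8 : (K - b) / 2 * (t * s) * ((l / K) ^ 2 * N) =
          t * s / 2 * ((l / K) ^ 2 * N * K) - b / 2 * (t * s) * ((l / K) ^ 2 * N) := by ring
        rw [e8, e6] at h2
        linarith
      _ = _ := by
        simp only [A, B]
        rw [ENNReal.mul_rpow_of_nonneg _ _ ht.le, ENNReal.mul_rpow_of_nonneg _ _ hs.le,
          eexp_rpow, eexp_rpow, eexp_add, eexp_add]
        ring
  have hintg := lintegral_mono (μ := volume) key
  rw [← eexp_logLaplace hF hui hμ, lintegral_const_mul'' _ (by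
    exact ((hA.comp_quasiMeasurePreserving
      (measurePreserving_add_right volume (s • d)).quasiMeasurePreserving).pow_const t).mul
      ((hB.comp_quasiMeasurePreserving
      (measurePreserving_add_right volume (-t • d)).quasiMeasurePreserving).pow_const s))] at hintg
  have hol := ENNReal.lintegral_mul_norm_pow_le (μ := (volume : Measure 𝔼))
    (f := fun x => A (x + s • d)) (g := fun x => B (x + (-t) • d))
    (hA.comp_quasiMeasurePreserving
      (measurePreserving_add_right volume (s • d)).quasiMeasurePreserving)
    (hB.comp_quasiMeasurePreserving
      (measurePreserving_add_right volume (-t • d)).quasiMeasurePreserving) ht.le hs.le hts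
  rw [lintegral_add_right_eq_self A, lintegral_add_right_eq_self B] at hol
  have hfin := hintg.trans (mul_le_mul_right hol _)
  simp only [A, B] at hfin
  rw [← eexp_logLaplace hF hui hμ, ← eexp_logLaplace hF hui hμ, eexp_rpow, eexp_rpow, ← eexp_add,
    ← eexp_add, eexp_le_eexp] at hfin
  linarith

theorem semiconcave_logLaplace {G : 𝔼 → ℝ≥0∞} (hG : AEMeasurable G) {β : ℝ}
    (hGb : LogSemiconcave β G) {v : 𝔼 → ℝ} {κ : ℝ} (hv : Semiconvex κ v)
    (hm : Measurable v)
    (hvi : ExpIntegrable (volume.withDensity G) v) (hν : volume.withDensity G ≠ 0) (l : ℝ)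
    (hK : 0 < κ + β) :
    Semiconcave (l ^ 2 / (κ + β)) (logLaplace l (volume.withDensity G) v) := by
  intro x₁ x₂ t s ht hs hts
  set K := κ + β
  set c := l ^ 2 / K / 2 * (t * s) * ‖x₁ - x₂‖ ^ 2
  have key := prekopa_leindler ht hs hts
    (f := fun y => G y * eexp (l * inner ℝ y x₁ - v y))
    (g := fun y => G y * eexp (l * inner ℝ y x₂ - v y))
    (h := fun y => eexp c * (G y * eexp (l * inner ℝ y (t • x₁ + s • x₂) - v y)))
    ((hG.mul (Measurable.aemeasurable (by fun_prop))).const_mul _) (by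
      intro y₁ y₂
      have h1 := hGb y₁ y₂ t s ht hs hts
      have h2 := hv y₁ y₂ t s ht hs hts
      have h3 := norm_add_inner_combo hts y₁ y₂ x₁ x₂
      have h4 : l * inner ℝ (y₁ - y₂) (x₁ - x₂) ≤
          K / 2 * ‖y₁ - y₂‖ ^ 2 + l ^ 2 / K / 2 * ‖x₁ - x₂‖ ^ 2 := by
        have := real_inner_le_norm (l • (x₁ - x₂)) (y₁ - y₂)
        rw [inner_smul_left, norm_smul, real_inner_comm] at this
        have h5 : (0 : ℝ) ≤ (K * ‖y₁ - y₂‖ - ‖l‖ * ‖x₁ - x₂‖) ^ 2 := sq_nonneg _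
        have h6 : ‖l‖ ^ 2 = l ^ 2 := by simp
        have h7 : K / 2 * ‖y₁ - y₂‖ ^ 2 + l ^ 2 / K / 2 * ‖x₁ - x₂‖ ^ 2 -
            ‖l‖ * ‖x₁ - x₂‖ * ‖y₁ - y₂‖ = (K * ‖y₁ - y₂‖ - ‖l‖ * ‖x₁ - x₂‖) ^ 2 / (2 * K) := by
          rw [← h6]
          field_simp
          ring
        have h8 : 0 ≤ (K * ‖y₁ - y₂‖ - ‖l‖ * ‖x₁ - x₂‖) ^ 2 / (2 * K) := by positivity
        simp only [RCLike.conj_to_real] at this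
        linarith
      rw [ENNReal.mul_rpow_of_nonneg _ _ ht.le, ENNReal.mul_rpow_of_nonneg _ _ hs.le,
          eexp_rpow, eexp_rpow]
      calc _ = G y₁ ^ t * G y₂ ^ s * eexp (t * (l * inner ℝ y₁ x₁ - v y₁) +
            s * (l * inner ℝ y₂ x₂ - v y₂)) := by
            rw [eexp_add]
            ring
        _ ≤ G y₁ ^ t * G y₂ ^ s * eexp (β / 2 * (t * s) * ‖y₁ - y₂‖ ^ 2 + (c +
            (l * inner ℝ (t • y₁ + s • y₂) (t • x₁ + s • x₂) - v (t • y₁ + s • y₂)))) := by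
            gcongr
            rw [eexp_le_eexp, ← h3]
            have h9 := mul_le_mul_of_nonneg_left h4 (mul_pos ht hs).le
            have e7 : κ = K - β := by simp [K]
            rw [e7] at h2
            simp only [c]
            linarith
        _ = G y₁ ^ t * G y₂ ^ s * eexp (β / 2 * (t * s) * ‖y₁ - y₂‖ ^ 2) * eexp (c +
            (l * inner ℝ (t • y₁ + s • y₂) (t • x₁ + s • x₂) - v (t • y₁ + s • y₂))) := by
            rw [eexp_add, ← mul_assoc]
        _ ≤ G (t • y₁ + s • y₂) * eexp (c +
            (l * inner ℝ (t • y₁ + s • y₂) (t • x₁ + s • x₂) - v (t • y₁ + s • y₂))) := by gcongr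
        _ = _ := by
            rw [eexp_add]
            ring)
  rw [lintegral_const_mul' _ _ (eexp_ne_top _), ← eexp_logLaplace hG hvi hν,
    ← eexp_logLaplace hG hvi hν, ← eexp_logLaplace hG hvi hν, eexp_rpow, eexp_rpow, ← eexp_add,
    ← eexp_add, eexp_le_eexp] at key
  linarith

end Regularity

theorem IsSmoothConvexGrad.cocoercive {E : Type*} [NormedAddCommGroup E] [InnerProductSpace ℝ E]
    {a : ℝ} {φ : E → ℝ} {T : E → E} (h : IsSmoothConvexGrad a φ T) (ha : 0 < a) (x y : E) :
    ‖T x - T y‖ ^ 2 ≤ a * inner ℝ (T x - T y) (x - y) := by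
  have key : ∀ x y, φ x - φ y + inner ℝ (T x) (y - x) ≤ -(‖T x - T y‖ ^ 2 / (2 * a)) := by
    intro x y
    have h1 := (h x (y - x + (1 / a) • (T x - T y))).1
    have h2 := (h y ((1 / a) • (T x - T y))).2
    have e : x + (y - x + (1 / a) • (T x - T y)) = y + (1 / a) • (T x - T y) := by abel
    rw [e, inner_add_right] at h1
    have h3 : inner ℝ (T x) ((1 / a) • (T x - T y)) - inner ℝ (T y) ((1 / a) • (T x - T y)) =
        ‖T x - T y‖ ^ 2 / a := by
      rw [← inner_sub_left, inner_smul_right, real_inner_self_eq_norm_sq]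
      ring
    have h4 : a / 2 * ‖(1 / a) • (T x - T y)‖ ^ 2 = ‖T x - T y‖ ^ 2 / (2 * a) := by
      rw [norm_smul, mul_pow, Real.norm_eq_abs, sq_abs]
      field_simp
    have h5 : ‖T x - T y‖ ^ 2 / a = 2 * (‖T x - T y‖ ^ 2 / (2 * a)) := by field_simp
    linarith
  have h1 := key x y
  have h2 := key y x
  rw [norm_sub_rev (T y)] at h2
  have h3 : inner ℝ (T x) (y - x) + inner ℝ (T y) (x - y) = - inner ℝ (T x - T y) (x - y) := by
    rw [inner_sub_left, ← neg_sub x y, inner_neg_right]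
    ring
  have h4 : a * (‖T x - T y‖ ^ 2 / (2 * a) * 2) = ‖T x - T y‖ ^ 2 := by field_simp
  have h5 : ‖T x - T y‖ ^ 2 / (2 * a) * 2 ≤ inner ℝ (T x - T y) (x - y) := by linarith
  have := mul_le_mul_of_nonneg_left h5 ha.le
  linarith

theorem IsSmoothConvexGrad.norm_sub_le {E : Type*} [NormedAddCommGroup E] [InnerProductSpace ℝ E]
    {a : ℝ} {φ : E → ℝ} {T : E → E} (h : IsSmoothConvexGrad a φ T) (ha : 0 < a) (x y : E) :
    ‖T x - T y‖ ≤ a * ‖x - y‖ := by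
  have h1 := h.cocoercive ha x y
  have h2 := real_inner_le_norm (T x - T y) (x - y)
  rcases (norm_nonneg (T x - T y)).eq_or_lt with h0 | h0
  · rw [← h0]
    positivity
  · have : ‖T x - T y‖ * ‖T x - T y‖ ≤ ‖T x - T y‖ * (a * ‖x - y‖) := by nlinarith
    exact le_of_mul_le_mul_left this h0

theorem IsSmoothConvexGrad.continuous {E : Type*} [NormedAddCommGroup E] [InnerProductSpace ℝ E]
    {a : ℝ} {φ : E → ℝ} {T : E → E} (h : IsSmoothConvexGrad a φ T) (ha : 0 < a) :
    Continuous T := by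
  have : LipschitzWith a.toNNReal T := LipschitzWith.of_dist_le_mul fun x y => by
    rw [dist_eq_norm, dist_eq_norm, Real.coe_toNNReal _ ha.le]
    exact h.norm_sub_le ha x y
  exact this.continuous

section Entropic

variable {E : Type*} [NormedAddCommGroup E] [InnerProductSpace ℝ E] [MeasurableSpace E]
  [BorelSpace E] [SecondCountableTopology E] {μ ν : Measure E} {u v : E → ℝ} {l R : ℝ}

theorem expIntegrable_of_lipschitz {L : ℝ} (hμ : ExpIntegrable μ 0) (hu : Measurable u)
    (hL : ∀ x y, u x ≤ u y + L * ‖x - y‖) : ExpIntegrable μ u := by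
  intro c
  refine ((hμ (c + L)).const_mul (Real.exp (-u 0))).mono'
    (Measurable.aestronglyMeasurable (by fun_prop)) (Filter.Eventually.of_forall fun x => ?_)
  rw [Real.norm_of_nonneg (Real.exp_pos _).le, ← Real.exp_add, Real.exp_le_exp]
  have := hL 0 x
  simp only [zero_sub, norm_neg] at this
  simp only [Pi.zero_apply]
  linarith

theorem integrable_of_lipschitz [IsFiniteMeasure μ] {L : ℝ} (hμ : ExpIntegrable μ 0)
    (hu : Measurable u) (hL : ∀ x y, u x ≤ u y + L * ‖x - y‖) : Integrable u μ := by
  refine ((integrable_const |u 0|).add ((hμ 1).const_mul |L|)).mono' hu.aestronglyMeasurable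
    (Filter.Eventually.of_forall fun x => ?_)
  have h1 := hL 0 x
  have h2 := hL x 0
  have h3 := Real.add_one_le_exp ‖x‖
  have h4 := le_abs_self L
  have h5 := abs_nonneg L
  have h6 := norm_nonneg x
  simp only [zero_sub, norm_neg, sub_zero] at h1 h2
  simp only [Pi.add_apply, Pi.zero_apply, sub_zero, one_mul]
  rw [Real.norm_eq_abs, abs_le]
  have h7 : L * ‖x‖ ≤ |L| * Real.exp ‖x‖ := by nlinarith
  have h8 := le_abs_self (u 0)
  have h9 := neg_abs_le (u 0)
  constructor <;> linarith

theorem expIntegrable_of_bounded [IsFiniteMeasure ν] {M : ℝ} (hν : ∀ᵐ y ∂ν, ‖y‖ ≤ R)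
    (hv : Measurable v) (hM : ∀ y, ‖y‖ ≤ R → |v y| ≤ M) : ExpIntegrable ν v := by
  intro c
  refine (integrable_const (Real.exp (|c| * R + M))).mono'
    (Measurable.aestronglyMeasurable (by fun_prop)) ?_
  filter_upwards [hν] with y hy
  rw [Real.norm_of_nonneg (Real.exp_pos _).le, Real.exp_le_exp]
  have h1 := neg_abs_le (v y)
  have h2 := hM y hy
  have h3 : c * ‖y‖ ≤ |c| * R := (mul_le_mul_of_nonneg_right (le_abs_self c) (norm_nonneg _)).trans
    (mul_le_mul_of_nonneg_left hy (abs_nonneg _))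
  linarith

theorem integrable_of_bounded [IsFiniteMeasure ν] {M : ℝ} (hν : ∀ᵐ y ∂ν, ‖y‖ ≤ R)
    (hv : Measurable v) (hM : ∀ y, ‖y‖ ≤ R → |v y| ≤ M) : Integrable v ν := by
  refine (integrable_const M).mono' hv.aestronglyMeasurable ?_
  filter_upwards [hν] with y hy using hM y hy

theorem measurable_logLaplace [SFinite μ] (hu : Measurable u) (l : ℝ) :
    Measurable (logLaplace l μ u) := by
  refine Real.measurable_log.comp ?_
  have : StronglyMeasurable (fun p : E × E => tilt l u p.1 p.2) := by
    unfold tilt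
    exact Measurable.stronglyMeasurable (by fun_prop)
  exact this.integral_prod_right.measurable

theorem inner_mul_abs_le {l R : ℝ} (x : E) {y : E} (hy : ‖y‖ ≤ R) :
    |l * inner ℝ x y| ≤ |l| * R * ‖x‖ := by
  rw [abs_mul, mul_assoc]
  refine mul_le_mul_of_nonneg_left ((abs_real_inner_le_norm x y).trans ?_) (abs_nonneg l)
  rw [mul_comm]
  exact mul_le_mul_of_nonneg_right hy (norm_nonneg x)

theorem exists_abs_logLaplace_le (hμ : μ ≠ 0) (hu : ExpIntegrable μ u) (l R : ℝ) :
    ∃ M, ∀ y, ‖y‖ ≤ R → |logLaplace l μ u y| ≤ M := by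
  have : NeZero μ := ⟨hμ⟩
  have h1 := hu (|l| * R)
  have h2 := hu (-(|l| * R))
  set A := ∫ x, Real.exp (|l| * R * ‖x‖ - u x) ∂μ
  set B := ∫ x, Real.exp (-(|l| * R) * ‖x‖ - u x) ∂μ
  have hB : 0 < B := integral_exp_pos h2
  refine ⟨max |Real.log A| |Real.log B|, fun y hy => ?_⟩
  have k1 : laplace l μ u y ≤ A := by
    refine integral_mono (hu.tilt l y) h1 fun x => ?_
    have := (abs_le.1 (inner_mul_abs_le (l := l) x hy)).2
    exact Real.exp_le_exp.2 (by linarith)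
  have k2 : B ≤ laplace l μ u y := by
    refine integral_mono h2 (hu.tilt l y) fun x => ?_
    have := (abs_le.1 (inner_mul_abs_le (l := l) x hy)).1
    exact Real.exp_le_exp.2 (by linarith)
  exact abs_le_max_abs_abs (Real.log_le_log hB k2) (Real.log_le_log (hB.trans_le k2) k1) |>.trans
    (max_comm _ _).le

theorem logLaplace_lipschitz (hν : ∀ᵐ y ∂ν, ‖y‖ ≤ R) (hν0 : ν ≠ 0) (hv : ExpIntegrable ν v)
    (l : ℝ) (x x' : E) : logLaplace l ν v x ≤ logLaplace l ν v x' + |l| * R * ‖x - x'‖ := by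
  rw [← Real.exp_le_exp, Real.exp_add, exp_logLaplace hv hν0, exp_logLaplace hv hν0, laplace,
    laplace, ← integral_mul_const]
  refine integral_mono_ae (hv.tilt l x) ((hv.tilt l x').mul_const _) ?_
  filter_upwards [hν] with y hy
  have : x = x' + (x - x') := by abel
  conv_lhs => rw [this, tilt_add]
  have := (abs_le.1 (inner_mul_abs_le (l := l) (x - x') hy)).2
  rw [real_inner_comm] at this
  have h1 := tilt_pos l v x' y
  gcongr

theorem integrable_prod_kernel [IsFiniteMeasure ν] [SFinite μ] (hν : ∀ᵐ y ∂ν, ‖y‖ ≤ R)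
    (hu : ExpIntegrable μ u) (hum : Measurable u) (hv : ExpIntegrable ν v) (hvm : Measurable v)
    {w : E → ℝ} (hw : Measurable w) (hw1 : ∀ y, |w y| ≤ 1) (l : ℝ) :
    Integrable (fun p : E × E => Real.exp (l * inner ℝ p.1 p.2 - u p.1 - v p.2) * w p.2)
      (μ.prod ν) := by
  refine ((hu (|l| * R)).mul_prod (hv 0)).mono' (Measurable.aestronglyMeasurable (by fun_prop)) ?_
  filter_upwards [Measure.quasiMeasurePreserving_snd.ae hν] with p hp
  rw [norm_mul, Real.norm_of_nonneg (Real.exp_pos _).le, ← Real.exp_add]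
  refine (mul_le_of_le_one_right (Real.exp_pos _).le (hw1 _)).trans (Real.exp_le_exp.2 ?_)
  have := (abs_le.1 (inner_mul_abs_le (l := l) p.1 hp)).2
  linarith

theorem exp_kernel_left (u v : E → ℝ) (l : ℝ) (x y : E) :
    Real.exp (l * inner ℝ x y - u x - v y) = Real.exp (-v y) * tilt l u y x := by
  rw [tilt, ← Real.exp_add]
  ring_nf

theorem exp_kernel_right (u v : E → ℝ) (l : ℝ) (x y : E) :
    Real.exp (l * inner ℝ x y - u x - v y) = Real.exp (-u x) * tilt l v x y := by
  rw [tilt, ← Real.exp_add, real_inner_comm]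
  ring_nf

theorem integral_swap_kernel [IsFiniteMeasure ν] [SFinite μ] (hν : ∀ᵐ y ∂ν, ‖y‖ ≤ R)
    (hu : ExpIntegrable μ u) (hum : Measurable u) (hv : ExpIntegrable ν v) (hvm : Measurable v)
    {w : E → ℝ} (hw : Measurable w) (hw1 : ∀ y, |w y| ≤ 1) (l : ℝ) :
    ∫ x, Real.exp (-u x) * ∫ y, tilt l v x y * w y ∂ν ∂μ =
      ∫ y, Real.exp (-v y) * laplace l μ u y * w y ∂ν := by
  have h := integral_integral_swap
    (f := fun x y => Real.exp (l * inner ℝ x y - u x - v y) * w y)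
    (integrable_prod_kernel hν hu hum hv hvm hw hw1 l)
  calc _ = ∫ x, ∫ y, Real.exp (l * inner ℝ x y - u x - v y) * w y ∂ν ∂μ := by
        simp_rw [← integral_const_mul, exp_kernel_right, mul_assoc]
    _ = ∫ y, ∫ x, Real.exp (l * inner ℝ x y - u x - v y) * w y ∂μ ∂ν := h
    _ = _ := by
        simp_rw [exp_kernel_left, integral_mul_const, integral_const_mul, laplace]

theorem Real.abs_exp_sub_one_le_bregman (t : ℝ) {ε : ℝ} (hε : 0 < ε) :
    |Real.exp t - 1| ≤ (Real.exp t - 1 - t) / (2 * ε) + ε * (Real.exp t + 1) := by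
  set q := Real.exp (t / 2)
  have hq : 0 < q := Real.exp_pos _
  have h1 : Real.exp t = q ^ 2 := by
    rw [← Real.exp_nat_mul]
    push_cast
    ring_nf
  have h2 : (q - 1) ^ 2 ≤ Real.exp t - 1 - t := by
    have := Real.add_one_le_exp (t / 2)
    have : t / 2 + 1 ≤ q := this
    rw [h1]
    nlinarith
  have h3 : |Real.exp t - 1| = |q - 1| * (q + 1) := by
    rw [h1, show q ^ 2 - 1 = (q - 1) * (q + 1) by ring, abs_mul, abs_of_pos (by linarith : 0 < q + 1)]
  have h4 : |q - 1| * (q + 1) ≤ (q - 1) ^ 2 / (2 * ε) + ε * (q + 1) ^ 2 / 2 := by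
    rw [← sub_nonneg]
    have : (q - 1) ^ 2 / (2 * ε) + ε * (q + 1) ^ 2 / 2 - |q - 1| * (q + 1) =
        (|q - 1| - ε * (q + 1)) ^ 2 / (2 * ε) := by
      rw [← sq_abs (q - 1)]
      field_simp
      ring
    rw [this]
    positivity
  have h5 : (q - 1) ^ 2 / (2 * ε) ≤ (Real.exp t - 1 - t) / (2 * ε) := by gcongr
  have h6 : ε * (q + 1) ^ 2 / 2 ≤ ε * (Real.exp t + 1) := by
    rw [h1]
    nlinarith [mul_nonneg hε.le (sq_nonneg (q - 1))]
  linarith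

end Entropic

section Sinkhorn

variable {E : Type*} [NormedAddCommGroup E] [InnerProductSpace ℝ E] [MeasurableSpace E]
  [BorelSpace E] [SecondCountableTopology E] {μ ν : Measure E} {u v : E → ℝ} {l R : ℝ}

theorem logLaplace_ge_neg_integral [IsProbabilityMeasure μ] (hμ : ExpIntegrable μ 0)
    (hu : ExpIntegrable μ u) (hui : Integrable u μ) {y : E} (hy : ‖y‖ ≤ R) (l : ℝ) :
    -(|l| * R * ∫ x, ‖x‖ ∂μ) - ∫ x, u x ∂μ ≤ logLaplace l μ u y := by
  set c := -(|l| * R * ∫ x, ‖x‖ ∂μ) - ∫ x, u x ∂μ with hc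
  have hn : Integrable (fun x : E => ‖x‖) μ := by
    refine (hμ 1).mono' continuous_norm.aestronglyMeasurable (Filter.Eventually.of_forall fun x => ?_)
    have := Real.add_one_le_exp ‖x‖
    simp only [norm_norm, one_mul, Pi.zero_apply, sub_zero]
    linarith
  rw [← Real.exp_le_exp, exp_logLaplace hu (NeZero.ne μ)]
  have i1 : Integrable (fun x => -(|l| * R) * ‖x‖ - u x + (1 - c)) μ :=
    ((hn.const_mul _).sub hui).add (integrable_const _)
  have i2 : ∫ x, (-(|l| * R) * ‖x‖ - u x + (1 - c)) ∂μ = 1 := by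
    have i0 : Integrable (fun x => -(|l| * R) * ‖x‖ - u x) μ := (hn.const_mul _).sub hui
    rw [integral_add i0 (integrable_const _),
      integral_sub (hn.const_mul _) hui, integral_const_mul]
    simp [hc]
  calc Real.exp c = ∫ x, Real.exp c * (-(|l| * R) * ‖x‖ - u x + (1 - c)) ∂μ := by
        rw [integral_const_mul, i2, mul_one]
    _ ≤ _ := by
      refine integral_mono (i1.const_mul _) (hu.tilt l y) fun x => ?_
      have h1 := (abs_le.1 (inner_mul_abs_le (l := l) x hy)).1
      have h2 := Real.add_one_le_exp (l * inner ℝ x y - u x - c)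
      have h3 : tilt l u y x = Real.exp c * Real.exp (l * inner ℝ x y - u x - c) := by
        rw [← Real.exp_add, tilt]
        ring_nf
      simp only [h3]
      have := Real.exp_pos c
      gcongr
      linarith

theorem exists_integral_abs_exp_sub_one_le [IsProbabilityMeasure μ] [IsProbabilityMeasure ν]
    (hμ : ExpIntegrable μ 0) (hν : ∀ᵐ y ∂ν, ‖y‖ ≤ R) {𝒞 : Set (E → ℝ)} (hne : 𝒞.Nonempty)
    {L : ℝ} (hm : ∀ u ∈ 𝒞, Measurable u) (hL : ∀ u ∈ 𝒞, ∀ x y, u x ≤ u y + L * ‖x - y‖)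
    (hcl : ∀ u ∈ 𝒞, logLaplace l ν (logLaplace l μ u) ∈ 𝒞) {δ : ℝ} (hδ : 0 < δ) :
    ∃ u ∈ 𝒞,
      Integrable (fun x => Real.exp (logLaplace l ν (logLaplace l μ u) x - u x)) μ ∧
      ∫ x, |Real.exp (logLaplace l ν (logLaplace l μ u) x - u x) - 1| ∂μ ≤ δ := by
  set J : (E → ℝ) → ℝ := fun u => ∫ x, u x ∂μ + ∫ y, logLaplace l μ u y ∂ν with hJ
  have hexp : ∀ u ∈ 𝒞, ExpIntegrable μ u := fun u hu => expIntegrable_of_lipschitz hμ (hm u hu) (hL u hu)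
  have hintg : ∀ u ∈ 𝒞, Integrable u μ := fun u hu => integrable_of_lipschitz hμ (hm u hu) (hL u hu)
  have hvm : ∀ u ∈ 𝒞, Measurable (logLaplace l μ u) := fun u hu => measurable_logLaplace (hm u hu) l
  have hvint : ∀ u ∈ 𝒞, Integrable (logLaplace l μ u) ν := fun u hu => by
    obtain ⟨M, hM⟩ := exists_abs_logLaplace_le (NeZero.ne μ) (hexp u hu) l R
    exact integrable_of_bounded hν (hvm u hu) hM
  have hvexp : ∀ u ∈ 𝒞, ExpIntegrable ν (logLaplace l μ u) := fun u hu => by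
    obtain ⟨M, hM⟩ := exists_abs_logLaplace_le (NeZero.ne μ) (hexp u hu) l R
    exact expIntegrable_of_bounded hν (hvm u hu) hM
  have hbdd : BddBelow (J '' 𝒞) := by
    refine ⟨-(|l| * R * ∫ x, ‖x‖ ∂μ), ?_⟩
    rintro _ ⟨u, hu, rfl⟩
    have : ∫ _, (-(|l| * R * ∫ x, ‖x‖ ∂μ) - ∫ x, u x ∂μ) ∂ν ≤ ∫ y, logLaplace l μ u y ∂ν := by
      refine integral_mono_ae (integrable_const _) (hvint u hu) ?_
      filter_upwards [hν] with y hy using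
        logLaplace_ge_neg_integral hμ (hexp u hu) (hintg u hu) hy l
    simp only [integral_const, probReal_univ, one_smul] at this
    simp only [hJ]
    linarith
  set ε := δ / 4 with hε
  have hε0 : 0 < ε := by positivity
  obtain ⟨_, ⟨u, hu, rfl⟩, hlt⟩ := exists_lt_of_csInf_lt (hne.image J)
    (show sInf (J '' 𝒞) < sInf (J '' 𝒞) + ε * δ by linarith [mul_pos hε0 hδ])
  set v := logLaplace l μ u with hv
  set u' := logLaplace l ν v with hu'
  have hu'C : u' ∈ 𝒞 := hcl u hu
  have hge : sInf (J '' 𝒞) ≤ J u' := csInf_le hbdd ⟨u', hu'C, rfl⟩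
  set v' := logLaplace l μ u' with hv'
  have one_bd : ∀ y : E, |(fun _ : E => (1 : ℝ)) y| ≤ 1 := fun y => by simp
  have hstep : ∫ y, v' y ∂ν ≤ ∫ y, v y ∂ν := by
    have h1 := integral_swap_kernel hν (hexp u' hu'C) (hm u' hu'C) (hvexp u hu) (hvm u hu)
      measurable_const one_bd l
    have i1 := (integrable_prod_kernel hν (hexp u' hu'C) (hm u' hu'C) (hvexp u hu) (hvm u hu)
      measurable_const one_bd l).integral_prod_right
    simp only [mul_one] at h1 i1
    have e1 : ∀ x, Real.exp (-u' x) * ∫ y, tilt l v x y ∂ν = 1 := fun x => by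
      change Real.exp (-u' x) * laplace l ν v x = 1
      rw [← exp_logLaplace (hvexp u hu) (NeZero.ne ν), ← Real.exp_add, ← hu']
      simp
    have e2 : ∀ y, Real.exp (-v y) * laplace l μ u' y = Real.exp (v' y - v y) := fun y => by
      rw [← exp_logLaplace (hexp u' hu'C) (NeZero.ne μ), ← Real.exp_add, ← hv']
      ring_nf
    change ∫ x, Real.exp (-u' x) * ∫ y, tilt l v x y ∂ν ∂μ =
      ∫ y, Real.exp (-v y) * laplace l μ u' y ∂ν at h1
    simp_rw [e1, e2] at h1
    have e3 : ∀ y, ∫ x, Real.exp (l * inner ℝ x y - u' x - v y) ∂μ = Real.exp (v' y - v y) := by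
      intro y
      rw [← e2]
      simp_rw [exp_kernel_left, integral_const_mul, laplace]
    change Integrable (fun y => ∫ x, Real.exp (l * inner ℝ x y - u' x - v y) ∂μ) ν at i1
    simp_rw [e3] at i1
    have h2 : ∫ y, (v' y - v y) ∂ν ≤ ∫ y, (Real.exp (v' y - v y) - 1) ∂ν := by
      refine integral_mono ((hvint u' hu'C).sub (hvint u hu)) (i1.sub (integrable_const _)) fun y => ?_
      have := Real.add_one_le_exp (v' y - v y)
      simp only
      linarith
    rw [integral_sub i1 (integrable_const _), ← h1, integral_sub (hvint u' hu'C) (hvint u hu)] at h2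
    simp only [integral_const, probReal_univ, one_smul, sub_self] at h2
    linarith
  have e2 : ∀ x, Real.exp (-u x) * laplace l ν v x = Real.exp (u' x - u x) := fun x => by
    rw [← exp_logLaplace (hvexp u hu) (NeZero.ne ν), ← Real.exp_add, ← hu']
    ring_nf
  have i2 : Integrable (fun x => Real.exp (u' x - u x)) μ := by
    have i1 := (integrable_prod_kernel hν (hexp u hu) (hm u hu) (hvexp u hu) (hvm u hu)
      measurable_const one_bd l).integral_prod_left
    simp only [mul_one] at i1
    refine i1.congr (Filter.Eventually.of_forall fun x => ?_)
    simp only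
    rw [← e2]
    simp_rw [← hv, exp_kernel_right, integral_const_mul, laplace]
  have hone : ∫ x, Real.exp (u' x - u x) ∂μ = 1 := by
    have h1 := integral_swap_kernel hν (hexp u hu) (hm u hu) (hvexp u hu) (hvm u hu)
      measurable_const one_bd l
    simp only [mul_one] at h1
    change ∫ x, Real.exp (-u x) * laplace l ν v x ∂μ =
      ∫ y, Real.exp (-v y) * laplace l μ u y ∂ν at h1
    have e1 : ∀ y, Real.exp (-v y) * laplace l μ u y = 1 := fun y => by
      rw [← exp_logLaplace (hexp u hu) (NeZero.ne μ), ← Real.exp_add, ← hv]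
      simp
    simp_rw [e1, e2] at h1
    rw [h1]
    simp
  refine ⟨u, hu, i2, ?_⟩
  have i3 : Integrable (fun x => u' x - u x) μ := (hintg u' hu'C).sub (hintg u hu)
  have i4 : Integrable (fun x => Real.exp (u' x - u x) - 1 - (u' x - u x)) μ :=
    (i2.sub (integrable_const _)).sub i3
  have i5 : Integrable (fun x => Real.exp (u' x - u x) - 1) μ := i2.sub (integrable_const _)
  have i6 : Integrable (fun x => Real.exp (u' x - u x) + 1) μ := i2.add (integrable_const _)
  have hdec : ∫ x, (Real.exp (u' x - u x) - 1 - (u' x - u x)) ∂μ ≤ ε * δ := by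
    rw [integral_sub i5 i3, integral_sub i2 (integrable_const _), hone,
      integral_sub (hintg u' hu'C) (hintg u hu)]
    simp only [integral_const, probReal_univ, one_smul, sub_self, zero_sub]
    simp only [hJ] at hge hlt
    linarith
  calc _ ≤ ∫ x, ((Real.exp (u' x - u x) - 1 - (u' x - u x)) / (2 * ε) +
        ε * (Real.exp (u' x - u x) + 1)) ∂μ :=
        integral_mono_of_nonneg (Filter.Eventually.of_forall fun x => abs_nonneg _)
          ((i4.div_const _).add (i6.const_mul _))
          (Filter.Eventually.of_forall fun x => Real.abs_exp_sub_one_le_bregman _ hε0)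
    _ = (∫ x, (Real.exp (u' x - u x) - 1 - (u' x - u x)) ∂μ) / (2 * ε) + ε * (1 + 1) := by
        rw [integral_add (i4.div_const _) (i6.const_mul _),
          integral_div, integral_const_mul, integral_add i2 (integrable_const _), hone]
        simp
    _ ≤ ε * δ / (2 * ε) + ε * (1 + 1) := by gcongr
    _ = δ := by
        rw [hε]
        field_simp
        ring

end Sinkhorn

section ApproxTransport

variable {k : ℕ}

local notation "𝔼" => EuclideanSpace ℝ (Fin k)

theorem integral_tilt_mul_norm_sub_sq_le {ν : Measure 𝔼} {v : 𝔼 → ℝ} {l a : ℝ} (hl : 0 < l)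
    (hν : ν ≠ 0) (hv : ExpIntegrable ν v)
    (hT : IsSmoothConvexGrad a (fun x => logLaplace l ν v x / l) (tiltMean l ν v)) (x : 𝔼) :
    ∫ y, tilt l v x y * ‖y - tiltMean l ν v x‖ ^ 2 ∂ν ≤
      laplace l ν v x * (k * (2 * (Real.exp (a / 2) - 1)) / l) := by
  set p := tiltMean l ν v x with hp
  set Z := laplace l ν v x with hZ
  have hZ0 : 0 < Z := laplace_pos hv hν l x
  have hup : ∀ h : 𝔼, ‖h‖ ^ 2 = 1 / l →
      laplace l ν v (x + h) ≤ Z * Real.exp (l * inner ℝ p h) * Real.exp (a / 2) := by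
    intro h hh
    have h1 := (hT x h).2
    simp only [← hp, hh] at h1
    rw [hZ, ← exp_logLaplace hv hν, ← exp_logLaplace hv hν, ← Real.exp_add, ← Real.exp_add,
      Real.exp_le_exp]
    have h2 := mul_le_mul_of_nonneg_left h1 hl.le
    have e1 : l * (logLaplace l ν v (x + h) / l) = logLaplace l ν v (x + h) := by field_simp
    have e2 : l * (logLaplace l ν v x / l + inner ℝ p h + a / 2 * (1 / l)) =
      logLaplace l ν v x + l * inner ℝ p h + a / 2 := by field_simp
    rwa [e1, e2] at h2
  have hcoord : ∀ i : Fin k, ∫ y, tilt l v x y * ((y - p) i) ^ 2 ∂ν ≤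
      Z * (2 * (Real.exp (a / 2) - 1)) / l := by
    intro i
    set h : 𝔼 := (1 / √l) • EuclideanSpace.single i (1 : ℝ) with hh
    have hsq : √l ^ 2 = l := Real.sq_sqrt hl.le
    have hn : ‖h‖ ^ 2 = 1 / l := by
      rw [hh, norm_smul, mul_pow, Real.norm_eq_abs, sq_abs, div_pow, hsq]
      simp
    have h1 := tilt_mul_inner_sub_sq_integral_le hv l x h p
    have h2 := hup h hn
    have h3 := hup (-h) (by rwa [norm_neg])
    rw [inner_neg_right, mul_neg] at h3
    rw [← sub_eq_add_neg] at h3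
    have e1 : ∀ y : 𝔼, tilt l v x y * (l * inner ℝ (y - p) h) ^ 2 =
        l * (tilt l v x y * ((y - p) i) ^ 2) := by
      intro y
      have : inner ℝ (y - p) h = (1 / √l) * (y - p) i := by
        rw [hh, inner_smul_right, EuclideanSpace.inner_single_right]
        simp
      rw [this, mul_pow, mul_pow, div_pow, hsq]
      field_simp
    simp_rw [e1] at h1
    rw [integral_const_mul] at h1
    rw [le_div_iff₀ hl, mul_comm]
    refine h1.trans ?_
    have h4 := mul_le_mul_of_nonneg_left h2 (Real.exp_pos (-(l * inner ℝ p h))).le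
    have h5 := mul_le_mul_of_nonneg_left h3 (Real.exp_pos (l * inner ℝ p h)).le
    have e2 : Real.exp (-(l * inner ℝ p h)) * (Z * Real.exp (l * inner ℝ p h) * Real.exp (a / 2)) =
        Z * Real.exp (a / 2) := by
      rw [Real.exp_neg]
      field_simp
    have e3 : Real.exp (l * inner ℝ p h) * (Z * Real.exp (-(l * inner ℝ p h)) * Real.exp (a / 2)) =
        Z * Real.exp (a / 2) := by
      rw [Real.exp_neg]
      field_simp
    rw [e2] at h4
    rw [e3] at h5
    linarith
  have hsum : ∀ y : 𝔼, tilt l v x y * ‖y - p‖ ^ 2 = ∑ i, tilt l v x y * ((y - p) i) ^ 2 := by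
    intro y
    rw [EuclideanSpace.real_norm_sq_eq, Finset.mul_sum]
  simp_rw [hsum]
  rw [integral_finsetSum]
  · calc _ ≤ ∑ _i : Fin k, Z * (2 * (Real.exp (a / 2) - 1)) / l := Finset.sum_le_sum fun i _ => hcoord i
      _ = _ := by
        simp
        ring
  · intro i _
    refine (hv.tilt_mul_norm_sub_sq l x p).mono' ?_ (Filter.Eventually.of_forall fun y => ?_)
    · exact (hv.tilt l x).aestronglyMeasurable.mul
        (Continuous.aestronglyMeasurable (by fun_prop))
    · have := tilt_pos l v x y
      rw [Real.norm_of_nonneg (by positivity)]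
      refine mul_le_mul_of_nonneg_left ?_ this.le
      rw [EuclideanSpace.real_norm_sq_eq]
      exact Finset.single_le_sum (f := fun i => (y - p) i ^ 2) (fun i _ => sq_nonneg _)
        (Finset.mem_univ i)

theorem abs_integral_tilt_mul_sub_le {ν : Measure 𝔼} {v : 𝔼 → ℝ} {l c : ℝ}
    (hν : ν ≠ 0) (hv : ExpIntegrable ν v) {x p : 𝔼} (hc : 0 < c)
    (h : ∫ y, tilt l v x y * ‖y - p‖ ^ 2 ∂ν ≤ laplace l ν v x * c ^ 2)
    {w : 𝔼 → ℝ} (hw : LipschitzWith 1 w) (hw1 : ∀ y, |w y| ≤ 1) :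
    |(laplace l ν v x)⁻¹ * (∫ y, tilt l v x y * w y ∂ν) - w p| ≤ c := by
  set Z := laplace l ν v x with hZ
  have hZ0 : 0 < Z := laplace_pos hv hν l x
  have i1 : Integrable (fun y => tilt l v x y * w y) ν :=
    (hv.tilt l x).mul_bdd hw.continuous.aestronglyMeasurable
      (Filter.Eventually.of_forall hw1)
  have i2 : Integrable (fun y => tilt l v x y * (‖y - p‖ ^ 2 / (2 * c) + c / 2)) ν := by
    have := ((hv.tilt_mul_norm_sub_sq l x p).div_const (2 * c)).add ((hv.tilt l x).mul_const (c / 2))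
    refine this.congr (Filter.Eventually.of_forall fun y => ?_)
    simp only [Pi.add_apply]
    ring
  have e1 : Z⁻¹ * (∫ y, tilt l v x y * w y ∂ν) - w p =
      Z⁻¹ * ∫ y, tilt l v x y * (w y - w p) ∂ν := by
    have : ∀ y, tilt l v x y * (w y - w p) = tilt l v x y * w y - tilt l v x y * w p :=
      fun y => by ring
    simp_rw [this]
    rw [integral_sub i1 ((hv.tilt l x).mul_const _), integral_mul_const]
    change _ = Z⁻¹ * (_ - Z * w p)
    field_simp
  rw [e1, abs_mul, abs_of_pos (inv_pos.2 hZ0), inv_mul_le_iff₀ hZ0]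
  calc _ ≤ ∫ y, |tilt l v x y * (w y - w p)| ∂ν := abs_integral_le_integral_abs
    _ ≤ ∫ y, tilt l v x y * (‖y - p‖ ^ 2 / (2 * c) + c / 2) ∂ν := by
        refine integral_mono_of_nonneg (Filter.Eventually.of_forall fun y => abs_nonneg _) i2
          (Filter.Eventually.of_forall fun y => ?_)
        have h0 := tilt_pos l v x y
        simp only [abs_mul, abs_of_pos h0]
        gcongr
        have h1 := hw.dist_le_mul y p
        rw [Real.dist_eq, dist_eq_norm, NNReal.coe_one, one_mul] at h1
        refine h1.trans ?_
        rw [← sub_nonneg]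
        have : ‖y - p‖ ^ 2 / (2 * c) + c / 2 - ‖y - p‖ = (‖y - p‖ - c) ^ 2 / (2 * c) := by
          field_simp
          ring
        rw [this]
        positivity
    _ = (∫ y, tilt l v x y * ‖y - p‖ ^ 2 ∂ν) / (2 * c) + Z * (c / 2) := by
        have : ∀ y, tilt l v x y * (‖y - p‖ ^ 2 / (2 * c) + c / 2) =
          tilt l v x y * ‖y - p‖ ^ 2 / (2 * c) + tilt l v x y * (c / 2) := fun y => by ring
        simp_rw [this]
        rw [integral_add ((hv.tilt_mul_norm_sub_sq l x p).div_const (2 * c))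
          ((hv.tilt l x).mul_const (c / 2)), integral_div, integral_mul_const]
        rfl
    _ ≤ Z * c ^ 2 / (2 * c) + Z * (c / 2) := by gcongr
    _ = Z * c := by field_simp; ring

theorem Semiconcave.mono {E : Type*} [NormedAddCommGroup E] [InnerProductSpace ℝ E] {α α' : ℝ}
    (h : α ≤ α') {u : E → ℝ} (hu : Semiconcave α u) : Semiconcave α' u := by
  intro x y t s ht hs hts
  have h1 := hu x y t s ht hs hts
  have h2 : α / 2 * (t * s) * ‖x - y‖ ^ 2 ≤ α' / 2 * (t * s) * ‖x - y‖ ^ 2 := by gcongr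
  linarith

theorem exists_approx_transport_of_bounded_support {F G : 𝔼 → ℝ≥0∞} (hF : AEMeasurable F)
    (hG : AEMeasurable G) [IsProbabilityMeasure (volume.withDensity F)]
    [IsProbabilityMeasure (volume.withDensity G)] {β a R : ℝ} (hβ : 0 < β) (ha : 1 ≤ a)
    (hFb : LogSemiconvex (β * a) F) (hGb : LogSemiconcave β G)
    (hμ : ExpIntegrable (volume.withDensity F) 0)
    (hR : ∀ᵐ y ∂(volume.withDensity G), ‖y‖ ≤ R) {ε : ℝ} (hε : 0 < ε) :
    ∃ φ T, IsSmoothConvexGrad a φ T ∧ ∀ w : 𝔼 → ℝ, (∀ x, |w x| ≤ 1) → LipschitzWith 1 w →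
      |∫ y, w y ∂(volume.withDensity G) - ∫ x, w (T x) ∂(volume.withDensity F)| ≤ ε := by
  set μ := volume.withDensity F with hμdef
  set ν := volume.withDensity G with hνdef
  have ha0 : 0 < a := by linarith
  obtain ⟨l, hl, hlk⟩ : ∃ l : ℝ, 0 < l ∧ k * (2 * (Real.exp (a / 2) - 1)) / l ≤ (ε / 2) ^ 2 := by
    have hA : 0 ≤ k * (2 * (Real.exp (a / 2) - 1)) := by
      have := Real.one_le_exp (by linarith : 0 ≤ a / 2)
      have : (0 : ℝ) ≤ k := by positivity
      have : 0 ≤ Real.exp (a / 2) - 1 := by linarith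
      positivity
    refine ⟨(k * (2 * (Real.exp (a / 2) - 1)) + 1) / (ε / 2) ^ 2, by positivity, ?_⟩
    rw [div_div_eq_mul_div, div_le_iff₀ (by positivity), mul_comm]
    gcongr
    linarith
  set 𝒞 : Set (𝔼 → ℝ) := {u | Measurable u ∧ (∀ x y, u x ≤ u y + |l| * R * ‖x - y‖) ∧
    Semiconcave (l * a) u}
  have hR0 : 0 ≤ R := by
    obtain ⟨y, hy⟩ := hR.exists
    exact (norm_nonneg y).trans hy
  have hvexp : ∀ u ∈ 𝒞, ExpIntegrable ν (logLaplace l μ u) := fun u hu => by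
    obtain ⟨M, hM⟩ := exists_abs_logLaplace_le (NeZero.ne μ)
      (expIntegrable_of_lipschitz hμ hu.1 hu.2.1) l R
    exact expIntegrable_of_bounded hR (measurable_logLaplace hu.1 l) hM
  have hcl : ∀ u ∈ 𝒞, logLaplace l ν (logLaplace l μ u) ∈ 𝒞 := by
    intro u hu
    refine ⟨measurable_logLaplace (measurable_logLaplace hu.1 l) l,
      logLaplace_lipschitz hR (NeZero.ne ν) (hvexp u hu) l, ?_⟩
    have h1 := semiconvex_logLaplace hF hFb hu.2.2 hu.1
      (expIntegrable_of_lipschitz hμ hu.1 hu.2.1) (NeZero.ne μ) l (by positivity)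
    have h2 := semiconcave_logLaplace hG hGb h1 (measurable_logLaplace hu.1 l) (hvexp u hu)
      (NeZero.ne ν) l (by positivity)
    refine h2.mono ?_
    rw [div_le_iff₀ (by positivity)]
    have : l * a * (l ^ 2 / (l * a + β * a) + β) = l ^ 2 + l * β * (a - l / (l + β)) := by
      field_simp
      ring
    rw [this]
    have : l / (l + β) ≤ 1 := by
      rw [div_le_one (by positivity)]
      linarith
    have : 0 ≤ l * β * (a - l / (l + β)) := mul_nonneg (by positivity) (by linarith)
    linarith
  obtain ⟨u, hu, hui, hudec⟩ := exists_integral_abs_exp_sub_one_le hμ hR (𝒞 := 𝒞)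
    ⟨0, measurable_const, fun x y => by simp; positivity, fun x y t s ht hs _ => by
      simp only [Pi.zero_apply, mul_zero, add_zero, zero_sub, Left.neg_nonpos_iff]
      positivity⟩ (fun u hu => hu.1) (fun u hu => hu.2.1) hcl (half_pos hε)
  have huexp := expIntegrable_of_lipschitz hμ hu.1 hu.2.1
  have hvm : Measurable (logLaplace l μ u) := measurable_logLaplace hu.1 l
  have hve := hvexp u hu
  have hsc := (hcl u hu).2.2
  set v := logLaplace l μ u with hv
  set u' := logLaplace l ν v with hu'
  set T := tiltMean l ν v with hT
  have hgrad : IsSmoothConvexGrad a (fun x => u' x / l) T := by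
    intro x h
    have h1 : ∀ h, u' x + inner ℝ (l • T x) h ≤ u' (x + h) := fun h => by
      rw [inner_smul_left]
      exact logLaplace_add_ge hve (NeZero.ne ν) l x h
    have h2 := hsc.le_of_subgradient h1 h
    have h1 := h1 h
    rw [inner_smul_left, RCLike.conj_to_real] at h1 h2
    simp only
    have e1 : u' x / l + inner ℝ (T x) h = (u' x + l * inner ℝ (T x) h) / l := by field_simp
    have e2 : u' x / l + inner ℝ (T x) h + a / 2 * ‖h‖ ^ 2 =
      (u' x + l * inner ℝ (T x) h + l * a / 2 * ‖h‖ ^ 2) / l := by field_simp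
    rw [e2, e1]
    constructor
    · gcongr
    · gcongr
  refine ⟨_, T, hgrad, fun w hw1 hw => ?_⟩
  have hTc := hgrad.continuous ha0
  set W : 𝔼 → ℝ := fun x => (laplace l ν v x)⁻¹ * ∫ y, tilt l v x y * w y ∂ν with hW
  have hWT : ∀ x, |W x - w (T x)| ≤ ε / 2 := fun x => by
    refine abs_integral_tilt_mul_sub_le (NeZero.ne ν) hve (half_pos hε) ?_ hw hw1
    refine (integral_tilt_mul_norm_sub_sq_le hl (NeZero.ne ν) hve hgrad x).trans ?_
    have := laplace_pos hve (NeZero.ne ν) l x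
    gcongr
  have hW1 : ∀ x, |W x| ≤ 1 := by
    intro x
    have hZ := laplace_pos hve (NeZero.ne ν) l x
    rw [hW, abs_mul, abs_of_pos (inv_pos.2 hZ), inv_mul_le_iff₀ hZ, mul_one]
    refine abs_integral_le_integral_abs.trans ?_
    refine integral_mono_of_nonneg (Filter.Eventually.of_forall fun y => abs_nonneg _) (hve.tilt l x)
      (Filter.Eventually.of_forall fun y => ?_)
    have h0 := tilt_pos l v x y
    simp only [abs_mul, abs_of_pos h0]
    exact mul_le_of_le_one_right h0.le (hw1 y)
  have hWm : Measurable W := by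
    have hwm := hw.continuous.measurable
    have h1 : StronglyMeasurable (fun p : 𝔼 × 𝔼 => tilt l v p.1 p.2 * w p.2) := by
      unfold tilt
      exact Measurable.stronglyMeasurable (by fun_prop)
    have h2 : StronglyMeasurable (fun p : 𝔼 × 𝔼 => tilt l v p.1 p.2) := by
      unfold tilt
      exact Measurable.stronglyMeasurable (by fun_prop)
    exact h2.integral_prod_right.measurable.inv.mul h1.integral_prod_right.measurable
  have hkey : ∫ y, w y ∂ν = ∫ x, Real.exp (u' x - u x) * W x ∂μ := by
    have h1 := integral_swap_kernel hR huexp hu.1 hve hvm hw.continuous.measurable hw1 l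
    have e1 : ∀ y, Real.exp (-v y) * laplace l μ u y = 1 := fun y => by
      rw [← exp_logLaplace huexp (NeZero.ne μ), ← Real.exp_add, ← hv]
      simp
    simp_rw [e1, one_mul] at h1
    rw [← h1]
    congr 1
    ext x
    have hZ := laplace_pos hve (NeZero.ne ν) l x
    rw [sub_eq_neg_add, Real.exp_add, hu', exp_logLaplace hve (NeZero.ne ν)]
    simp only [hW]
    field_simp
  have iW : Integrable W μ :=
    (integrable_const (1 : ℝ)).mono' hWm.aestronglyMeasurable (Filter.Eventually.of_forall hW1)
  have iwT : Integrable (fun x => w (T x)) μ :=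
    (integrable_const (1 : ℝ)).mono' (hw.continuous.comp hTc).aestronglyMeasurable
      (Filter.Eventually.of_forall fun x => hw1 _)
  have ieW : Integrable (fun x => Real.exp (u' x - u x) * W x) μ :=
    hui.mul_bdd hWm.aestronglyMeasurable (Filter.Eventually.of_forall hW1)
  rw [hkey, ← integral_sub ieW iwT]
  have i1 : Integrable (fun x => |Real.exp (u' x - u x) - 1|) μ :=
    (hui.sub (integrable_const 1)).abs
  calc _ ≤ ∫ x, |Real.exp (u' x - u x) * W x - w (T x)| ∂μ := abs_integral_le_integral_abs
    _ ≤ ∫ x, (|Real.exp (u' x - u x) - 1| + ε / 2) ∂μ := by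
        refine integral_mono (ieW.sub iwT).abs (i1.add (integrable_const _)) fun x => ?_
        have e : Real.exp (u' x - u x) * W x - w (T x) =
          (Real.exp (u' x - u x) - 1) * W x + (W x - w (T x)) := by ring
        simp only [e]
        refine (abs_add_le _ _).trans (add_le_add ?_ (hWT x))
        rw [abs_mul]
        exact mul_le_of_le_one_right (abs_nonneg _) (hW1 x)
    _ ≤ ε := by
        rw [integral_add i1 (integrable_const _)]
        simp only [integral_const, probReal_univ, one_smul]
        linarith

end ApproxTransport

theorem IsSmoothConvexGrad.mono {E : Type*} [NormedAddCommGroup E] [InnerProductSpace ℝ E]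
    {a a' : ℝ} {φ : E → ℝ} {T : E → E} (h : IsSmoothConvexGrad a φ T) (haa : a ≤ a') :
    IsSmoothConvexGrad a' φ T := by
  intro x y
  refine ⟨(h x y).1, (h x y).2.trans ?_⟩
  gcongr

theorem isProbabilityMeasure_inv_smul {α : Type*} [MeasurableSpace α] {μ' : Measure α}
    [IsFiniteMeasure μ'] (h0 : μ' Set.univ ≠ 0) :
    IsProbabilityMeasure ((μ' Set.univ)⁻¹ • μ') :=
  ⟨by simp [ENNReal.inv_mul_cancel h0 (measure_ne_top _ _)]⟩

theorem abs_integral_sub_integral_inv_smul_le {α : Type*} [MeasurableSpace α] {μ μ' : Measure α}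
    [IsProbabilityMeasure μ] (hle : μ' ≤ μ) (h0 : μ' Set.univ ≠ 0) {h : α → ℝ}
    (hm : AEStronglyMeasurable h μ) (h1 : ∀ x, |h x| ≤ 1) :
    |∫ x, h x ∂μ - ∫ x, h x ∂((μ' Set.univ)⁻¹ • μ')| ≤ 2 * (1 - μ'.real Set.univ) := by
  have : IsFiniteMeasure μ' := isFiniteMeasure_of_le μ hle
  have i : Integrable h μ := (integrable_const (1 : ℝ)).mono' hm (Filter.Eventually.of_forall h1)
  have i' : Integrable h μ' := i.mono_measure hle
  have k1 : ∫ x, (1 - h x) ∂μ' ≤ ∫ x, (1 - h x) ∂μ :=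
    integral_mono_measure hle (Filter.Eventually.of_forall fun x => by
      have := (abs_le.1 (h1 x)).2
      simp only [Pi.zero_apply]
      linarith) ((integrable_const _).sub i)
  have k2 : ∫ x, (1 + h x) ∂μ' ≤ ∫ x, (1 + h x) ∂μ :=
    integral_mono_measure hle (Filter.Eventually.of_forall fun x => by
      have := (abs_le.1 (h1 x)).1
      simp only [Pi.zero_apply]
      linarith) ((integrable_const _).add i)
  rw [integral_sub (integrable_const _) i, integral_sub (integrable_const _) i'] at k1
  rw [integral_add (integrable_const _) i, integral_add (integrable_const _) i'] at k2
  simp only [integral_const, probReal_univ, smul_eq_mul, mul_one] at k1 k2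
  rw [integral_smul_measure, ENNReal.toReal_inv]
  change |_ - (μ'.real Set.univ)⁻¹ • _| ≤ _
  set c := μ'.real Set.univ
  have hc0 : 0 < c := ENNReal.toReal_pos h0 (measure_ne_top _ _)
  have hc1 : c ≤ 1 := by
    have := measureReal_mono (μ := μ) (Set.subset_univ (Set.univ : Set α))
    have h2 : c ≤ μ.real Set.univ := ENNReal.toReal_mono (measure_ne_top _ _) (hle _)
    simpa using h2
  set A := ∫ x, h x ∂μ
  set A' := ∫ x, h x ∂μ'
  have k3 : |A'| ≤ c := by
    refine abs_integral_le_integral_abs.trans ?_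
    refine (integral_mono i'.abs (integrable_const 1) h1).trans ?_
    simp [c]
  rw [smul_eq_mul]
  have e1 : A' - c⁻¹ * A' = -((1 - c) * (A' / c)) := by
    field_simp
    ring
  have k4 : |A' / c| ≤ 1 := by
    rw [abs_div, abs_of_pos hc0, div_le_one hc0]
    exact k3
  have k5 : |(1 - c) * (A' / c)| ≤ 1 - c := by
    rw [abs_mul, abs_of_nonneg (by linarith : 0 ≤ 1 - c)]
    exact mul_le_of_le_one_right (by linarith) k4
  have k6 : A - c⁻¹ * A' = (A - A') + (A' - c⁻¹ * A') := by ring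
  rw [k6, e1, abs_le]
  rw [abs_le] at k5
  constructor <;> linarith [k5.1, k5.2]

section Truncation

theorem eexp_zero : eexp 0 = 1 := by simp [eexp]

theorem eexp_le_one {r : ℝ} (hr : r ≤ 0) : eexp r ≤ 1 := by
  rw [← eexp_zero]
  exact eexp_le_eexp.2 hr

variable {k : ℕ}

local notation "𝔼" => EuclideanSpace ℝ (Fin k)

theorem norm_combo_sq {E : Type*} [NormedAddCommGroup E] [InnerProductSpace ℝ E]
    {t s : ℝ} (hts : t + s = 1) (x y : E) :
    ‖t • x + s • y‖ ^ 2 = t * ‖x‖ ^ 2 + s * ‖y‖ ^ 2 - t * s * ‖x - y‖ ^ 2 := by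
  have := norm_add_inner_combo hts x y x y
  simp only [real_inner_self_eq_norm_sq] at this
  exact this.symm

theorem ENNReal.rpow_mul_rpow_of_add_eq_one {c : ℝ≥0∞} {t s : ℝ} (ht : 0 < t) (hs : 0 < s)
    (hts : t + s = 1) : c ^ t * c ^ s = c := by
  rw [← ENNReal.rpow_add_of_nonneg t s ht.le hs.le, hts, ENNReal.rpow_one]

theorem LogSemiconvex.const_mul {F : 𝔼 → ℝ≥0∞} {b : ℝ} (hF : LogSemiconvex b F)
    (C : ℝ≥0∞) : LogSemiconvex b fun x => C * F x := by
  intro x y t s ht hs hts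
  have h1 := hF x y t s ht hs hts
  simp only
  rw [ENNReal.mul_rpow_of_nonneg _ _ ht.le, ENNReal.mul_rpow_of_nonneg _ _ hs.le]
  calc _ ≤ C * (F x ^ t * F y ^ s * eexp (b / 2 * (t * s) * ‖x - y‖ ^ 2)) := by gcongr
    _ = (C ^ t * C ^ s) * (F x ^ t * F y ^ s * eexp (b / 2 * (t * s) * ‖x - y‖ ^ 2)) := by
      rw [ENNReal.rpow_mul_rpow_of_add_eq_one ht hs hts]
    _ = _ := by ring

theorem LogSemiconcave.const_mul {G : 𝔼 → ℝ≥0∞} {b : ℝ} (hG : LogSemiconcave b G)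
    (C : ℝ≥0∞) : LogSemiconcave b fun x => C * G x := by
  intro x y t s ht hs hts
  have h1 := hG x y t s ht hs hts
  simp only
  rw [ENNReal.mul_rpow_of_nonneg _ _ ht.le, ENNReal.mul_rpow_of_nonneg _ _ hs.le]
  calc _ = (C ^ t * C ^ s) * (G x ^ t * G y ^ s * eexp (b / 2 * (t * s) * ‖x - y‖ ^ 2)) := by ring
    _ = C * (G x ^ t * G y ^ s * eexp (b / 2 * (t * s) * ‖x - y‖ ^ 2)) := by
      rw [ENNReal.rpow_mul_rpow_of_add_eq_one ht hs hts]
    _ ≤ _ := by gcongr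

theorem LogSemiconvex.mul_eexp {F : 𝔼 → ℝ≥0∞} {b : ℝ} (hF : LogSemiconvex b F) (c : ℝ) :
    LogSemiconvex (b + c) fun x => F x * eexp (-(c / 2 * ‖x‖ ^ 2)) := by
  intro x y t s ht hs hts
  have h1 := hF x y t s ht hs hts
  have h2 : -(c / 2 * ‖t • x + s • y‖ ^ 2) = t * -(c / 2 * ‖x‖ ^ 2) + (s * -(c / 2 * ‖y‖ ^ 2) +
      c / 2 * (t * s) * ‖x - y‖ ^ 2) := by
    rw [norm_combo_sq hts]
    ring
  simp only
  rw [ENNReal.mul_rpow_of_nonneg _ _ ht.le, ENNReal.mul_rpow_of_nonneg _ _ hs.le, h2, eexp_add,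
    eexp_add, eexp_rpow, eexp_rpow, add_div, add_mul, add_mul, eexp_add]
  calc _ ≤ F x ^ t * F y ^ s * eexp (b / 2 * (t * s) * ‖x - y‖ ^ 2) * (eexp (t * -(c / 2 * ‖x‖ ^ 2)) *
      (eexp (s * -(c / 2 * ‖y‖ ^ 2)) * eexp (c / 2 * (t * s) * ‖x - y‖ ^ 2))) := by gcongr
    _ = _ := by ring

theorem LogSemiconcave.indicator {G : 𝔼 → ℝ≥0∞} {b : ℝ} (hG : LogSemiconcave b G) {S : Set 𝔼}
    (hS : Convex ℝ S) : LogSemiconcave b (S.indicator G) := by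
  intro x y t s ht hs hts
  by_cases hx : x ∈ S
  · by_cases hy : y ∈ S
    · rw [Set.indicator_of_mem hx, Set.indicator_of_mem hy,
        Set.indicator_of_mem (hS hx hy ht.le hs.le hts)]
      exact hG x y t s ht hs hts
    · simp [Set.indicator_of_notMem hy, ENNReal.zero_rpow_of_pos hs]
  · simp [Set.indicator_of_notMem hx, ENNReal.zero_rpow_of_pos ht]

theorem expIntegrable_withDensity_mul_eexp {F : 𝔼 → ℝ≥0∞} (hF : AEMeasurable F)
    (hF1 : ∫⁻ x, F x ≠ ∞) {c : ℝ} (hc : 0 < c) {C : ℝ≥0∞} (hC : C ≠ ∞) :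
    ExpIntegrable (C • volume.withDensity fun x : 𝔼 => F x * eexp (-(c / 2 * ‖x‖ ^ 2))) 0 := by
  intro r
  refine Integrable.smul_measure ?_ hC
  refine ⟨Continuous.aestronglyMeasurable (by simp only [Pi.zero_apply]; fun_prop), ?_⟩
  have hm : AEMeasurable fun x : 𝔼 => F x * eexp (-(c / 2 * ‖x‖ ^ 2)) :=
    hF.mul (Measurable.aemeasurable (by fun_prop))
  rw [HasFiniteIntegral, lintegral_withDensity_eq_lintegral_mul₀ hm
    (Measurable.aemeasurable (by simp only [Pi.zero_apply]; fun_prop))]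
  refine lt_of_le_of_lt (lintegral_mono (g := fun x => F x * eexp (r ^ 2 / (2 * c))) fun x => ?_) ?_
  · simp only [Pi.mul_apply, Pi.zero_apply, sub_zero]
    rw [Real.enorm_of_nonneg (Real.exp_pos _).le]
    change F x * _ * eexp _ ≤ _
    rw [mul_assoc, ← eexp_add]
    gcongr
    rw [eexp_le_eexp, ← sub_nonneg]
    have : r ^ 2 / (2 * c) - (-(c / 2 * ‖x‖ ^ 2) + r * ‖x‖) = (r - c * ‖x‖) ^ 2 / (2 * c) := by
      field_simp
      ring
    rw [this]
    positivity
  · rw [lintegral_mul_const'' _ hF]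
    exact ENNReal.mul_lt_top hF1.lt_top (eexp_ne_top _).lt_top

theorem exists_approx_transport {F G : 𝔼 → ℝ≥0∞} (hF : AEMeasurable F)
    (hG : AEMeasurable G) [IsProbabilityMeasure (volume.withDensity F)]
    [IsProbabilityMeasure (volume.withDensity G)] {β : ℝ} (hβ : 0 < β)
    (hFb : LogSemiconvex β F) (hGb : LogSemiconcave β G) {ε : ℝ} (hε : 0 < ε) :
    ∃ φ T, IsSmoothConvexGrad (1 + ε) φ T ∧ ∀ w : 𝔼 → ℝ, (∀ x, |w x| ≤ 1) → LipschitzWith 1 w →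
      |∫ y, w y ∂(volume.withDensity G) - ∫ x, w (T x) ∂(volume.withDensity F)| ≤ ε := by
  set μ := volume.withDensity F with hμdef
  set ν := volume.withDensity G with hνdef
  set δ := min (ε / 6) (1 / 2) with hδ
  have hδ0 : 0 < δ := by positivity
  have hδ1 : δ ≤ 1 / 2 := min_le_right _ _
  have hδε : δ ≤ ε / 6 := min_le_left _ _
  have hF1 : ∫⁻ x, F x = 1 := by
    have : μ Set.univ = 1 := measure_univ
    rwa [withDensity_apply _ MeasurableSet.univ, setLIntegral_univ] at this
  -- Gaussian damping of the source
  obtain ⟨η, hη0, hηε, hη⟩ : ∃ η, 0 < η ∧ η ≤ ε ∧ ENNReal.ofReal (1 - δ) <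
      ∫⁻ x, F x * eexp (-(η * β / 2 * ‖x‖ ^ 2)) := by
    have hlim : Filter.Tendsto (fun n : ℕ => ∫⁻ x, F x * eexp (-(1 / ((n : ℝ) + 1) * β / 2 * ‖x‖ ^ 2)))
        Filter.atTop (nhds (∫⁻ x, F x)) := by
      refine tendsto_lintegral_of_dominated_convergence' F
        (fun n => hF.mul (Measurable.aemeasurable (by fun_prop)))
        (fun n => Filter.Eventually.of_forall fun x => ?_) (by simp [hF1])
        (Filter.Eventually.of_forall fun x => ?_)
      · refine mul_le_of_le_one_right zero_le (eexp_le_one ?_)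
        have : 0 ≤ 1 / ((n : ℝ) + 1) * β / 2 * ‖x‖ ^ 2 := by positivity
        linarith
      · have h1 : Filter.Tendsto (fun n : ℕ => eexp (-(1 / ((n : ℝ) + 1) * β / 2 * ‖x‖ ^ 2)))
            Filter.atTop (nhds (eexp (-(0 * β / 2 * ‖x‖ ^ 2)))) := by
          unfold eexp
          refine ENNReal.tendsto_ofReal ((Real.continuous_exp.tendsto _).comp ?_)
          exact (((tendsto_one_div_add_atTop_nhds_zero_nat.mul_const β).div_const 2).mul_const _).neg
        have h2 : eexp (-(0 * β / 2 * ‖x‖ ^ 2)) = 1 := by simp [eexp]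
        rw [h2] at h1
        simpa using ENNReal.Tendsto.const_mul (a := F x) h1 (Or.inl one_ne_zero)
    rw [hF1] at hlim
    have h1 : ENNReal.ofReal (1 - δ) < 1 := by
      rw [ENNReal.ofReal_lt_one]
      linarith
    have h2 := hlim.eventually (lt_mem_nhds h1)
    have h3 := (tendsto_one_div_add_atTop_nhds_zero_nat (𝕜 := ℝ)).eventually (gt_mem_nhds hε)
    obtain ⟨n, hn1, hn2⟩ := (h2.and h3).exists
    exact ⟨1 / ((n : ℝ) + 1), by positivity, hn2.le, hn1⟩
  set μ' := volume.withDensity fun x : 𝔼 => F x * eexp (-(η * β / 2 * ‖x‖ ^ 2)) with hμ'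
  have hμle : μ' ≤ μ := by
    refine withDensity_mono (Filter.Eventually.of_forall fun x => ?_)
    refine mul_le_of_le_one_right zero_le (eexp_le_one ?_)
    have : 0 ≤ η * β / 2 * ‖x‖ ^ 2 := by positivity
    linarith
  have : IsFiniteMeasure μ' := isFiniteMeasure_of_le μ hμle
  have hμ'u : ENNReal.ofReal (1 - δ) < μ' Set.univ := by
    rwa [withDensity_apply _ MeasurableSet.univ, setLIntegral_univ]
  have hμ'0 : μ' Set.univ ≠ 0 := (lt_of_le_of_lt zero_le hμ'u).ne'
  have hμ'r : 1 - δ ≤ μ'.real Set.univ :=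
    (ENNReal.ofReal_le_iff_le_toReal (measure_ne_top _ _)).1 hμ'u.le
  -- truncation of the target
  obtain ⟨R, hR⟩ : ∃ R : ℝ, ENNReal.ofReal (1 - δ) < ν (Metric.closedBall 0 R) := by
    have hlim : Filter.Tendsto (fun n : ℕ => ν (Metric.closedBall (0 : 𝔼) n)) Filter.atTop
        (nhds (ν (⋃ n : ℕ, Metric.closedBall (0 : 𝔼) n))) :=
      tendsto_measure_iUnion_atTop fun a b hab =>
        Metric.closedBall_subset_closedBall (by exact_mod_cast hab)
    rw [Metric.iUnion_closedBall_nat, measure_univ] at hlim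
    have h1 : ENNReal.ofReal (1 - δ) < 1 := by
      rw [ENNReal.ofReal_lt_one]
      linarith
    obtain ⟨n, hn⟩ := (hlim.eventually (lt_mem_nhds h1)).exists
    exact ⟨n, hn⟩
  set ν' := volume.withDensity ((Metric.closedBall (0 : 𝔼) R).indicator G) with hν'
  have hν'eq : ν' = ν.restrict (Metric.closedBall 0 R) := by
    rw [hν', hνdef, withDensity_indicator Metric.isClosed_closedBall.measurableSet,
      restrict_withDensity Metric.isClosed_closedBall.measurableSet]
  have hνle : ν' ≤ ν := hν'eq ▸ Measure.restrict_le_self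
  have : IsFiniteMeasure ν' := isFiniteMeasure_of_le ν hνle
  have hν'u : ENNReal.ofReal (1 - δ) < ν' Set.univ := by
    rwa [hν'eq, Measure.restrict_apply_univ]
  have hν'0 : ν' Set.univ ≠ 0 := (lt_of_le_of_lt zero_le hν'u).ne'
  have hν'r : 1 - δ ≤ ν'.real Set.univ :=
    (ENNReal.ofReal_le_iff_le_toReal (measure_ne_top _ _)).1 hν'u.le
  have pμ := isProbabilityMeasure_inv_smul hμ'0
  have pν := isProbabilityMeasure_inv_smul hν'0
  have hCμ : (μ' Set.univ)⁻¹ ≠ ∞ := ENNReal.inv_ne_top.2 hμ'0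
  have hCν : (ν' Set.univ)⁻¹ ≠ ∞ := ENNReal.inv_ne_top.2 hν'0
  have eμ : (μ' Set.univ)⁻¹ • μ' = volume.withDensity fun x : 𝔼 => (μ' Set.univ)⁻¹ *
      (F x * eexp (-(η * β / 2 * ‖x‖ ^ 2))) := by
    rw [hμ', ← withDensity_smul' _ _ hCμ]
    rfl
  have eν : (ν' Set.univ)⁻¹ • ν' = volume.withDensity fun x : 𝔼 => (ν' Set.univ)⁻¹ *
      (Metric.closedBall (0 : 𝔼) R).indicator G x := by
    rw [hν', ← withDensity_smul' _ _ hCν]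
    rfl
  have hexp := expIntegrable_withDensity_mul_eexp hF (by simp [hF1]) (mul_pos hη0 hβ) hCμ
  rw [← hμ', eμ] at hexp
  have hsupp : ∀ᵐ y ∂((ν' Set.univ)⁻¹ • ν'), ‖y‖ ≤ R := by
    refine Measure.ae_smul_measure ?_ _
    rw [hν'eq]
    filter_upwards [ae_restrict_mem Metric.isClosed_closedBall.measurableSet] with y hy
    simpa using hy
  rw [eν] at hsupp
  have hμb := (hFb.mul_eexp (η * β)).const_mul (μ' Set.univ)⁻¹
  have hνb := (hGb.indicator (convex_closedBall (0 : 𝔼) R)).const_mul (ν' Set.univ)⁻¹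
  rw [show β + η * β = β * (1 + η) by ring] at hμb
  have pμ' := pμ
  have pν' := pν
  rw [eμ] at pμ'
  rw [eν] at pν'
  have hm : AEMeasurable fun x : 𝔼 => F x * eexp (-(η * β / 2 * ‖x‖ ^ 2)) :=
    hF.mul (Measurable.aemeasurable (by fun_prop))
  obtain ⟨φ, T, hT, hw⟩ := exists_approx_transport_of_bounded_support (hm.const_mul _)
    ((hG.indicator Metric.isClosed_closedBall.measurableSet).const_mul _) hβ (by linarith)
    hμb hνb hexp hsupp (half_pos (half_pos hε))
  refine ⟨φ, T, hT.mono (by linarith), fun w hw1 hwL => ?_⟩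
  have h1 := hw w hw1 hwL
  rw [← eμ, ← eν] at h1
  have hTc := hT.continuous (by linarith)
  have h2 := abs_integral_sub_integral_inv_smul_le hνle hν'0
    hwL.continuous.aestronglyMeasurable hw1
  have h3 := abs_integral_sub_integral_inv_smul_le hμle hμ'0
    (hwL.continuous.comp hTc).aestronglyMeasurable (fun x => hw1 (T x))
  simp only [Function.comp] at h3
  rw [abs_le] at h1 h2 h3 ⊢
  constructor <;> linarith [h1.1, h1.2, h2.1, h2.2, h3.1, h3.2]

end Truncation

section TransportLimit

variable {k : ℕ}
local notation "𝔼" => EuclideanSpace ℝ (Fin k)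

open Filter Topology

theorem measure_eq_of_forall_lipschitz {μ ν : Measure 𝔼} [IsProbabilityMeasure μ]
    [IsProbabilityMeasure ν]
    (h : ∀ w : 𝔼 → ℝ, (∀ x, |w x| ≤ 1) → LipschitzWith 1 w → ∫ x, w x ∂μ = ∫ x, w x ∂ν) :
    μ = ν := by
  let μ' : ProbabilityMeasure 𝔼 := ⟨μ, inferInstance⟩
  let ν' : ProbabilityMeasure 𝔼 := ⟨ν, inferInstance⟩
  have key : Tendsto (fun _ : ℕ => μ') atTop (𝓝 ν') := by
    rw [tendsto_iff_forall_lipschitz_integral_tendsto]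
    rintro f ⟨C, hC⟩ ⟨L, hL⟩
    have hC0 : 0 ≤ C := le_trans dist_nonneg (hC 0 0)
    set c : ℝ := 1 / (C + L + 1) with hc
    have hc0 : 0 < c := by positivity
    have hcC : c * C ≤ 1 := by
      rw [hc, one_div_mul_eq_div, div_le_one (by positivity)]
      linarith [L.coe_nonneg]
    have hcL : c * L ≤ 1 := by
      rw [hc, one_div_mul_eq_div, div_le_one (by positivity)]
      linarith [L.coe_nonneg]
    have h1 := h (fun x => c * (f x - f 0)) (fun x => by
      rw [abs_mul, abs_of_pos hc0, ← Real.dist_eq]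
      exact (mul_le_mul_of_nonneg_left (hC x 0) hc0.le).trans hcC)
      (LipschitzWith.of_dist_le_mul fun x y => by
        rw [Real.dist_eq, ← mul_sub, abs_mul, abs_of_pos hc0, sub_sub_sub_cancel_right,
          ← Real.dist_eq, NNReal.coe_one]
        calc c * dist (f x) (f y) ≤ c * (L * dist x y) :=
              mul_le_mul_of_nonneg_left (hL.dist_le_mul x y) hc0.le
          _ = (c * L) * dist x y := by ring
          _ ≤ 1 * dist x y := mul_le_mul_of_nonneg_right hcL dist_nonneg)
    have hintg : ∀ (ρ : Measure 𝔼) [IsProbabilityMeasure ρ], Integrable f ρ := by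
      intro ρ _
      refine (integrable_const (C + |f 0|)).mono' hL.continuous.aestronglyMeasurable
        (Eventually.of_forall fun x => ?_)
      have := hC x 0
      rw [Real.dist_eq] at this
      rw [Real.norm_eq_abs]
      linarith [abs_sub_abs_le_abs_sub (f x) (f 0)]
    rw [integral_const_mul, integral_const_mul, integral_sub (hintg μ) (integrable_const _),
      integral_sub (hintg ν) (integrable_const _)] at h1
    simp only [integral_const, probReal_univ, one_smul] at h1
    have h2 : ∫ x, f x ∂μ = ∫ x, f x ∂ν := by
      have := mul_left_cancel₀ hc0.ne' h1
      linarith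
    show Tendsto (fun _ : ℕ => ∫ x, f x ∂μ) atTop (𝓝 (∫ x, f x ∂ν))
    rw [h2]
    exact tendsto_const_nhds
  have := tendsto_nhds_unique (tendsto_const_nhds (x := μ')) key
  exact congrArg Subtype.val this

theorem exists_subseq_tendsto_of_lipschitz {T : ℕ → 𝔼 → 𝔼} {L : NNReal} {R : ℝ}
    (hL : ∀ n, LipschitzWith L (T n)) (hR : ∀ n, ‖T n 0‖ ≤ R) :
    ∃ (S : 𝔼 → 𝔼) (σ : ℕ → ℕ), StrictMono σ ∧
      ∀ x, Tendsto (fun n => T (σ n) x) atTop (𝓝 (S x)) := by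
  let K : Set C(𝔼, 𝔼) := {f | LipschitzWith L f ∧ ‖f 0‖ ≤ R}
  have hK : IsCompact K := by
    refine ArzelaAscoli.isCompact_of_equicontinuous K ?_ ?_
    · have himg : ContinuousMap.toFun '' K = {f : 𝔼 → 𝔼 | LipschitzWith L f} ∩ {f | ‖f 0‖ ≤ R} := by
        ext f
        constructor
        · rintro ⟨f, hf, rfl⟩
          exact hf
        · rintro ⟨h1, h2⟩
          exact ⟨⟨f, h1.continuous⟩, ⟨h1, h2⟩, rfl⟩
      rw [himg]
      have hc : IsCompact (Set.univ.pi fun x : 𝔼 => Metric.closedBall (0 : 𝔼) (R + L * ‖x‖)) :=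
        isCompact_univ_pi fun x => isCompact_closedBall _ _
      refine hc.of_isClosed_subset ?_ ?_
      · refine (isClosed_setOfPred_lipschitzWith L).inter ?_
        exact isClosed_le (continuous_apply 0).norm continuous_const
      · rintro f ⟨h1, h2⟩ x -
        rw [mem_closedBall_zero_iff]
        have h3 := h1.dist_le_mul x 0
        rw [dist_eq_norm, dist_zero_right] at h3
        have h4 : ‖f 0‖ ≤ R := h2
        have h5 := norm_le_norm_add_norm_sub' (f x) (f 0)
        linarith
    · exact (LipschitzWith.uniformEquicontinuous _ L fun f : K => f.2.1).equicontinuous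
  obtain ⟨f, -, σ, hσ, hlim⟩ := hK.tendsto_subseq
    (x := fun n => (⟨T n, (hL n).continuous⟩ : C(𝔼, 𝔼))) fun n => ⟨hL n, hR n⟩
  refine ⟨f, σ, hσ, fun x => ?_⟩
  exact ((ContinuousEvalConst.continuous_eval_const x).tendsto f).comp hlim

theorem exists_isSmoothConvexGrad_of_tendsto {a : ℕ → ℝ} {φ : ℕ → 𝔼 → ℝ} {T : ℕ → 𝔼 → 𝔼}
    (h : ∀ n, IsSmoothConvexGrad (a n) (φ n) (T n)) {α : ℝ} (ha : Tendsto a atTop (𝓝 α))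
    {S : 𝔼 → 𝔼} (hS : ∀ x, Tendsto (fun n => T n x) atTop (𝓝 (S x))) :
    ∃ ψ, IsSmoothConvexGrad α ψ S := by
  have hb : ∀ x, ∃ y, Tendsto (fun n => φ n x - φ n 0) (hyperfilter ℕ) (𝓝 y) := by
    intro x
    have h1 : Tendsto (fun n => inner ℝ (T n 0) x) atTop (𝓝 (inner ℝ (S 0) x)) :=
      (hS 0).inner tendsto_const_nhds
    have h2 : Tendsto (fun n => inner ℝ (T n 0) x + a n / 2 * ‖x‖ ^ 2) atTop
        (𝓝 (inner ℝ (S 0) x + α / 2 * ‖x‖ ^ 2)) :=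
      h1.add ((ha.div_const 2).mul_const _)
    have hmem : ∀ᶠ n in hyperfilter ℕ, φ n x - φ n 0 ∈
        Set.Icc (inner ℝ (S 0) x - 1) (inner ℝ (S 0) x + α / 2 * ‖x‖ ^ 2 + 1) := by
      refine Eventually.filter_mono Nat.hyperfilter_le_atTop ?_
      filter_upwards [h1.eventually (lt_mem_nhds (sub_one_lt _)),
        h2.eventually (gt_mem_nhds (lt_add_one _))] with n hn1 hn2
      have := h n 0 x
      rw [zero_add] at this
      constructor <;> linarith [this.1, this.2]
    obtain ⟨y, -, hy⟩ := isCompact_Icc.ultrafilter_le_nhds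
      ((hyperfilter ℕ).map fun n => φ n x - φ n 0) (le_principal_iff.2 hmem)
    exact ⟨y, hy⟩
  choose ψ hψ using hb
  refine ⟨ψ, fun x y => ?_⟩
  have hT : Tendsto (fun n => inner ℝ (T n x) y) (hyperfilter ℕ) (𝓝 (inner ℝ (S x) y)) :=
    ((hS x).mono_left Nat.hyperfilter_le_atTop).inner tendsto_const_nhds
  have ha' := ha.mono_left Nat.hyperfilter_le_atTop
  constructor
  · refine le_of_tendsto_of_tendsto ((hψ x).add hT) (hψ (x + y)) (Eventually.of_forall fun n => ?_)
    have := (h n x y).1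
    dsimp only
    linarith
  · refine le_of_tendsto_of_tendsto (hψ (x + y))
      (((hψ x).add hT).add ((ha'.div_const 2).mul_const _)) (Eventually.of_forall fun n => ?_)
    have := (h n x y).2
    dsimp only
    linarith

theorem exists_measureReal_closedBall_ge (μ : Measure 𝔼) [IsProbabilityMeasure μ] {c : ℝ}
    (hc : c < 1) : ∃ R₀, ∀ R, R₀ ≤ R → c ≤ μ.real (Metric.closedBall 0 R) := by
  have hlim : Tendsto (fun n : ℕ => μ (Metric.closedBall (0 : 𝔼) n)) atTop (𝓝 (μ Set.univ)) := by
    rw [← Metric.iUnion_closedBall_nat (0 : 𝔼)]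
    exact tendsto_measure_iUnion_atTop fun i j hij =>
      Metric.closedBall_subset_closedBall (by exact_mod_cast hij)
  have h1 : ENNReal.ofReal c < μ Set.univ := by
    rw [measure_univ]
    exact ENNReal.ofReal_lt_one.2 hc
  obtain ⟨n, hn⟩ := (hlim.eventually (lt_mem_nhds h1)).exists
  refine ⟨n, fun R hR => ?_⟩
  exact (ENNReal.ofReal_le_iff_le_toReal (measure_ne_top _ _)).1
    (hn.le.trans (measure_mono (Metric.closedBall_subset_closedBall hR)))

/-- Maps that approximately push `μ` forward to `ν` cannot send the origin far away. -/
theorem exists_bound_of_approx_transport (μ ν : Measure 𝔼) [IsProbabilityMeasure μ]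
    [IsProbabilityMeasure ν] (L : NNReal) : ∃ R, ∀ T : 𝔼 → 𝔼, LipschitzWith L T →
      (∀ w : 𝔼 → ℝ, (∀ x, |w x| ≤ 1) → LipschitzWith 1 w →
        |∫ y, w y ∂ν - ∫ x, w (T x) ∂μ| ≤ 1 / 3) → ‖T 0‖ ≤ R := by
  obtain ⟨R₁, h₁⟩ := exists_measureReal_closedBall_ge μ (c := 3 / 4) (by norm_num)
  obtain ⟨R₂, h₂⟩ := exists_measureReal_closedBall_ge ν (c := 3 / 4) (by norm_num)
  set R := max R₁ R₂
  have h₁' := h₁ R (le_max_left _ _)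
  have h₂' := h₂ R (le_max_right _ _)
  refine ⟨R + 1 + L * R, fun T hT hw => ?_⟩
  by_contra! hcon
  set w : 𝔼 → ℝ := fun y => max 0 (min 1 (1 + R - ‖y‖)) with hwdef
  have hw0 : ∀ y, 0 ≤ w y := fun y => le_max_left _ _
  have hw1 : ∀ y, w y ≤ 1 := fun y => max_le zero_le_one (min_le_left _ _)
  have hwL : LipschitzWith 1 w := by
    refine LipschitzWith.const_max (LipschitzWith.const_min ?_ _) _
    refine LipschitzWith.of_dist_le_mul fun x y => ?_
    rw [Real.dist_eq, NNReal.coe_one, one_mul, dist_eq_norm, sub_sub_sub_cancel_left]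
    rw [norm_sub_rev]
    exact abs_norm_sub_norm_le _ _
  have hspec := hw w (fun x => by rw [abs_of_nonneg (hw0 x)]; exact hw1 x) hwL
  have hm : MeasurableSet (Metric.closedBall (0 : 𝔼) R) := Metric.isClosed_closedBall.measurableSet
  have i1 : 3 / 4 ≤ ∫ y, w y ∂ν := by
    refine h₂'.trans ?_
    rw [← integral_indicator_one hm]
    refine integral_mono ((integrable_const (1 : ℝ)).indicator hm)
      ((integrable_const (1 : ℝ)).mono' hwL.continuous.aestronglyMeasurable
        (Eventually.of_forall fun y => by rw [Real.norm_of_nonneg (hw0 y)]; exact hw1 y)) fun y => ?_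
    by_cases hy : y ∈ Metric.closedBall (0 : 𝔼) R
    · rw [Set.indicator_of_mem hy]
      rw [mem_closedBall_zero_iff] at hy
      refine le_max_of_le_right (le_min le_rfl ?_)
      simp only [Pi.one_apply]
      linarith
    · rw [Set.indicator_of_notMem hy]
      exact hw0 y
  have i2 : ∫ x, w (T x) ∂μ ≤ 1 / 4 := by
    have hc : μ.real (Metric.closedBall (0 : 𝔼) R)ᶜ ≤ 1 / 4 := by
      rw [measureReal_compl hm, probReal_univ]
      linarith
    refine le_trans ?_ hc
    rw [← integral_indicator_one hm.compl]
    refine integral_mono ((integrable_const (1 : ℝ)).mono'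
      (hwL.continuous.comp hT.continuous).aestronglyMeasurable
        (Eventually.of_forall fun y => by rw [Real.norm_of_nonneg (hw0 _)]; exact hw1 _))
      ((integrable_const (1 : ℝ)).indicator hm.compl) fun x => ?_
    by_cases hx : x ∈ (Metric.closedBall (0 : 𝔼) R)ᶜ
    · rw [Set.indicator_of_mem hx]
      exact hw1 _
    · rw [Set.indicator_of_notMem hx]
      rw [Set.notMem_compl_iff, mem_closedBall_zero_iff] at hx
      refine max_le le_rfl (min_le_of_right_le ?_)
      have h3 := hT.dist_le_mul x 0
      rw [dist_eq_norm, dist_zero_right] at h3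
      have h5 := norm_le_norm_add_norm_sub (T x) (T 0)
      have h6 : (L : ℝ) * ‖x‖ ≤ L * R := mul_le_mul_of_nonneg_left hx L.coe_nonneg
      linarith
  have := (abs_le.1 hspec).2
  linarith

/-- **Caffarelli's contraction theorem**: a density which is more log-convex than a Gaussian is
transported to one which is more log-concave than the same Gaussian by the gradient of a convex
function with Hessian at most `1`. -/
theorem exists_transport {F G : 𝔼 → ℝ≥0∞} (hF : AEMeasurable F)
    (hG : AEMeasurable G) [IsProbabilityMeasure (volume.withDensity F)]
    [IsProbabilityMeasure (volume.withDensity G)] {β : ℝ} (hβ : 0 < β)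
    (hFb : LogSemiconvex β F) (hGb : LogSemiconcave β G) :
    ∃ φ T, IsSmoothConvexGrad 1 φ T ∧
      (volume.withDensity F).map T = volume.withDensity G := by
  set μ := volume.withDensity F with hμdef
  set ν := volume.withDensity G with hνdef
  set ε : ℕ → ℝ := fun n => 1 / ((n : ℝ) + 1) * (1 / 3) with hεdef
  have hε0 : ∀ n, 0 < ε n := fun n => by positivity
  have hε1 : ∀ n, ε n ≤ 1 / 3 := fun n => by
    have : 1 / ((n : ℝ) + 1) ≤ 1 := by
      rw [div_le_one (by positivity)]
      linarith [Nat.cast_nonneg (α := ℝ) n]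
    simp only [hεdef]
    linarith
  have hεlim : Tendsto ε atTop (𝓝 0) := by
    have := (tendsto_one_div_add_atTop_nhds_zero_nat (𝕜 := ℝ)).mul_const (1 / 3)
    rwa [zero_mul] at this
  choose φ T hφT hw using fun n => exists_approx_transport hF hG hβ hFb hGb (hε0 n)
  have hL : ∀ n, LipschitzWith 2 (T n) := fun n => by
    refine LipschitzWith.of_dist_le_mul fun x y => ?_
    rw [dist_eq_norm, dist_eq_norm]
    exact ((hφT n).mono (by linarith [hε1 n] : 1 + ε n ≤ 2)).norm_sub_le two_pos x y
  obtain ⟨R, hR⟩ := exists_bound_of_approx_transport μ ν 2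
  have hR' : ∀ n, ‖T n 0‖ ≤ R := fun n => hR (T n) (hL n) fun w h1 h2 =>
    (hw n w h1 h2).trans (hε1 n)
  obtain ⟨S, σ, hσ, hS⟩ := exists_subseq_tendsto_of_lipschitz hL hR'
  have hlim : Tendsto (fun n => 1 + ε (σ n)) atTop (𝓝 1) := by
    simpa using (hεlim.comp hσ.tendsto_atTop).const_add 1
  obtain ⟨ψ, hψ⟩ := exists_isSmoothConvexGrad_of_tendsto (fun n => hφT (σ n)) hlim hS
  have hSc : Continuous S := hψ.continuous one_pos
  refine ⟨ψ, S, hψ, ?_⟩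
  have : IsProbabilityMeasure (μ.map S) := Measure.isProbabilityMeasure_map hSc.aemeasurable
  refine measure_eq_of_forall_lipschitz fun w h1 h2 => ?_
  rw [integral_map hSc.aemeasurable h2.continuous.aestronglyMeasurable]
  have l1 : Tendsto (fun n => ∫ x, w (T (σ n) x) ∂μ) atTop (𝓝 (∫ x, w (S x) ∂μ)) := by
    refine tendsto_integral_of_dominated_convergence (fun _ => 1)
      (fun n => (h2.continuous.comp (hL _).continuous).aestronglyMeasurable) (integrable_const _)
      (fun n => Eventually.of_forall fun x => h1 _) (Eventually.of_forall fun x => ?_)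
    exact (h2.continuous.tendsto _).comp (hS x)
  have l2 : Tendsto (fun n => ∫ x, w (T (σ n) x) ∂μ) atTop (𝓝 (∫ y, w y ∂ν)) := by
    rw [tendsto_iff_dist_tendsto_zero]
    refine squeeze_zero (fun _ => dist_nonneg) (fun n => ?_) (hεlim.comp hσ.tendsto_atTop)
    rw [dist_comm, Real.dist_eq]
    exact hw (σ n) w h1 h2
  exact tendsto_nhds_unique l1 l2

end TransportLimit

section Jacobian

variable {k : ℕ}
local notation "𝔼" => EuclideanSpace ℝ (Fin k)

open Filter Topology

variable {φ : EuclideanSpace ℝ (Fin k) → ℝ}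
  {T : EuclideanSpace ℝ (Fin k) → EuclideanSpace ℝ (Fin k)}

theorem IsSmoothConvexGrad.lipschitzWith (h : IsSmoothConvexGrad 1 φ T) : LipschitzWith 1 T :=
  LipschitzWith.of_dist_le_mul fun x y => by
    rw [dist_eq_norm, dist_eq_norm]
    exact h.norm_sub_le one_pos x y

theorem IsSmoothConvexGrad.hasFDerivAt (h : IsSmoothConvexGrad 1 φ T) (x : 𝔼) :
    HasFDerivAt φ (innerSL ℝ (T x)) x := by
  rw [hasFDerivAt_iff_isLittleO_nhds_zero]
  have hO : (fun v : 𝔼 => φ (x + v) - φ x - innerSL ℝ (T x) v) =O[𝓝 0] fun v => ‖v‖ ^ 2 := by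
    refine Asymptotics.IsBigO.of_bound 1 (Eventually.of_forall fun v => ?_)
    have := h x v
    rw [innerSL_apply_apply, Real.norm_eq_abs, Real.norm_of_nonneg (by positivity), abs_le]
    constructor <;> nlinarith [this.1, this.2, sq_nonneg ‖v‖]
  refine hO.trans_isLittleO ?_
  exact Asymptotics.isLittleO_norm_pow_id one_lt_two

theorem IsSmoothConvexGrad.fderiv_symm (h : IsSmoothConvexGrad 1 φ T) {x : 𝔼} {A : 𝔼 →L[ℝ] 𝔼}
    (hA : HasFDerivAt T A x) (v w : 𝔼) : inner ℝ (A v) w = inner ℝ v (A w) := by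
  have h2 : HasFDerivAt (fun y => innerSL ℝ (T y)) ((innerSL ℝ).comp A) x :=
    (innerSL ℝ (E := 𝔼)).hasFDerivAt.comp x hA
  have := second_derivative_symmetric h.hasFDerivAt h2 v w
  simp only [ContinuousLinearMap.comp_apply, innerSL_apply_apply] at this
  rw [this, real_inner_comm]

theorem IsSmoothConvexGrad.fderiv_cocoercive (h : IsSmoothConvexGrad 1 φ T) {x : 𝔼}
    {A : 𝔼 →L[ℝ] 𝔼} (hA : HasFDerivAt T A x) (v : 𝔼) : ‖A v‖ ^ 2 ≤ inner ℝ (A v) v := by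
  have hl := hA.lim_real v
  refine le_of_tendsto_of_tendsto (hl.norm.pow 2) (hl.inner tendsto_const_nhds) ?_
  filter_upwards [eventually_gt_atTop 0] with c hc
  have := h.cocoercive one_pos (x + c⁻¹ • v) x
  rw [add_sub_cancel_left, one_mul, inner_smul_right] at this
  rw [norm_smul, mul_pow, Real.norm_of_nonneg hc.le, inner_smul_left]
  simp only [conj_trivial]
  calc c ^ 2 * _ ≤ c ^ 2 * (c⁻¹ * inner ℝ (T (x + c⁻¹ • v) - T x) v) :=
        mul_le_mul_of_nonneg_left this (by positivity)
    _ = _ := by field_simp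

theorem IsSmoothConvexGrad.fderiv_le (h : IsSmoothConvexGrad 1 φ T) {x : 𝔼}
    {A : 𝔼 →L[ℝ] 𝔼} (hA : HasFDerivAt T A x) (v : 𝔼) : inner ℝ (A v) v ≤ ‖v‖ ^ 2 := by
  have h1 := h.fderiv_cocoercive hA v
  have h2 := real_inner_le_norm (A v) v
  nlinarith [sq_nonneg (‖A v‖ - ‖v‖)]

theorem ContinuousLinearMap.eq_zero_of_det_ne_zero {A : 𝔼 →L[ℝ] 𝔼} (hA : A.det ≠ 0) {v : 𝔼}
    (hv : A v = 0) : v = 0 := by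
  by_contra hne
  have : IsUnit (LinearMap.det (A : 𝔼 →ₗ[ℝ] 𝔼)) := isUnit_iff_ne_zero.2 hA
  have hinj := (LinearMap.equivOfIsUnitDet this).injective
  exact hne (hinj (by simpa using! hv))

theorem IsSmoothConvexGrad.fderiv_pos (h : IsSmoothConvexGrad 1 φ T) {x : 𝔼}
    {A : 𝔼 →L[ℝ] 𝔼} (hA : HasFDerivAt T A x) (hdet : A.det ≠ 0) {v : 𝔼} (hv : v ≠ 0) :
    0 < inner ℝ (A v) v := by
  refine lt_of_lt_of_le ?_ (h.fderiv_cocoercive hA v)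
  have : A v ≠ 0 := fun h0 => hv (ContinuousLinearMap.eq_zero_of_det_ne_zero hdet h0)
  positivity

theorem IsSmoothConvexGrad.eq_of_apply_eq (h : IsSmoothConvexGrad 1 φ T) {x y : 𝔼}
    {A : 𝔼 →L[ℝ] 𝔼} (hA : HasFDerivAt T A x) (hdet : A.det ≠ 0) (hxy : T x = T y) : x = y := by
  have hconst : ∀ c : ℝ, 1 ≤ c → T (x + c⁻¹ • (y - x)) = T x := by
    intro c hc
    have hc0 : 0 < c := by linarith
    have hcm : 0 ≤ c - 1 := by linarith
    set z := x + c⁻¹ • (y - x) with hz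
    have hzx : z - x = c⁻¹ • (y - x) := by rw [hz, add_sub_cancel_left]
    have hzy : z - y = -((1 - c⁻¹) • (y - x)) := by rw [hz]; module
    have h1 := h.cocoercive one_pos z x
    have h2 := h.cocoercive one_pos z y
    rw [← hxy] at h2
    rw [hzx, inner_smul_right, one_mul] at h1
    rw [hzy, inner_neg_right, inner_smul_right, one_mul] at h2
    have hci : 0 < c⁻¹ := inv_pos.2 hc0
    have hci1 : 0 ≤ 1 - c⁻¹ := by
      have := inv_le_one_of_one_le₀ hc
      linarith
    have h3 : ‖T z - T x‖ ^ 2 ≤ 0 := by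
      rcases le_or_gt (inner ℝ (T z - T x) (y - x)) 0 with hle | hgt
      · nlinarith
      · nlinarith
    have : ‖T z - T x‖ = 0 := by nlinarith [norm_nonneg (T z - T x)]
    exact sub_eq_zero.1 (norm_eq_zero.1 this)
  have hl := hA.lim_real (y - x)
  have h0 : A (y - x) = 0 := by
    refine tendsto_nhds_unique hl (tendsto_const_nhds.congr' ?_)
    filter_upwards [eventually_ge_atTop 1] with c hc
    rw [hconst c hc, sub_self, smul_zero]
  exact (sub_eq_zero.1 (ContinuousLinearMap.eq_zero_of_det_ne_zero hdet h0)).symm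

/-- The Monge–Ampère equation for the transport map. -/
theorem exists_monge_ampere {F G : 𝔼 → ℝ≥0∞} (hF : AEMeasurable F) (hF0 : ∀ x, F x ≠ 0)
    (hG : AEMeasurable G) (hT : IsSmoothConvexGrad 1 φ T)
    (hmap : (volume.withDensity F).map T = volume.withDensity G) :
    ∃ D : Set 𝔼, MeasurableSet D ∧ volume Dᶜ = 0 ∧ (∀ x ∈ D,
      HasFDerivAt T (fderiv ℝ T x) x ∧ (fderiv ℝ T x).det ≠ 0 ∧
      F x = ENNReal.ofReal |(fderiv ℝ T x).det| * G (T x)) ∧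
      ((∀ x, G x ≠ 0) → volume (T '' D)ᶜ = 0) := by
  set μ := volume.withDensity F with hμ
  set ν := volume.withDensity G with hν
  have hTc : Continuous T := hT.continuous one_pos
  have hvμ : (volume : Measure 𝔼) ≪ μ :=
    withDensity_absolutelyContinuous' hF (Eventually.of_forall hF0)
  have hμv : μ ≪ volume := withDensity_absolutelyContinuous _ _
  have hνv : ν ≪ volume := withDensity_absolutelyContinuous _ _
  have hqmp : Measure.QuasiMeasurePreserving T volume volume := by
    refine ⟨hTc.measurable, ?_⟩
    have : (volume : Measure 𝔼).map T ≪ μ.map T := hvμ.map hTc.measurable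
    exact this.trans (hmap ▸ hνv)
  set D : Set 𝔼 := {x | DifferentiableAt ℝ T x} ∩ {x | (fderiv ℝ T x).det ≠ 0} with hD
  have hdm : Measurable fun x => (fderiv ℝ T x).det :=
    ContinuousLinearMap.continuous_det.measurable.comp (measurable_fderiv ℝ T)
  have hDm : MeasurableSet D :=
    (measurableSet_of_differentiableAt ℝ T).inter
      (hdm (measurableSet_singleton (0 : ℝ)).compl)
  have hder : ∀ x ∈ D, HasFDerivAt T (fderiv ℝ T x) x := fun x hx => hx.1.hasFDerivAt
  have hD0 : volume Dᶜ = 0 := by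
    have h1 : volume {x | DifferentiableAt ℝ T x}ᶜ = 0 :=
      (hT.lipschitzWith.ae_differentiableAt : ∀ᵐ x ∂volume, DifferentiableAt ℝ T x)
    set N : Set 𝔼 := {x | DifferentiableAt ℝ T x} ∩ {x | (fderiv ℝ T x).det = 0} with hN
    have h2 : volume (T '' N) = 0 :=
      addHaar_image_eq_zero_of_det_fderivWithin_eq_zero volume (f' := fun x => fderiv ℝ T x)
        (fun x hx => hx.1.hasFDerivAt.hasFDerivWithinAt) fun x hx => hx.2
    have h3 : volume N = 0 :=
      measure_mono_null (Set.subset_preimage_image T N) (hqmp.preimage_null h2)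
    refine measure_mono_null (fun x hx => ?_) (measure_union_null h1 h3)
    by_cases hxd : DifferentiableAt ℝ T x
    · refine Or.inr ⟨hxd, ?_⟩
      by_contra hne
      exact hx ⟨hxd, hne⟩
    · exact Or.inl hxd
  have hinj : Set.InjOn T D := fun x hx y _ hxy => hT.eq_of_apply_eq (hder x hx) hx.2 hxy
  have hset : ∀ s, MeasurableSet s → s ⊆ D →
      ∫⁻ x in s, F x = ∫⁻ x in s, ENNReal.ofReal |(fderiv ℝ T x).det| * G (T x) := by
    intro s hs hsD
    have hd : ∀ x ∈ s, HasFDerivWithinAt T (fderiv ℝ T x) s x := fun x hx =>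
      (hder x (hsD hx)).hasFDerivWithinAt
    have him := measurable_image_of_fderivWithin hs hd (hinj.mono hsD)
    rw [← lintegral_image_eq_lintegral_abs_det_fderiv_mul volume hs hd (hinj.mono hsD),
      ← withDensity_apply _ hs, ← withDensity_apply _ him, ← hμ, ← hν, ← hmap,
      Measure.map_apply hTc.measurable him]
    congr 1
    refine (Set.subset_preimage_image T s).antisymm ?_
    rintro x ⟨y, hy, hyx⟩
    rwa [← hT.eq_of_apply_eq (hder y (hsD hy)) (hsD hy).2 hyx]
  have hae : F =ᵐ[volume] fun x => ENNReal.ofReal |(fderiv ℝ T x).det| * G (T x) := by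
    have hGT : AEMeasurable (fun x => G (T x)) := hG.comp_quasiMeasurePreserving hqmp
    have hm : AEMeasurable fun x => ENNReal.ofReal |(fderiv ℝ T x).det| * G (T x) :=
      (hdm.norm.ennreal_ofReal.aemeasurable (μ := volume)).mul hGT
    refine ae_eq_of_forall_setLIntegral_eq_of_sigmaFinite₀ hF hm fun s hs _ => ?_
    have hr : (volume : Measure 𝔼).restrict s = volume.restrict (s ∩ D) := by
      refine Measure.restrict_congr_set ?_
      filter_upwards [(hD0 : ∀ᵐ x ∂volume, x ∈ D)] with x hx
      exact propext ⟨fun h => ⟨h, hx⟩, fun h => h.1⟩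
    rw [hr]
    exact hset _ (hs.inter hDm) Set.inter_subset_right
  obtain ⟨t, hsub, htm, ht0⟩ := exists_measurable_superset_of_null (ae_iff.1 hae)
  have hcompl : volume (D ∩ tᶜ)ᶜ = 0 := by
    rw [Set.compl_inter, compl_compl]
    exact measure_union_null hD0 ht0
  refine ⟨D ∩ tᶜ, hDm.inter htm.compl, hcompl, fun x hx => ⟨hder x hx.1, hx.1.2, ?_⟩,
    fun hG0 => ?_⟩
  · by_contra hne
    exact hx.2 (hsub hne)
  · have hvν : (volume : Measure 𝔼) ≪ ν :=
      withDensity_absolutelyContinuous' hG (Eventually.of_forall hG0)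
    have him : MeasurableSet (T '' (D ∩ tᶜ)) :=
      measurable_image_of_fderivWithin (hDm.inter htm.compl)
        (fun x hx => (hder x hx.1).hasFDerivWithinAt) (hinj.mono Set.inter_subset_left)
    refine hvν ?_
    rw [← hmap, Measure.map_apply hTc.measurable him.compl, Set.preimage_compl]
    exact hμv (measure_mono_null (Set.compl_subset_compl.2 (Set.subset_preimage_image _ _)) hcompl)

end Jacobian

section LinearAlgebra

variable {k : ℕ}

theorem Matrix.PosDef.exists_transpose_mul_self {M : Matrix (Fin k) (Fin k) ℝ} (hM : M.PosDef) :
    ∃ L : Matrix (Fin k) (Fin k) ℝ, L.det ≠ 0 ∧ Lᵀ * L = M := by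
  open scoped MatrixOrder in
  obtain ⟨L, hL⟩ := CStarAlgebra.nonneg_iff_eq_star_mul_self.mp hM.posSemidef.nonneg
  rw [star_eq_conjTranspose, conjTranspose_eq_transpose_of_trivial] at hL
  refine ⟨L, fun h0 => hM.det_pos.ne' ?_, hL.symm⟩
  rw [hL, det_mul, h0, mul_zero]

theorem Matrix.PosDef.mulVec_dotProduct_pos {M : Matrix (Fin k) (Fin k) ℝ} (hM : M.PosDef)
    {x : Fin k → ℝ} (hx : x ≠ 0) : 0 < M *ᵥ x ⬝ᵥ x := by
  have := hM.dotProduct_mulVec_pos hx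
  rwa [star_trivial, dotProduct_comm] at this

theorem Matrix.PosSemidef.mulVec_dotProduct_nonneg {M : Matrix (Fin k) (Fin k) ℝ}
    (hM : M.PosSemidef) (x : Fin k → ℝ) : 0 ≤ M *ᵥ x ⬝ᵥ x := by
  have := hM.dotProduct_mulVec_nonneg x
  rwa [star_trivial, dotProduct_comm] at this

theorem Matrix.mulVec_dotProduct_le {A B : Matrix (Fin k) (Fin k) ℝ} (h : (B - A).PosSemidef)
    (x : Fin k → ℝ) : A *ᵥ x ⬝ᵥ x ≤ B *ᵥ x ⬝ᵥ x := by
  have := h.mulVec_dotProduct_nonneg x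
  rw [sub_mulVec, sub_dotProduct] at this
  linarith

theorem Matrix.mulVec_dotProduct_combo (M : Matrix (Fin k) (Fin k) ℝ) (x y : Fin k → ℝ) {t s : ℝ}
    (hts : t + s = 1) : M *ᵥ (t • x + s • y) ⬝ᵥ (t • x + s • y) =
      t * (M *ᵥ x ⬝ᵥ x) + s * (M *ᵥ y ⬝ᵥ y) - t * s * (M *ᵥ (x - y) ⬝ᵥ (x - y)) := by
  simp only [mulVec_add, mulVec_sub, mulVec_smul, add_dotProduct, dotProduct_add, sub_dotProduct,
    dotProduct_sub, smul_dotProduct, dotProduct_smul, smul_eq_mul]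
  obtain rfl : s = 1 - t := by linarith
  ring

theorem Matrix.mulVec_dotProduct_mulVec (L : Matrix (Fin k) (Fin k) ℝ) (x y : Fin k → ℝ) :
    L *ᵥ x ⬝ᵥ L *ᵥ y = (Lᵀ * L) *ᵥ x ⬝ᵥ y := by
  rw [dotProduct_mulVec, ← mulVec_transpose, mulVec_mulVec]

theorem Matrix.PosDef.inv_sub_inv_posSemidef {A B : Matrix (Fin k) (Fin k) ℝ} (hA : A.PosDef)
    (hB : B.PosDef) (h : (B - A).PosSemidef) : (A⁻¹ - B⁻¹).PosSemidef := by
  refine PosSemidef.of_dotProduct_mulVec_nonneg (hA.inv.isHermitian.sub hB.inv.isHermitian)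
    fun v => ?_
  rw [star_trivial, dotProduct_comm, sub_mulVec, sub_dotProduct]
  have hAA : A * A⁻¹ = 1 := mul_nonsing_inv _ hA.det_pos.ne'.isUnit
  have hBB : B * B⁻¹ = 1 := mul_nonsing_inv _ hB.det_pos.ne'.isUnit
  have h1 := hA.posSemidef.mulVec_dotProduct_nonneg (A⁻¹ *ᵥ v - B⁻¹ *ᵥ v)
  have h2 := mulVec_dotProduct_le h (B⁻¹ *ᵥ v)
  have hAT : ∀ x y, A *ᵥ x ⬝ᵥ y = x ⬝ᵥ A *ᵥ y := fun x y => by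
    have : Aᵀ = A := by
      rw [← conjTranspose_eq_transpose_of_trivial]
      exact hA.isHermitian
    rw [dotProduct_mulVec, ← mulVec_transpose, this]
  simp only [mulVec_sub, sub_dotProduct, dotProduct_sub, mulVec_mulVec, hAA, hBB, one_mulVec] at h1 h2
  have h3 : (A * B⁻¹) *ᵥ v ⬝ᵥ A⁻¹ *ᵥ v = B⁻¹ *ᵥ v ⬝ᵥ v := by
    rw [← mulVec_mulVec, hAT, mulVec_mulVec, hAA, one_mulVec]
  rw [h3, dotProduct_comm v (A⁻¹ *ᵥ v), dotProduct_comm v (B⁻¹ *ᵥ v)] at h1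
  rw [dotProduct_comm v (B⁻¹ *ᵥ v)] at h2
  linarith

theorem measurableEmbedding_mulVec {L : Matrix (Fin k) (Fin k) ℝ} (hL : L.det ≠ 0) :
    MeasurableEmbedding fun x : Fin k → ℝ => L *ᵥ x := by
  refine (Continuous.measurableEmbedding (by fun_prop) ?_)
  exact mulVec_injective_of_isUnit ((isUnit_iff_isUnit_det _).2 hL.isUnit)

theorem map_mulVec_volume {L : Matrix (Fin k) (Fin k) ℝ} (hL : L.det ≠ 0) :
    (volume : Measure (Fin k → ℝ)).map (fun x => L *ᵥ x) =
      ENNReal.ofReal |L.det|⁻¹ • (volume : Measure (Fin k → ℝ)) := by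
  rw [← abs_inv]
  exact Real.map_matrix_volume_pi_eq_smul_volume_pi hL

theorem lintegral_comp_mulVec {L : Matrix (Fin k) (Fin k) ℝ} (hL : L.det ≠ 0)
    (f : (Fin k → ℝ) → ℝ≥0∞) :
    ∫⁻ x, f (L *ᵥ x) = ENNReal.ofReal |L.det|⁻¹ * ∫⁻ x, f x := by
  rw [← (measurableEmbedding_mulVec hL).lintegral_map (f := f) (μ := volume), map_mulVec_volume hL,
    lintegral_smul_measure, smul_eq_mul]

theorem quasiMeasurePreserving_mulVec {L : Matrix (Fin k) (Fin k) ℝ} (hL : L.det ≠ 0) :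
    Measure.QuasiMeasurePreserving (fun x : Fin k → ℝ => L *ᵥ x) volume volume := by
  refine ⟨(measurableEmbedding_mulVec hL).measurable, ?_⟩
  rw [map_mulVec_volume hL]
  exact Measure.smul_absolutelyContinuous

theorem dotProduct_self_eq_norm_toLp_sq (x : Fin k → ℝ) : x ⬝ᵥ x = ‖WithLp.toLp 2 x‖ ^ 2 := by
  rw [EuclideanSpace.real_norm_sq_eq]
  simp [dotProduct, sq]

theorem lintegral_exp_neg_pi_dotProduct :
    ∫⁻ x : Fin k → ℝ, ENNReal.ofReal (Real.exp (-Real.pi * (x ⬝ᵥ x))) = 1 := by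
  have h1 : ∫⁻ x : EuclideanSpace ℝ (Fin k), ENNReal.ofReal (Real.exp (-Real.pi * ‖x‖ ^ 2)) = 1 := by
    have hi := GaussianFourier.integral_rexp_neg_mul_sq_norm (V := EuclideanSpace ℝ (Fin k))
      Real.pi_pos
    rw [div_self Real.pi_pos.ne', Real.one_rpow] at hi
    have hintg : Integrable fun x : EuclideanSpace ℝ (Fin k) => Real.exp (-Real.pi * ‖x‖ ^ 2) := by
      by_contra hn
      rw [integral_undef hn] at hi
      exact zero_ne_one hi
    rw [← ofReal_integral_eq_lintegral_ofReal hintg (Filter.Eventually.of_forall fun x => by positivity),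
      hi, ENNReal.ofReal_one]
  rw [← h1, ← (PiLp.volume_preserving_toLp (Fin k)).lintegral_comp (by fun_prop)]
  simp_rw [dotProduct_self_eq_norm_toLp_sq]

theorem lintegral_gaussFn {B : Matrix (Fin k) (Fin k) ℝ} (hB : B.PosDef) :
    ∫⁻ x, ENNReal.ofReal (gaussFn B x) = ENNReal.ofReal (√B.det)⁻¹ := by
  obtain ⟨L, hL, rfl⟩ := hB.exists_transpose_mul_self
  have h1 : (Lᵀ * L).det = L.det ^ 2 := by rw [det_mul, det_transpose, sq]
  rw [h1, Real.sqrt_sq_eq_abs]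
  simp_rw [gaussFn, ← mulVec_dotProduct_mulVec]
  rw [lintegral_comp_mulVec hL fun y => ENNReal.ofReal (Real.exp (-Real.pi * (y ⬝ᵥ y))),
    lintegral_exp_neg_pi_dotProduct, mul_one]

theorem continuous_gaussFn (B : Matrix (Fin k) (Fin k) ℝ) : Continuous (gaussFn B) := by
  unfold gaussFn
  simp only [dotProduct, mulVec]
  fun_prop

end LinearAlgebra

section QuadTransport

variable {k : ℕ}
local notation "𝔼" => EuclideanSpace ℝ (Fin k)

/-- `f · g_M⁻¹` is log-convex, where `g_M` is the centered Gaussian function. -/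
def QuadLogConvex (M : Matrix (Fin k) (Fin k) ℝ) (f : (Fin k → ℝ) → ℝ≥0∞) : Prop :=
  ∀ x y, ∀ t s : ℝ, 0 < t → 0 < s → t + s = 1 → f (t • x + s • y) ≤
    f x ^ t * f y ^ s * eexp (Real.pi * (t * s) * (M *ᵥ (x - y) ⬝ᵥ (x - y)))

/-- `f · g_M⁻¹` is log-concave, where `g_M` is the centered Gaussian function. -/
def QuadLogConcave (M : Matrix (Fin k) (Fin k) ℝ) (f : (Fin k → ℝ) → ℝ≥0∞) : Prop :=
  ∀ x y, ∀ t s : ℝ, 0 < t → 0 < s → t + s = 1 →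
    f x ^ t * f y ^ s * eexp (Real.pi * (t * s) * (M *ᵥ (x - y) ⬝ᵥ (x - y))) ≤ f (t • x + s • y)

theorem quasiMeasurePreserving_toLp_mulVec {L : Matrix (Fin k) (Fin k) ℝ} (hL : L.det ≠ 0) :
    Measure.QuasiMeasurePreserving (fun x : Fin k → ℝ => WithLp.toLp 2 (L *ᵥ x))
      volume (volume : Measure 𝔼) :=
  (PiLp.volume_preserving_toLp (Fin k)).quasiMeasurePreserving.comp
    (quasiMeasurePreserving_mulVec hL)

theorem quasiMeasurePreserving_mulVec_ofLp {L : Matrix (Fin k) (Fin k) ℝ} (hL : L.det ≠ 0) :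
    Measure.QuasiMeasurePreserving (fun z : 𝔼 => L *ᵥ z.ofLp) volume volume :=
  (quasiMeasurePreserving_mulVec hL).comp
    (PiLp.volume_preserving_ofLp (Fin k)).quasiMeasurePreserving

theorem isProbabilityMeasure_withDensity_mulVec {L : Matrix (Fin k) (Fin k) ℝ} (hL : L.det ≠ 0)
    {f : (Fin k → ℝ) → ℝ≥0∞} (hf : AEMeasurable f) (hf1 : ∫⁻ x, f x = 1) :
    IsProbabilityMeasure ((volume : Measure 𝔼).withDensity fun z =>
      ENNReal.ofReal |L.det| * f (L *ᵥ z.ofLp)) := by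
  constructor
  have hm : AEMeasurable fun y => f (L *ᵥ y) :=
    hf.comp_quasiMeasurePreserving (quasiMeasurePreserving_mulVec hL)
  have hm' : AEMeasurable fun z : 𝔼 => f (L *ᵥ z.ofLp) :=
    hf.comp_quasiMeasurePreserving (quasiMeasurePreserving_mulVec_ofLp hL)
  rw [withDensity_apply _ MeasurableSet.univ, Measure.restrict_univ, lintegral_const_mul'' _ hm']
  have h1 : ∫⁻ z : 𝔼, f (L *ᵥ z.ofLp) = ∫⁻ y, f (L *ᵥ y) := by
    have hp := PiLp.volume_preserving_ofLp (Fin k)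
    rw [← hp.map_eq, lintegral_map' (hp.map_eq ▸ hm) hp.aemeasurable]
  rw [h1, lintegral_comp_mulVec hL, hf1, mul_one, ← ENNReal.ofReal_mul (abs_nonneg _),
    mul_inv_cancel₀ (abs_ne_zero.2 hL), ENNReal.ofReal_one]

theorem isHermitian_of_mulVec_dotProduct {N : Matrix (Fin k) (Fin k) ℝ}
    (h : ∀ v w, N *ᵥ v ⬝ᵥ w = v ⬝ᵥ N *ᵥ w) : N.IsHermitian := by
  ext i j
  have := h (Pi.single i 1) (Pi.single j 1)
  simpa using this

/-- The matrix of a linear endomorphism of Euclidean space. -/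
def euclideanMatrix (A : 𝔼 →L[ℝ] 𝔼) : Matrix (Fin k) (Fin k) ℝ :=
  LinearMap.toMatrix' ((WithLp.linearEquiv 2 ℝ (Fin k → ℝ)).toLinearMap ∘ₗ
    (A : 𝔼 →ₗ[ℝ] 𝔼) ∘ₗ (WithLp.linearEquiv 2 ℝ (Fin k → ℝ)).symm.toLinearMap)

theorem euclideanMatrix_mulVec (A : 𝔼 →L[ℝ] 𝔼) (v : Fin k → ℝ) :
    euclideanMatrix A *ᵥ v = (A (WithLp.toLp 2 v)).ofLp := by
  rw [euclideanMatrix, LinearMap.toMatrix'_mulVec]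
  rfl

theorem det_euclideanMatrix (A : 𝔼 →L[ℝ] 𝔼) : (euclideanMatrix A).det = A.det := by
  rw [euclideanMatrix, LinearMap.det_toMatrix']
  exact LinearMap.det_conj (A : 𝔼 →ₗ[ℝ] 𝔼) (WithLp.linearEquiv 2 ℝ (Fin k → ℝ))

theorem dotProduct_eq_inner (v w : Fin k → ℝ) :
    v ⬝ᵥ w = inner ℝ (WithLp.toLp 2 v) (WithLp.toLp 2 w) := by
  rw [EuclideanSpace.inner_toLp_toLp, star_trivial, dotProduct_comm]

/-- The matrix `A` as a continuous linear map. -/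
def Matrix.mulVecCLM {l m : ℕ} (A : Matrix (Fin l) (Fin m) ℝ) :
    (Fin m → ℝ) →L[ℝ] (Fin l → ℝ) :=
  LinearMap.toContinuousLinearMap A.mulVecLin

theorem Matrix.mulVecCLM_apply {l m : ℕ} (A : Matrix (Fin l) (Fin m) ℝ) (v : Fin m → ℝ) :
    A.mulVecCLM v = A *ᵥ v := rfl

theorem Matrix.det_mulVecCLM (A : Matrix (Fin k) (Fin k) ℝ) : A.mulVecCLM.det = A.det := by
  show LinearMap.det (A.mulVecLin) = A.det
  rw [← LinearMap.det_toLin']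
  rfl

variable {φ : EuclideanSpace ℝ (Fin k) → ℝ}
  {T : EuclideanSpace ℝ (Fin k) → EuclideanSpace ℝ (Fin k)}

theorem IsSmoothConvexGrad.posDef_euclideanMatrix (h : IsSmoothConvexGrad 1 φ T) {x : 𝔼}
    {A : 𝔼 →L[ℝ] 𝔼} (hA : HasFDerivAt T A x) (hdet : A.det ≠ 0) : (euclideanMatrix A).PosDef := by
  refine PosDef.of_dotProduct_mulVec_pos (isHermitian_of_mulVec_dotProduct fun v w => ?_)
    fun v hv => ?_
  · rw [euclideanMatrix_mulVec, euclideanMatrix_mulVec, dotProduct_eq_inner, dotProduct_eq_inner]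
    exact h.fderiv_symm hA _ _
  · rw [star_trivial, euclideanMatrix_mulVec, dotProduct_comm, dotProduct_eq_inner]
    exact h.fderiv_pos hA hdet fun h0 => hv (by simpa using h0)

theorem IsSmoothConvexGrad.posSemidef_one_sub_euclideanMatrix (h : IsSmoothConvexGrad 1 φ T)
    {x : 𝔼} {A : 𝔼 →L[ℝ] 𝔼} (hA : HasFDerivAt T A x) :
    (1 - euclideanMatrix A).PosSemidef := by
  refine PosSemidef.of_dotProduct_mulVec_nonneg (isHermitian_one.sub
    (isHermitian_of_mulVec_dotProduct fun v w => ?_)) fun v => ?_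
  · rw [euclideanMatrix_mulVec, euclideanMatrix_mulVec, dotProduct_eq_inner, dotProduct_eq_inner]
    exact h.fderiv_symm hA _ _
  · rw [star_trivial, sub_mulVec, one_mulVec, euclideanMatrix_mulVec, dotProduct_sub,
      dotProduct_comm v (A (WithLp.toLp 2 v)).ofLp, dotProduct_self_eq_norm_toLp_sq,
      dotProduct_eq_inner, sub_nonneg]
    exact h.fderiv_le hA _

/-- Caffarelli's contraction theorem in linear coordinates adapted to a positive definite
matrix. -/
theorem exists_quad_transport {M : Matrix (Fin k) (Fin k) ℝ} (hM : M.PosDef)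
    {f g : (Fin k → ℝ) → ℝ≥0∞} (hf : AEMeasurable f) (hf0 : ∀ x, f x ≠ 0)
    (hf1 : ∫⁻ x, f x = 1) (hfc : QuadLogConvex M f) (hg : AEMeasurable g)
    (hg1 : ∫⁻ x, g x = 1) (hgc : QuadLogConcave M⁻¹ g) :
    ∃ (T : (Fin k → ℝ) → Fin k → ℝ) (T' : (Fin k → ℝ) → Matrix (Fin k) (Fin k) ℝ)
      (D : Set (Fin k → ℝ)), Continuous T ∧ (∀ x y, 0 ≤ (T x - T y) ⬝ᵥ (x - y)) ∧
      MeasurableSet D ∧ volume Dᶜ = 0 ∧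
      (∀ x ∈ D, HasFDerivAt T (T' x).mulVecCLM x ∧ (T' x).PosDef ∧ (M - T' x).PosSemidef ∧
        f x = ENNReal.ofReal (T' x).det * g (T x)) ∧
      (∀ x ∈ D, ∀ y, x ≠ y → 0 < (T x - T y) ⬝ᵥ (x - y)) ∧
      ((∀ x, g x ≠ 0) → volume (T '' D)ᶜ = 0) := by
  obtain ⟨L, hL, rfl⟩ := hM.exists_transpose_mul_self
  have hLu : IsUnit L.det := hL.isUnit
  have hLi : L⁻¹.det ≠ 0 := by
    rw [det_nonsing_inv, Ring.inverse_eq_inv']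
    exact inv_ne_zero hL
  have hLt : Lᵀ.det ≠ 0 := by rwa [det_transpose]
  have hLti : Lᵀ⁻¹.det ≠ 0 := by
    rw [det_nonsing_inv, Ring.inverse_eq_inv']
    exact inv_ne_zero hLt
  have hLL : L * L⁻¹ = 1 := mul_nonsing_inv _ hLu
  have hLL' : L⁻¹ * L = 1 := nonsing_inv_mul _ hLu
  have hinj : Function.Injective L.mulVec :=
    mulVec_injective_of_isUnit ((isUnit_iff_isUnit_det _).2 hLu)
  set F : 𝔼 → ℝ≥0∞ := fun z => ENNReal.ofReal |L⁻¹.det| * f (L⁻¹ *ᵥ z.ofLp) with hFdef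
  set G : 𝔼 → ℝ≥0∞ := fun z => ENNReal.ofReal |Lᵀ.det| * g (Lᵀ *ᵥ z.ofLp) with hGdef
  have hFm : AEMeasurable F :=
    (hf.comp_quasiMeasurePreserving (quasiMeasurePreserving_mulVec_ofLp hLi)).const_mul _
  have hGm : AEMeasurable G :=
    (hg.comp_quasiMeasurePreserving (quasiMeasurePreserving_mulVec_ofLp hLt)).const_mul _
  have pF : IsProbabilityMeasure ((volume : Measure 𝔼).withDensity F) :=
    isProbabilityMeasure_withDensity_mulVec hLi hf hf1
  have pG : IsProbabilityMeasure ((volume : Measure 𝔼).withDensity G) :=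
    isProbabilityMeasure_withDensity_mulVec hLt hg hg1
  have hF0 : ∀ z, F z ≠ 0 := fun z =>
    mul_ne_zero (ENNReal.ofReal_pos.2 (abs_pos.2 hLi)).ne' (hf0 _)
  have hFc : LogSemiconvex (2 * Real.pi) F := by
    refine LogSemiconvex.const_mul (fun x y t s ht hs hts => ?_) _
    have h := hfc (L⁻¹ *ᵥ x.ofLp) (L⁻¹ *ᵥ y.ofLp) t s ht hs hts
    have h1 : L⁻¹ *ᵥ (t • x + s • y).ofLp = t • L⁻¹ *ᵥ x.ofLp + s • L⁻¹ *ᵥ y.ofLp := by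
      rw [WithLp.ofLp_add, WithLp.ofLp_smul, WithLp.ofLp_smul, mulVec_add, mulVec_smul, mulVec_smul]
    have h2 : (Lᵀ * L) *ᵥ (L⁻¹ *ᵥ x.ofLp - L⁻¹ *ᵥ y.ofLp) ⬝ᵥ (L⁻¹ *ᵥ x.ofLp - L⁻¹ *ᵥ y.ofLp) =
        ‖x - y‖ ^ 2 := by
      rw [← mulVec_sub, ← mulVec_dotProduct_mulVec, mulVec_mulVec, hLL, one_mulVec,
        ← WithLp.ofLp_sub, dotProduct_self_eq_norm_toLp_sq]
    rw [h1]
    rwa [h2, ← mul_div_cancel_left₀ Real.pi (two_ne_zero (α := ℝ))] at h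
  have hGc : LogSemiconcave (2 * Real.pi) G := by
    refine LogSemiconcave.const_mul (fun x y t s ht hs hts => ?_) _
    have h := hgc (Lᵀ *ᵥ x.ofLp) (Lᵀ *ᵥ y.ofLp) t s ht hs hts
    have h1 : Lᵀ *ᵥ (t • x + s • y).ofLp = t • Lᵀ *ᵥ x.ofLp + s • Lᵀ *ᵥ y.ofLp := by
      rw [WithLp.ofLp_add, WithLp.ofLp_smul, WithLp.ofLp_smul, mulVec_add, mulVec_smul, mulVec_smul]
    have h2 : (Lᵀ * L)⁻¹ *ᵥ (Lᵀ *ᵥ x.ofLp - Lᵀ *ᵥ y.ofLp) ⬝ᵥ (Lᵀ *ᵥ x.ofLp - Lᵀ *ᵥ y.ofLp) =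
        ‖x - y‖ ^ 2 := by
      rw [← mulVec_sub, mulVec_mulVec, Matrix.mul_inv_rev, Matrix.mul_assoc,
        nonsing_inv_mul _ hLt.isUnit, Matrix.mul_one, dotProduct_mulVec, vecMul_transpose,
        mulVec_mulVec, hLL, one_mulVec, ← WithLp.ofLp_sub, dotProduct_self_eq_norm_toLp_sq]
    rw [h1]
    rwa [h2, ← mul_div_cancel_left₀ Real.pi (two_ne_zero (α := ℝ))] at h
  obtain ⟨φ, T, hT, hmap⟩ := exists_transport hFm hGm (by positivity) hFc hGc
  obtain ⟨D, hDm, hD0, hD, hDi⟩ := exists_monge_ampere hFm hF0 hGm hT hmap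
  set Λ : (Fin k → ℝ) → 𝔼 := fun x => WithLp.toLp 2 (L *ᵥ x) with hΛ
  have hq := quasiMeasurePreserving_toLp_mulVec hL
  have hinner : ∀ x y, (Lᵀ *ᵥ (T (Λ x)).ofLp - Lᵀ *ᵥ (T (Λ y)).ofLp) ⬝ᵥ (x - y) =
      inner ℝ (T (Λ x) - T (Λ y)) (Λ x - Λ y) := fun x y => by
    rw [← mulVec_sub, mulVec_transpose, ← dotProduct_mulVec, mulVec_sub, dotProduct_eq_inner]
    rfl
  have hΛc : Continuous Λ :=
    (PiLp.continuous_toLp 2 (fun _ : Fin k => ℝ)).comp (Continuous.matrix_mulVec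
      continuous_const continuous_id)
  refine ⟨fun x => Lᵀ *ᵥ (T (Λ x)).ofLp,
    fun x => Lᵀ * euclideanMatrix (fderiv ℝ T (Λ x)) * L, Λ ⁻¹' D, ?_, fun x y => ?_,
    hq.measurable hDm, ?_, ?_, ?_, ?_⟩
  · exact Continuous.matrix_mulVec continuous_const
      ((PiLp.continuous_ofLp 2 (fun _ : Fin k => ℝ)).comp ((hT.continuous one_pos).comp hΛc))
  · have h1 := hT.cocoercive one_pos (Λ x) (Λ y)
    rw [hinner]
    have h5 : 0 ≤ ‖T (Λ x) - T (Λ y)‖ ^ 2 := by positivity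
    linarith
  · rw [← Set.preimage_compl]
    exact hq.preimage_null hD0
  · intro x hx
    obtain ⟨hd, hdet, heq⟩ := hD (Λ x) hx
    have hpos := hT.posDef_euclideanMatrix hd hdet
    have hle := hT.posSemidef_one_sub_euclideanMatrix hd
    refine ⟨?_, ?_, ?_, ?_⟩
    · have hΛd : HasFDerivAt Λ ((PiLp.continuousLinearEquiv 2 ℝ
          (fun _ : Fin k => ℝ)).symm.toContinuousLinearMap.comp L.mulVecCLM) x :=
        (PiLp.continuousLinearEquiv 2 ℝ (fun _ : Fin k => ℝ)).symm.hasFDerivAt.comp x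
          L.mulVecCLM.hasFDerivAt
      have h3 := (PiLp.continuousLinearEquiv 2 ℝ (fun _ : Fin k => ℝ)).hasFDerivAt.comp x
        (hd.comp x hΛd)
      have h4 := Lᵀ.mulVecCLM.hasFDerivAt.comp x h3
      refine h4.congr_fderiv ?_
      refine ContinuousLinearMap.ext fun v => ?_
      rw [mulVecCLM_apply, ← mulVec_mulVec, ← mulVec_mulVec, euclideanMatrix_mulVec]
      rfl
    · have := hpos.conjTranspose_mul_mul_same hinj
      rwa [conjTranspose_eq_transpose_of_trivial] at this
    · have := hle.conjTranspose_mul_mul_same L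
      rw [conjTranspose_eq_transpose_of_trivial, Matrix.mul_sub, Matrix.sub_mul,
        Matrix.mul_one] at this
      exact this
    · have h5 : L⁻¹ *ᵥ (Λ x).ofLp = x := by
        show L⁻¹ *ᵥ (L *ᵥ x) = x
        rw [mulVec_mulVec, hLL', one_mulVec]
      simp only [hFdef, hGdef] at heq
      rw [h5, ← det_euclideanMatrix, abs_of_pos hpos.det_pos, det_nonsing_inv,
        Ring.inverse_eq_inv', det_transpose] at heq
      have h6 : ENNReal.ofReal |L.det| * ENNReal.ofReal |L.det⁻¹| = 1 := by
        rw [← ENNReal.ofReal_mul (abs_nonneg _), ← abs_mul, mul_inv_cancel₀ hL, abs_one,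
          ENNReal.ofReal_one]
      rw [det_mul, det_mul, det_transpose]
      have h7 : L.det * (euclideanMatrix (fderiv ℝ T (Λ x))).det * L.det =
          |L.det| * (euclideanMatrix (fderiv ℝ T (Λ x))).det * |L.det| := by
        rw [mul_right_comm, mul_right_comm |L.det|, abs_mul_abs_self]
      rw [h7, ENNReal.ofReal_mul (by have := hpos.det_pos; positivity),
        ENNReal.ofReal_mul (abs_nonneg _), mul_assoc, mul_assoc, ← heq, ← mul_assoc, h6, one_mul]
  · intro x hx y hxy
    obtain ⟨hd, hdet, heq⟩ := hD (Λ x) hx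
    have h1 := hT.cocoercive one_pos (Λ x) (Λ y)
    have h2 : T (Λ x) - T (Λ y) ≠ 0 := fun h0 => by
      have h3 := hT.eq_of_apply_eq hd hdet (sub_eq_zero.1 h0)
      exact hxy (hinj (WithLp.toLp_injective 2 h3))
    rw [hinner]
    have h5 : 0 < ‖T (Λ x) - T (Λ y)‖ ^ 2 := by positivity
    linarith
  · intro hg0
    have hz := hDi fun z => mul_ne_zero (ENNReal.ofReal_pos.2 (abs_pos.2 hLt)).ne' (hg0 _)
    refine measure_mono_null ?_ ((quasiMeasurePreserving_toLp_mulVec hLti).preimage_null hz)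
    rw [Set.preimage_compl]
    refine Set.compl_subset_compl.2 ?_
    rintro y ⟨z, hz, hzy⟩
    have h1 : (T z).ofLp = Lᵀ⁻¹ *ᵥ y := by rw [hzy]
    have h2 : Λ (L⁻¹ *ᵥ z.ofLp) = z := by
      simp only [hΛ, mulVec_mulVec, hLL, one_mulVec]
    refine ⟨L⁻¹ *ᵥ z.ofLp, ?_, ?_⟩
    · rwa [Set.mem_preimage, h2]
    · simp only [h2, h1, mulVec_mulVec]
      rw [mul_nonsing_inv _ hLt.isUnit, one_mulVec]

end QuadTransport

section GaussianTransport

open Filter Topology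

variable {k : ℕ}

theorem dotProduct_le_sum_abs_mul_norm (a b : Fin k → ℝ) : a ⬝ᵥ b ≤ (∑ i, |a i|) * ‖b‖ := by
  rw [dotProduct, Finset.sum_mul]
  refine Finset.sum_le_sum fun i _ => (le_abs_self _).trans ?_
  rw [abs_mul]
  exact mul_le_mul_of_nonneg_left (norm_le_pi_norm b i) (abs_nonneg _)

/-- A continuous monotone map which is strictly monotone at `x` has a continuous inverse at the
image of `x`. -/
theorem tendsto_of_tendsto_monotone {ι : Type*} {l : Filter ι} {S : (Fin k → ℝ) → Fin k → ℝ}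
    (hc : Continuous S) (hmono : ∀ x y, 0 ≤ (S x - S y) ⬝ᵥ (x - y)) {x : Fin k → ℝ}
    (hx : ∀ y, x ≠ y → 0 < (S x - S y) ⬝ᵥ (x - y)) {R : ι → Fin k → ℝ}
    (hR : Tendsto (fun i => S (R i)) l (𝓝 (S x))) : Tendsto R l (𝓝 x) := by
  rw [Metric.tendsto_nhds]
  intro ε hε
  obtain ⟨c, hc0, hcK⟩ := (isCompact_sphere x ε).exists_forall_le'
    (f := fun z => (S x - S z) ⬝ᵥ (x - z)) (a := 0)
    (by simp only [dotProduct]; fun_prop) fun z hz => hx z fun h => by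
      rw [← h, mem_sphere_iff_norm, sub_self, norm_zero] at hz
      exact hε.ne hz
  have hlim : Tendsto (fun i => (∑ j, |(S (R i) - S x) j|) * ε) l (𝓝 ((∑ j, |(S x - S x) j|) * ε)) := by
    refine Tendsto.mul_const _ (tendsto_finsetSum _ fun j _ => ?_)
    exact ((tendsto_pi_nhds.1 (hR.sub_const (S x))) j).abs
  rw [sub_self] at hlim
  simp only [Pi.zero_apply, abs_zero, Finset.sum_const_zero, zero_mul] at hlim
  filter_upwards [hlim.eventually_lt_const hc0] with i hi
  by_contra! hle
  set w := R i with hw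
  set r := dist w x with hr
  have hr0 : 0 < r := hε.trans_le hle
  set z := x + (ε / r) • (w - x) with hz
  have hzx : z - x = (ε / r) • (w - x) := by rw [hz, add_sub_cancel_left]
  have hzn : ‖z - x‖ = ε := by
    rw [hzx, norm_smul, ← dist_eq_norm, ← hr, Real.norm_of_nonneg (by positivity),
      div_mul_cancel₀ _ hr0.ne']
  have h1 := hcK z (by rw [mem_sphere_iff_norm, hzn])
  have h2 : 0 ≤ (S w - S z) ⬝ᵥ (z - x) := by
    rcases hle.eq_or_lt with he | hlt
    · have : z = w := by rw [hz, he, div_self hr0.ne', one_smul, add_sub_cancel]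
      rw [this, sub_self, zero_dotProduct]
    · have h3 : w - z = (r / ε - 1) • (z - x) := by
        rw [hzx, smul_smul, hz, sub_mul, div_mul_div_cancel₀ hε.ne', div_self hr0.ne', one_mul,
          sub_smul, one_smul, sub_sub]
      have h4 := hmono w z
      rw [h3, dotProduct_smul, smul_eq_mul] at h4
      exact nonneg_of_mul_nonneg_right h4 (by rw [sub_pos, lt_div_iff₀ hε]; linarith)
  have h5 := dotProduct_le_sum_abs_mul_norm (S w - S x) (z - x)
  rw [hzn] at h5
  have h6 : (S w - S x) ⬝ᵥ (z - x) = (S w - S z) ⬝ᵥ (z - x) + (S x - S z) ⬝ᵥ (x - z) := by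
    simp only [sub_dotProduct, dotProduct_sub]
    ring
  linarith

theorem gaussFn_pos (A : Matrix (Fin k) (Fin k) ℝ) (x : Fin k → ℝ) : 0 < gaussFn A x :=
  Real.exp_pos _

theorem gaussFn_combo (A : Matrix (Fin k) (Fin k) ℝ) (x y : Fin k → ℝ) {t s : ℝ}
    (hts : t + s = 1) : gaussFn A (t • x + s • y) = gaussFn A x ^ t * gaussFn A y ^ s *
      Real.exp (Real.pi * (t * s) * (A *ᵥ (x - y) ⬝ᵥ (x - y))) := by
  rw [gaussFn, gaussFn, gaussFn, mulVec_dotProduct_combo A x y hts, ← Real.exp_mul, ← Real.exp_mul,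
    ← Real.exp_add, ← Real.exp_add]
  congr 1
  ring

theorem LogConvexFun.const_mul {h : (Fin k → ℝ) → ℝ} (hh : LogConvexFun h) {c : ℝ} (hc : 0 < c) :
    LogConvexFun fun x => c * h x := by
  refine ⟨fun x => mul_nonneg hc.le (hh.1 x), fun x y a b ha hb hab => ?_⟩
  have h1 := hh.2 x y a b ha hb hab
  rw [Real.mul_rpow hc.le (hh.1 x), Real.mul_rpow hc.le (hh.1 y), mul_mul_mul_comm,
    ← Real.rpow_add hc, hab, Real.rpow_one]
  exact mul_le_mul_of_nonneg_left h1 hc.le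

theorem LogConcaveFun.const_mul {h : (Fin k → ℝ) → ℝ} (hh : LogConcaveFun h) {c : ℝ} (hc : 0 < c) :
    LogConcaveFun fun x => c * h x := by
  refine ⟨fun x => mul_nonneg hc.le (hh.1 x), fun x y a b ha hb hab => ?_⟩
  have h1 := hh.2 x y a b ha hb hab
  rw [Real.mul_rpow hc.le (hh.1 x), Real.mul_rpow hc.le (hh.1 y), mul_mul_mul_comm,
    ← Real.rpow_add hc, hab, Real.rpow_one]
  exact mul_le_mul_of_nonneg_left h1 hc.le

theorem logConvexFun_const {c : ℝ} (hc : 0 < c) : LogConvexFun fun _ : Fin k → ℝ => c :=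
  ⟨fun _ => hc.le, fun _ _ a b _ _ hab => by rw [← Real.rpow_add hc, hab, Real.rpow_one]⟩

theorem logConcaveFun_const {c : ℝ} (hc : 0 < c) : LogConcaveFun fun _ : Fin k → ℝ => c :=
  ⟨fun _ => hc.le, fun _ _ a b _ _ hab => by rw [← Real.rpow_add hc, hab, Real.rpow_one]⟩

theorem ofReal_gaussFn_mul_rpow (A : Matrix (Fin k) (Fin k) ℝ) {h : (Fin k → ℝ) → ℝ}
    (hh : ∀ x, 0 ≤ h x) (x y : Fin k → ℝ) {t s r : ℝ} (ht : 0 < t) (hs : 0 < s) :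
    ENNReal.ofReal (gaussFn A x * h x) ^ t * ENNReal.ofReal (gaussFn A y * h y) ^ s * eexp r =
      ENNReal.ofReal (gaussFn A x ^ t * gaussFn A y ^ s * Real.exp r * (h x ^ t * h y ^ s)) := by
  have hx := (gaussFn_pos A x).le
  have hy := (gaussFn_pos A y).le
  have hhx := hh x
  have hhy := hh y
  rw [ENNReal.ofReal_rpow_of_nonneg (by positivity) ht.le,
    ENNReal.ofReal_rpow_of_nonneg (by positivity) hs.le, eexp,
    ← ENNReal.ofReal_mul (by positivity), ← ENNReal.ofReal_mul (by positivity),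
    Real.mul_rpow hx hhx, Real.mul_rpow hy hhy]
  congr 1
  ring

theorem LogConvexFun.quadLogConvex {h : (Fin k → ℝ) → ℝ} (hh : LogConvexFun h)
    {A M : Matrix (Fin k) (Fin k) ℝ} (hAM : (M - A).PosSemidef) :
    QuadLogConvex M fun x => ENNReal.ofReal (gaussFn A x * h x) := by
  intro x y t s ht hs hts
  beta_reduce
  rw [ofReal_gaussFn_mul_rpow A hh.1 x y ht hs, gaussFn_combo A x y hts]
  have hx := (gaussFn_pos A x).le
  have hy := (gaussFn_pos A y).le
  refine ENNReal.ofReal_le_ofReal (mul_le_mul (mul_le_mul_of_nonneg_left ?_ (by positivity))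
    (hh.2 x y t s ht.le hs.le hts) (hh.1 _) (by positivity))
  exact Real.exp_le_exp.2 (mul_le_mul_of_nonneg_left (mulVec_dotProduct_le hAM _)
    (by positivity))

theorem LogConcaveFun.quadLogConcave {h : (Fin k → ℝ) → ℝ} (hh : LogConcaveFun h)
    {A M : Matrix (Fin k) (Fin k) ℝ} (hAM : (A - M).PosSemidef) :
    QuadLogConcave M fun x => ENNReal.ofReal (gaussFn A x * h x) := by
  intro x y t s ht hs hts
  beta_reduce
  rw [ofReal_gaussFn_mul_rpow A hh.1 x y ht hs, gaussFn_combo A x y hts]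
  have hx := (gaussFn_pos A x).le
  have hy := (gaussFn_pos A y).le
  have hhx := hh.1 x
  have hhy := hh.1 y
  refine ENNReal.ofReal_le_ofReal (mul_le_mul (mul_le_mul_of_nonneg_left ?_ (by positivity))
    (hh.2 x y t s ht.le hs.le hts) (by positivity) (by positivity))
  exact Real.exp_le_exp.2 (mul_le_mul_of_nonneg_left (mulVec_dotProduct_le hAM _)
    (by positivity))

theorem LogConvexFun.pos_of_ne_zero {h : (Fin k → ℝ) → ℝ} (hh : LogConvexFun h)
    {z : Fin k → ℝ} (hz : h z ≠ 0) (x : Fin k → ℝ) : 0 < h x := by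
  refine lt_of_le_of_ne (hh.1 x) fun h0 => hz ?_
  have h1 := hh.2 x ((2 : ℝ) • z - x) (1 / 2) (1 / 2) (by norm_num) (by norm_num) (by norm_num)
  have h2 : (1 / 2 : ℝ) • x + (1 / 2 : ℝ) • ((2 : ℝ) • z - x) = z := by
    rw [smul_sub, smul_smul, add_sub_cancel]
    norm_num
  rw [h2, ← h0, Real.zero_rpow (by norm_num), zero_mul] at h1
  exact le_antisymm h1 (hh.1 z)

/-- The density of the centered Gaussian probability measure attached to `B`. -/
def gaussDensity (B : Matrix (Fin k) (Fin k) ℝ) (x : Fin k → ℝ) : ℝ :=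
  gaussFn B x * √B.det

theorem lintegral_gaussDensity {B : Matrix (Fin k) (Fin k) ℝ} (hB : B.PosDef) :
    ∫⁻ x, ENNReal.ofReal (gaussDensity B x) = 1 := by
  have h0 : 0 < √B.det := Real.sqrt_pos.2 hB.det_pos
  simp only [gaussDensity, ENNReal.ofReal_mul (gaussFn_pos B _).le]
  rw [lintegral_mul_const _ (continuous_gaussFn B).measurable.ennreal_ofReal, lintegral_gaussFn hB,
    ← ENNReal.ofReal_mul (by positivity), inv_mul_cancel₀ h0.ne', ENNReal.ofReal_one]

theorem gaussDensity_pos {B : Matrix (Fin k) (Fin k) ℝ} (hB : B.PosDef) (x : Fin k → ℝ) :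
    0 < gaussDensity B x :=
  mul_pos (gaussFn_pos B x) (Real.sqrt_pos.2 hB.det_pos)

theorem measurable_gaussDensity (B : Matrix (Fin k) (Fin k) ℝ) : Measurable (gaussDensity B) :=
  (continuous_gaussFn B).measurable.mul_const _

/-- A monotone map which transports the Gaussian `gaussDensity B` onto a multiple of `g`. -/
structure GaussTransport (B : Matrix (Fin k) (Fin k) ℝ) (g : (Fin k → ℝ) → ℝ)
    (T : (Fin k → ℝ) → Fin k → ℝ) (T' : (Fin k → ℝ) → Matrix (Fin k) (Fin k) ℝ)
    (s : Set (Fin k → ℝ)) : Prop where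
  measurableSet : MeasurableSet s
  measure_compl : volume sᶜ = 0
  hasFDerivWithinAt : ∀ x ∈ s, HasFDerivWithinAt T (T' x).mulVecCLM s x
  posDef : ∀ x ∈ s, (T' x).PosDef
  monge_ampere : ∀ x ∈ s, gaussDensity B x * ∫ y, g y = g (T x) * (T' x).det
  strictMono : ∀ x ∈ s, ∀ y ∈ s, x ≠ y → 0 < (T x - T y) ⬝ᵥ (x - y)

theorem lintegral_ofReal_inv_integral_mul {g : (Fin k → ℝ) → ℝ} (hg : Integrable g)
    (hg0 : ∀ x, 0 ≤ g x) (hpos : 0 < ∫ y, g y) :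
    ∫⁻ x, ENNReal.ofReal ((∫ y, g y)⁻¹ * g x) = 1 := by
  rw [← ofReal_integral_eq_lintegral_ofReal (hg.const_mul _)
    (Eventually.of_forall fun x => mul_nonneg (by positivity) (hg0 x)), integral_const_mul,
    inv_mul_cancel₀ hpos.ne', ENNReal.ofReal_one]

theorem MoreLogConcave.exists_gaussTransport {B Q : Matrix (Fin k) (Fin k) ℝ} (hB : B.PosDef)
    (hQ : Q.PosDef) (hBQ : (Q - B).PosSemidef) {g : (Fin k → ℝ) → ℝ} (hg : Integrable g)
    (hgc : MoreLogConcave g Q⁻¹) (hpos : 0 < ∫ y, g y) :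
    ∃ T T' s, GaussTransport B g T T' s ∧ ∀ x ∈ s, (Q - T' x).PosSemidef := by
  obtain ⟨h, hh, hgh⟩ := hgc
  have hg0 : ∀ x, 0 ≤ g x := fun x => by
    rw [hgh]
    exact mul_nonneg (gaussFn_pos _ x).le (hh.1 x)
  have hdet : 0 < √B.det := Real.sqrt_pos.2 hB.det_pos
  have hc : 0 < (∫ y, g y)⁻¹ := inv_pos.2 hpos
  have hgm : AEMeasurable fun x => ENNReal.ofReal ((∫ y, g y)⁻¹ * g x) :=
    (hg.aemeasurable.const_mul _).ennreal_ofReal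
  have hgcc : QuadLogConcave Q⁻¹ fun x => ENNReal.ofReal ((∫ y, g y)⁻¹ * g x) := by
    have h1 := (hh.const_mul hc).quadLogConcave (A := Q⁻¹) (M := Q⁻¹)
      (by rw [sub_self]; exact PosSemidef.zero)
    convert h1 using 3 with x
    rw [congrFun hgh x, mul_left_comm]
  obtain ⟨T, T', D, -, -, hDm, hD0, hD, hmono, -⟩ := exists_quad_transport hQ
    (measurable_gaussDensity B).ennreal_ofReal.aemeasurable
    (fun x => (ENNReal.ofReal_pos.2 (gaussDensity_pos hB x)).ne') (lintegral_gaussDensity hB)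
    ((logConvexFun_const hdet).quadLogConvex hBQ) hgm
    (lintegral_ofReal_inv_integral_mul hg hg0 hpos) hgcc
  refine ⟨T, T', D, ⟨hDm, hD0, fun x hx => (hD x hx).1.hasFDerivWithinAt, fun x hx => (hD x hx).2.1,
    fun x hx => ?_, fun x hx y _ hxy => hmono x hx y hxy⟩, fun x hx => (hD x hx).2.2.1⟩
  obtain ⟨-, hp, -, he⟩ := hD x hx
  have hd := hp.det_pos
  have hgT := hg0 (T x)
  rw [← ENNReal.ofReal_mul hd.le, ENNReal.ofReal_eq_ofReal_iff (gaussDensity_pos hB x).le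
    (by positivity)] at he
  rw [he]
  field_simp

theorem MoreLogConvex.exists_gaussTransport {B Q : Matrix (Fin k) (Fin k) ℝ} (hB : B.PosDef)
    (hQ : Q.PosDef) (hBQ : (B - Q).PosSemidef) {g : (Fin k → ℝ) → ℝ} (hg : Integrable g)
    (hgc : MoreLogConvex g Q⁻¹) (hpos : 0 < ∫ y, g y) :
    ∃ T T' s, GaussTransport B g T T' s ∧ ∀ x ∈ s, (T' x - Q).PosSemidef := by
  obtain ⟨h, hh, hgh⟩ := hgc
  have hz : ∃ z, h z ≠ 0 := by
    by_contra! h0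
    refine hpos.ne' ?_
    simp [hgh, h0]
  have hg0 : ∀ x, 0 < g x := fun x => by
    rw [hgh]
    exact mul_pos (gaussFn_pos _ x) (hh.pos_of_ne_zero hz.choose_spec x)
  have hdet : 0 < √B.det := Real.sqrt_pos.2 hB.det_pos
  have hc : 0 < (∫ y, g y)⁻¹ := inv_pos.2 hpos
  have hgm : AEMeasurable fun x => ENNReal.ofReal ((∫ y, g y)⁻¹ * g x) :=
    (hg.aemeasurable.const_mul _).ennreal_ofReal
  have hgcc : QuadLogConvex Q⁻¹ fun x => ENNReal.ofReal ((∫ y, g y)⁻¹ * g x) := by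
    have h1 := (hh.const_mul hc).quadLogConvex (A := Q⁻¹) (M := Q⁻¹)
      (by rw [sub_self]; exact PosSemidef.zero)
    convert h1 using 3 with x
    rw [congrFun hgh x, mul_left_comm]
  have hQQ : Q⁻¹⁻¹ = Q := nonsing_inv_nonsing_inv _ hQ.det_pos.ne'.isUnit
  obtain ⟨S, S', D, hSc, hSm, hDm, hD0, hD, hmono, hsurj⟩ := exists_quad_transport hQ.inv hgm
    (fun x => (ENNReal.ofReal_pos.2 (mul_pos hc (hg0 x))).ne')
    (lintegral_ofReal_inv_integral_mul hg (fun x => (hg0 x).le) hpos) hgcc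
    (measurable_gaussDensity B).ennreal_ofReal.aemeasurable (lintegral_gaussDensity hB)
    ((logConcaveFun_const hdet).quadLogConcave (by rwa [hQQ]))
  have hinj : Set.InjOn S D := fun x hx y _ hxy => by
    by_contra hne
    have := hmono x hx y hne
    rw [hxy, sub_self, zero_dotProduct] at this
    exact this.false
  set T := Function.invFunOn S D with hT
  have hTS : ∀ x ∈ D, T (S x) = x := fun x hx => hinj.leftInvOn_invFunOn hx
  refine ⟨T, fun y => (S' (T y))⁻¹, S '' D, ⟨?_, hsurj fun x =>
    (ENNReal.ofReal_pos.2 (gaussDensity_pos hB x)).ne', ?_, ?_, ?_, ?_⟩, ?_⟩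
  · exact measurable_image_of_fderivWithin hDm
      (fun x hx => (hD x hx).1.hasFDerivWithinAt) hinj
  · rintro _ ⟨x, hx, rfl⟩
    have hid : S ∘ T =ᶠ[𝓝[S '' D] (S x)] id := by
      filter_upwards [self_mem_nhdsWithin] with y hy
      exact Function.invFunOn_eq hy
    have hlim : Tendsto T (𝓝[S '' D] (S x)) (𝓝[Set.univ] (T (S x))) := by
      rw [nhdsWithin_univ, hTS x hx]
      refine tendsto_of_tendsto_monotone hSc hSm (hmono x hx) ?_
      exact (tendsto_id.mono_left nhdsWithin_le_nhds).congr' hid.symm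
    have hd := (hD x hx).1
    rw [← hTS x hx] at hd
    have h1 := HasFDerivWithinAt.of_comp_of_leftInverse hlim hd.hasFDerivWithinAt
      (hasFDerivWithinAt_id _ _) hid (f'symm := (S' (T (S x)))⁻¹.mulVecCLM) (fun v => by
        rw [mulVecCLM_apply, mulVecCLM_apply, mulVec_mulVec, hTS x hx,
          nonsing_inv_mul _ (hD x hx).2.1.det_pos.ne'.isUnit, one_mulVec])
      (Set.mem_image_of_mem S hx)
    simpa [hTS x hx] using h1
  · rintro _ ⟨x, hx, rfl⟩
    simpa only [hTS x hx] using (hD x hx).2.1.inv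
  · rintro _ ⟨x, hx, rfl⟩
    obtain ⟨-, hp, -, he⟩ := hD x hx
    have hd := hp.det_pos
    have hgx := hg0 x
    have hB0 := gaussDensity_pos hB (S x)
    rw [← ENNReal.ofReal_mul hd.le, ENNReal.ofReal_eq_ofReal_iff (by positivity)
      (by positivity)] at he
    rw [hTS x hx, det_nonsing_inv, Ring.inverse_eq_inv']
    field_simp at he ⊢
    linarith
  · rintro _ ⟨x, hx, rfl⟩ _ ⟨y, hy, rfl⟩ hxy
    rw [hTS x hx, hTS y hy, dotProduct_comm]
    exact hmono x hx y fun h => hxy (h ▸ rfl)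
  · rintro _ ⟨x, hx, rfl⟩
    obtain ⟨-, hp, hle, -⟩ := hD x hx
    have := hp.inv_sub_inv_posSemidef hQ.inv hle
    rw [hQQ] at this
    simpa only [hTS x hx] using this

end GaussianTransport

section BrascampLieb

variable {n m : ℕ} {ni : Fin m → ℕ}

/-- The quadratic form `∑ pᵢ Cᵢᵀ Bᵢ Cᵢ`. -/
abbrev brascampLiebForm (C : ∀ i, Matrix (Fin (ni i)) (Fin n) ℝ) (p : Fin m → ℝ)
    (B : ∀ i, Matrix (Fin (ni i)) (Fin (ni i)) ℝ) : Matrix (Fin n) (Fin n) ℝ :=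
  ∑ i, p i • ((C i)ᵀ * B i * C i)

/-- The functional whose infimum is the inverse Brascamp–Lieb constant. -/
abbrev brascampLiebRatio (C : ∀ i, Matrix (Fin (ni i)) (Fin n) ℝ) (p : Fin m → ℝ)
    (B : ∀ i, Matrix (Fin (ni i)) (Fin (ni i)) ℝ) : ℝ≥0∞ :=
  (ENNReal.ofReal (∑ i, p i • ((C i)ᵀ * B i * C i)).det /
    ∏ i, ENNReal.ofReal ((B i).det) ^ p i) ^ ((2 : ℝ)⁻¹)

theorem brascampLiebForm_mulVec (C : ∀ i, Matrix (Fin (ni i)) (Fin n) ℝ) (p : Fin m → ℝ)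
    (B : ∀ i, Matrix (Fin (ni i)) (Fin (ni i)) ℝ) (x : Fin n → ℝ) :
    brascampLiebForm C p B *ᵥ x = ∑ i, p i • (C i)ᵀ *ᵥ (B i *ᵥ (C i *ᵥ x)) := by
  rw [brascampLiebForm, sum_mulVec]
  exact Finset.sum_congr rfl fun i _ => by rw [smul_mulVec, mulVec_mulVec, mulVec_mulVec]

theorem sum_smul_transpose_mulVec_dotProduct (C : ∀ i, Matrix (Fin (ni i)) (Fin n) ℝ)
    (p : Fin m → ℝ) (u : ∀ i, Fin (ni i) → ℝ) (x : Fin n → ℝ) :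
    (∑ i, p i • (C i)ᵀ *ᵥ u i) ⬝ᵥ x = ∑ i, p i * (u i ⬝ᵥ C i *ᵥ x) := by
  rw [sum_dotProduct]
  exact Finset.sum_congr rfl fun i _ => by
    rw [smul_dotProduct, smul_eq_mul, mulVec_transpose, ← dotProduct_mulVec]

theorem brascampLiebForm_posDef {C : ∀ i, Matrix (Fin (ni i)) (Fin n) ℝ}
    (hker : ∀ x : Fin n → ℝ, (∀ i, (C i).mulVec x = 0) → x = 0)
    {p : Fin m → ℝ} (hp : ∀ i, 0 < p i)
    {B : ∀ i, Matrix (Fin (ni i)) (Fin (ni i)) ℝ} (hB : ∀ i, (B i).PosDef) :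
    (brascampLiebForm C p B).PosDef := by
  refine PosDef.of_dotProduct_mulVec_pos ?_ fun x hx => ?_
  · rw [IsHermitian, conjTranspose_eq_transpose_of_trivial, brascampLiebForm, transpose_sum]
    refine Finset.sum_congr rfl fun i _ => ?_
    have := (hB i).isHermitian
    rw [IsHermitian, conjTranspose_eq_transpose_of_trivial] at this
    rw [transpose_smul, transpose_mul, transpose_mul, transpose_transpose, this, Matrix.mul_assoc]
  · rw [star_trivial, dotProduct_comm, brascampLiebForm_mulVec,
      sum_smul_transpose_mulVec_dotProduct]
    obtain ⟨i, hi⟩ : ∃ i, C i *ᵥ x ≠ 0 := by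
      by_contra! h
      exact hx (hker x h)
    exact Finset.sum_pos' (fun j _ => mul_nonneg (hp j).le
      ((hB j).posSemidef.mulVec_dotProduct_nonneg _))
      ⟨i, Finset.mem_univ i, mul_pos (hp i) ((hB i).mulVec_dotProduct_pos hi)⟩

theorem prod_ofReal_det_rpow_ne_zero {p : Fin m → ℝ}
    {B : ∀ i, Matrix (Fin (ni i)) (Fin (ni i)) ℝ} (hB : ∀ i, (B i).PosDef) :
    ∏ i, ENNReal.ofReal ((B i).det) ^ p i ≠ 0 :=
  Finset.prod_ne_zero_iff.2 fun i _ => (ENNReal.rpow_pos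
    (ENNReal.ofReal_pos.2 (hB i).det_pos) ENNReal.ofReal_ne_top).ne'

theorem prod_ofReal_rpow_ne_top {p : Fin m → ℝ} (hp : ∀ i, 0 < p i) (a : Fin m → ℝ) :
    ∏ i, ENNReal.ofReal (a i) ^ p i ≠ ∞ :=
  ENNReal.prod_ne_top fun i _ => ENNReal.rpow_ne_top_of_nonneg (hp i).le ENNReal.ofReal_ne_top

theorem ofReal_sqrt_eq_rpow {a : ℝ} (ha : 0 ≤ a) :
    ENNReal.ofReal √a = ENNReal.ofReal a ^ ((2 : ℝ)⁻¹) := by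
  rw [Real.sqrt_eq_rpow, ENNReal.ofReal_rpow_of_nonneg ha (by norm_num), one_div]

theorem lintegral_prod_gaussDensity {C : ∀ i, Matrix (Fin (ni i)) (Fin n) ℝ}
    (hker : ∀ x : Fin n → ℝ, (∀ i, (C i).mulVec x = 0) → x = 0)
    {p : Fin m → ℝ} (hp : ∀ i, 0 < p i)
    {B : ∀ i, Matrix (Fin (ni i)) (Fin (ni i)) ℝ} (hB : ∀ i, (B i).PosDef) :
    ∫⁻ x, ∏ i, ENNReal.ofReal (gaussDensity (B i) (C i *ᵥ x)) ^ p i =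
      (brascampLiebRatio C p B)⁻¹ := by
  have hM := brascampLiebForm_posDef hker hp hB
  have h1 : ∀ x, ∏ i, ENNReal.ofReal (gaussDensity (B i) (C i *ᵥ x)) ^ p i =
      (∏ i, ENNReal.ofReal ((B i).det) ^ p i) ^ ((2 : ℝ)⁻¹) *
        ENNReal.ofReal (gaussFn (brascampLiebForm C p B) x) := by
    intro x
    have h2 : ENNReal.ofReal (gaussFn (brascampLiebForm C p B) x) =
        ∏ i, ENNReal.ofReal (gaussFn (B i) (C i *ᵥ x)) ^ p i := by
      rw [gaussFn, brascampLiebForm_mulVec, sum_smul_transpose_mulVec_dotProduct, Finset.mul_sum,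
        Real.exp_sum, ENNReal.ofReal_prod_of_nonneg fun i _ => (Real.exp_pos _).le]
      refine Finset.prod_congr rfl fun i _ => ?_
      rw [ENNReal.ofReal_rpow_of_pos (gaussFn_pos _ _), gaussFn, ← Real.exp_mul]
      congr 2
      ring
    rw [h2, ← ENNReal.prod_rpow_of_nonneg (by norm_num), ← Finset.prod_mul_distrib]
    refine Finset.prod_congr rfl fun i _ => ?_
    rw [gaussDensity, ENNReal.ofReal_mul (gaussFn_pos _ _).le,
      ENNReal.mul_rpow_of_nonneg _ _ (hp i).le, ofReal_sqrt_eq_rpow (hB i).det_pos.le,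
      ← ENNReal.rpow_mul, ← ENNReal.rpow_mul, mul_comm (2 : ℝ)⁻¹, mul_comm]
  simp only [h1]
  rw [lintegral_const_mul _ (continuous_gaussFn _).measurable.ennreal_ofReal, lintegral_gaussFn hM,
    ENNReal.ofReal_inv_of_pos (Real.sqrt_pos.2 hM.det_pos), ofReal_sqrt_eq_rpow hM.det_pos.le,
    brascampLiebRatio, ENNReal.div_rpow_of_nonneg _ _ (by norm_num), ← div_eq_mul_inv, ENNReal.inv_div]
  · exact Or.inl (ENNReal.rpow_ne_top_of_nonneg (by norm_num) (prod_ofReal_rpow_ne_top hp _))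
  · exact Or.inl (ENNReal.rpow_pos (pos_iff_ne_zero.2 (prod_ofReal_det_rpow_ne_zero hB))
      (prod_ofReal_rpow_ne_top hp _)).ne'

theorem brascampLiebRatio_ne_zero {C : ∀ i, Matrix (Fin (ni i)) (Fin n) ℝ}
    (hker : ∀ x : Fin n → ℝ, (∀ i, (C i).mulVec x = 0) → x = 0)
    {p : Fin m → ℝ} (hp : ∀ i, 0 < p i)
    {B : ∀ i, Matrix (Fin (ni i)) (Fin (ni i)) ℝ} (hB : ∀ i, (B i).PosDef) :
    brascampLiebRatio C p B ≠ 0 :=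
  (ENNReal.rpow_pos (ENNReal.div_pos
    (ENNReal.ofReal_pos.2 (brascampLiebForm_posDef hker hp hB).det_pos).ne'
    (prod_ofReal_rpow_ne_top hp _))
    (ENNReal.div_ne_top ENNReal.ofReal_ne_top (prod_ofReal_det_rpow_ne_zero hB))).ne'

theorem brascampLiebRatio_ne_top {C : ∀ i, Matrix (Fin (ni i)) (Fin n) ℝ} {p : Fin m → ℝ}
    {B : ∀ i, Matrix (Fin (ni i)) (Fin (ni i)) ℝ} (hB : ∀ i, (B i).PosDef) :
    brascampLiebRatio C p B ≠ ∞ :=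
  ENNReal.rpow_ne_top_of_nonneg (by norm_num)
    (ENNReal.div_ne_top ENNReal.ofReal_ne_top (prod_ofReal_det_rpow_ne_zero hB))

theorem mul_self_mul_prod_le_ofReal_det {C : ∀ i, Matrix (Fin (ni i)) (Fin n) ℝ} {p : Fin m → ℝ}
    {B : ∀ i, Matrix (Fin (ni i)) (Fin (ni i)) ℝ} {E : ℝ≥0∞} (hE : E ≤ brascampLiebRatio C p B) :
    E * E * ∏ i, ENNReal.ofReal ((B i).det) ^ p i ≤
      ENNReal.ofReal (brascampLiebForm C p B).det := by
  refine ENNReal.mul_le_of_le_div ?_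
  calc E * E ≤ brascampLiebRatio C p B * brascampLiebRatio C p B := mul_le_mul' hE hE
    _ = _ := by
      rw [brascampLiebRatio, ← ENNReal.rpow_add_of_nonneg _ _ (by norm_num) (by norm_num),
        show (2 : ℝ)⁻¹ + (2 : ℝ)⁻¹ = 1 by norm_num, ENNReal.rpow_one]

/-- The transport of `∏ gaussDensity (B i) (C i x) ^ p i` by the sum of the transport maps. -/
theorem mul_prod_le_lintegral_iSup {C : ∀ i, Matrix (Fin (ni i)) (Fin n) ℝ}
    (hCsurj : ∀ i, Function.Surjective (C i).mulVec)
    (hker : ∀ x : Fin n → ℝ, (∀ i, (C i).mulVec x = 0) → x = 0)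
    {p : Fin m → ℝ} (hp : ∀ i, 0 < p i)
    {B : ∀ i, Matrix (Fin (ni i)) (Fin (ni i)) ℝ} (hB : ∀ i, (B i).PosDef)
    {g : ∀ i, (Fin (ni i) → ℝ) → ℝ} (hg0 : ∀ i y, 0 ≤ g i y)
    {T : ∀ i, (Fin (ni i) → ℝ) → Fin (ni i) → ℝ}
    {T' : ∀ i, (Fin (ni i) → ℝ) → Matrix (Fin (ni i)) (Fin (ni i)) ℝ}
    {s : ∀ i, Set (Fin (ni i) → ℝ)} (hT : ∀ i, GaussTransport (B i) (g i) (T i) (T' i) (s i))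
    {E : ℝ≥0∞} (hE : ∀ x : ∀ i, Fin (ni i) → ℝ, (∀ i, x i ∈ s i) →
      E ≤ brascampLiebRatio C p fun i => T' i (x i)) :
    E * E * (∏ i, ENNReal.ofReal (∫ y, g i y) ^ p i) ≤
      (∫⁻ x : Fin n → ℝ,
        ⨆ (y : ∀ i, Fin (ni i) → ℝ) (_ : ∑ i, p i • (C i)ᵀ.mulVec (y i) = x),
          ENNReal.ofReal (∏ i, g i (y i) ^ p i)) * brascampLiebRatio C p B := by
  set H : (Fin n → ℝ) → ℝ≥0∞ := fun x =>
    ⨆ (y : ∀ i, Fin (ni i) → ℝ) (_ : ∑ i, p i • (C i)ᵀ.mulVec (y i) = x),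
          ENNReal.ofReal (∏ i, g i (y i) ^ p i) with hH
  set Θ : (Fin n → ℝ) → Fin n → ℝ := fun x => ∑ i, p i • (C i)ᵀ *ᵥ T i (C i *ᵥ x) with hΘ
  set N : (Fin n → ℝ) → Matrix (Fin n) (Fin n) ℝ := fun x =>
    brascampLiebForm C p fun i => T' i (C i *ᵥ x) with hN
  set D : Set (Fin n → ℝ) := ⋂ i, (fun x => C i *ᵥ x) ⁻¹' s i with hD
  have hmem : ∀ {x}, x ∈ D ↔ ∀ i, C i *ᵥ x ∈ s i := by simp [hD]
  have hDm : MeasurableSet D := MeasurableSet.iInter fun i =>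
    (C i).mulVecCLM.continuous.measurable (hT i).measurableSet
  have hD0 : ∀ᵐ x, x ∈ D := by
    simp only [hmem]
    refine ae_all_iff.2 fun i => ?_
    exact (ae_comp_linearMap_mem_iff (C i).mulVecLin volume volume (hCsurj i)
      (hT i).measurableSet).2 (mem_ae_iff.2 (hT i).measure_compl)
  have hderiv : ∀ x ∈ D, HasFDerivWithinAt Θ (N x).mulVecCLM D x := by
    intro x hx
    have h1 : ∀ i, HasFDerivWithinAt (fun x => p i • (C i)ᵀ *ᵥ T i (C i *ᵥ x))
        (p i • ((C i)ᵀ.mulVecCLM ∘L (T' i (C i *ᵥ x)).mulVecCLM ∘L (C i).mulVecCLM)) D x := by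
      intro i
      have h2 := ((hT i).hasFDerivWithinAt _ (hmem.1 hx i)).comp x
        (C i).mulVecCLM.hasFDerivWithinAt (s := D) fun y hy => hmem.1 hy i
      exact ((C i)ᵀ.mulVecCLM.hasFDerivAt.comp_hasFDerivWithinAt x h2).const_smul (p i)
    refine (HasFDerivWithinAt.fun_sum (u := Finset.univ) fun i _ => h1 i).congr_fderiv ?_
    refine ContinuousLinearMap.ext fun v => ?_
    rw [mulVecCLM_apply, hN, brascampLiebForm_mulVec, _root_.sum_apply]
    rfl
  have hinj : Set.InjOn Θ D := by
    intro x hx y hy hxy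
    by_contra hne
    obtain ⟨i, hi⟩ : ∃ i, C i *ᵥ (x - y) ≠ 0 := by
      by_contra! h
      exact hne (sub_eq_zero.1 (hker _ h))
    have h1 : (Θ x - Θ y) ⬝ᵥ (x - y) =
        ∑ j, p j * ((T j (C j *ᵥ x) - T j (C j *ᵥ y)) ⬝ᵥ (C j *ᵥ x - C j *ᵥ y)) := by
      simp only [hΘ]
      rw [sub_dotProduct, sum_smul_transpose_mulVec_dotProduct,
        sum_smul_transpose_mulVec_dotProduct, ← Finset.sum_sub_distrib]
      exact Finset.sum_congr rfl fun j _ => by rw [← mul_sub, ← sub_dotProduct, mulVec_sub]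
    have hpos : ∀ j, C j *ᵥ x ≠ C j *ᵥ y →
        0 < (T j (C j *ᵥ x) - T j (C j *ᵥ y)) ⬝ᵥ (C j *ᵥ x - C j *ᵥ y) := fun j hj =>
      (hT j).strictMono _ (hmem.1 hx j) _ (hmem.1 hy j) hj
    have h2 : 0 < (Θ x - Θ y) ⬝ᵥ (x - y) := by
      rw [h1]
      refine Finset.sum_pos' (fun j _ => mul_nonneg (hp j).le ?_) ⟨i, Finset.mem_univ i,
        mul_pos (hp i) (hpos i fun h => hi (by rw [mulVec_sub, h, sub_self]))⟩
      by_cases hj : C j *ᵥ x = C j *ᵥ y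
      · rw [hj, sub_self, zero_dotProduct]
      · exact (hpos j hj).le
    rw [hxy, sub_self, zero_dotProduct] at h2
    exact h2.false
  have hpoint : ∀ x ∈ D, E * E * (∏ i, ENNReal.ofReal (∫ y, g i y) ^ p i) *
      ∏ i, ENNReal.ofReal (gaussDensity (B i) (C i *ᵥ x)) ^ p i ≤
        ENNReal.ofReal |(N x).mulVecCLM.det| * H (Θ x) := by
    intro x hx
    have hNpos : (N x).PosDef :=
      brascampLiebForm_posDef hker hp fun i => (hT i).posDef _ (hmem.1 hx i)
    rw [det_mulVecCLM, abs_of_pos hNpos.det_pos]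
    calc E * E * (∏ i, ENNReal.ofReal (∫ y, g i y) ^ p i) *
          ∏ i, ENNReal.ofReal (gaussDensity (B i) (C i *ᵥ x)) ^ p i
        = E * E * (∏ i, ENNReal.ofReal (T' i (C i *ᵥ x)).det ^ p i) *
          ENNReal.ofReal (∏ i, g i (T i (C i *ᵥ x)) ^ p i) := by
          rw [ENNReal.ofReal_prod_of_nonneg fun i _ => Real.rpow_nonneg (hg0 i _) _,
            mul_assoc (E * E), mul_assoc (E * E), ← Finset.prod_mul_distrib, ← Finset.prod_mul_distrib]
          congr 1
          refine Finset.prod_congr rfl fun i _ => ?_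
          have hd := ((hT i).posDef _ (hmem.1 hx i)).det_pos
          rw [← ENNReal.ofReal_rpow_of_nonneg (hg0 i _) (hp i).le,
            ← ENNReal.mul_rpow_of_nonneg _ _ (hp i).le, ← ENNReal.mul_rpow_of_nonneg _ _ (hp i).le,
            ← ENNReal.ofReal_mul hd.le, ← ENNReal.ofReal_mul (integral_nonneg (hg0 i)), mul_comm,
            mul_comm (T' i _).det, (hT i).monge_ampere _ (hmem.1 hx i)]
      _ ≤ ENNReal.ofReal (N x).det * H (Θ x) := by
          refine mul_le_mul' (mul_self_mul_prod_le_ofReal_det (hE _ (hmem.1 hx))) ?_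
          exact le_iSup₂_of_le (fun i => T i (C i *ᵥ x)) rfl le_rfl
  have hr0 := brascampLiebRatio_ne_zero hker hp hB
  have hrt := brascampLiebRatio_ne_top (C := C) (p := p) hB
  rw [← ENNReal.div_le_iff hr0 hrt, div_eq_mul_inv, ← lintegral_prod_gaussDensity hker hp hB]
  have hmeas : Measurable fun x => ∏ i, ENNReal.ofReal (gaussDensity (B i) (C i *ᵥ x)) ^ p i :=
    Finset.measurable_prod _ fun i _ => (((measurable_gaussDensity (B i)).comp
      (C i).mulVecCLM.continuous.measurable).ennreal_ofReal.pow_const (p i))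
  rw [← lintegral_const_mul _ hmeas]
  calc _ = ∫⁻ x in D, E * E * (∏ i, ENNReal.ofReal (∫ y, g i y) ^ p i) *
        ∏ i, ENNReal.ofReal (gaussDensity (B i) (C i *ᵥ x)) ^ p i := by
        rw [Measure.restrict_eq_self_of_ae_mem hD0]
    _ ≤ ∫⁻ x in D, ENNReal.ofReal |(N x).mulVecCLM.det| * H (Θ x) :=
        setLIntegral_mono' hDm hpoint
    _ = ∫⁻ x in Θ '' D, H x :=
        (lintegral_image_eq_lintegral_abs_det_fderiv_mul volume hDm hderiv hinj H).symm
    _ ≤ ∫⁻ x, H x := setLIntegral_le_lintegral _ _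

theorem MoreLogConcave.nonneg {k : ℕ} {f : (Fin k → ℝ) → ℝ} {Q : Matrix (Fin k) (Fin k) ℝ}
    (hf : MoreLogConcave f Q) (x : Fin k → ℝ) : 0 ≤ f x := by
  obtain ⟨h, hh, rfl⟩ := hf
  exact mul_nonneg (gaussFn_pos _ x).le (hh.1 x)

theorem MoreLogConvex.nonneg {k : ℕ} {f : (Fin k → ℝ) → ℝ} {Q : Matrix (Fin k) (Fin k) ℝ}
    (hf : MoreLogConvex f Q) (x : Fin k → ℝ) : 0 ≤ f x := by
  obtain ⟨h, hh, rfl⟩ := hf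
  exact mul_nonneg (gaussFn_pos _ x).le (hh.1 x)

end BrascampLieb

/-- Regularized reverse (dual) Brascamp–Lieb inequality with mixed
log-concavity/log-convexity assumptions. -/
theorem regularized_brascamp_lieb_reverse
    {n m : ℕ} (hm : 1 ≤ m) {ni : Fin m → ℕ}
    (C : ∀ i, Matrix (Fin (ni i)) (Fin n) ℝ)
    (hCsurj : ∀ i, Function.Surjective (C i).mulVec)
    (hker : ∀ x : Fin n → ℝ, (∀ i, (C i).mulVec x = 0) → x = 0)
    (p : Fin m → ℝ) (hp : ∀ i, 0 < p i)
    (I : Finset (Fin m))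
    (Q : ∀ i, Matrix (Fin (ni i)) (Fin (ni i)) ℝ) (hQ : ∀ i, (Q i).PosDef)
    (g : ∀ i, (Fin (ni i) → ℝ) → ℝ)
    (hgint : ∀ i, Integrable (g i))
    (hgI : ∀ i ∈ I, MoreLogConcave (g i) (Q i)⁻¹)
    (hgIc : ∀ i ∉ I, MoreLogConvex (g i) (Q i)⁻¹) :
    (⨅ (B : ∀ i, Matrix (Fin (ni i)) (Fin (ni i)) ℝ)
        (_ : (∀ i, (B i).PosDef) ∧ (∀ i ∈ I, (Q i - B i).PosSemidef) ∧
             (∀ i ∉ I, (B i - Q i).PosSemidef)),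
        (ENNReal.ofReal ((∑ i, p i • ((C i)ᵀ * B i * C i)).det) /
            ∏ i, ENNReal.ofReal ((B i).det) ^ p i) ^ ((2 : ℝ)⁻¹)) *
      ∏ i, ENNReal.ofReal (∫ y, g i y) ^ p i ≤
      ∫⁻ x : Fin n → ℝ,
        ⨆ (y : ∀ i, Fin (ni i) → ℝ) (_ : ∑ i, p i • (C i)ᵀ.mulVec (y i) = x),
          ENNReal.ofReal (∏ i, g i (y i) ^ p i) := by
  have hg0 : ∀ i y, 0 ≤ g i y := fun i y => by
    by_cases hi : i ∈ I
    · exact (hgI i hi).nonneg y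
    · exact (hgIc i hi).nonneg y
  by_cases hzero : ∃ i, ∫ y, g i y = 0
  · obtain ⟨i, hi⟩ := hzero
    rw [Finset.prod_eq_zero (Finset.mem_univ i) (by rw [hi, ENNReal.ofReal_zero,
      ENNReal.zero_rpow_of_pos (hp i)]), mul_zero]
    exact zero_le
  have hpos : ∀ i, 0 < ∫ y, g i y := fun i =>
    lt_of_le_of_ne (integral_nonneg (hg0 i)) fun h => hzero ⟨i, h.symm⟩
  set E := ⨅ (B : ∀ i, Matrix (Fin (ni i)) (Fin (ni i)) ℝ)
        (_ : (∀ i, (B i).PosDef) ∧ (∀ i ∈ I, (Q i - B i).PosSemidef) ∧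
             (∀ i ∉ I, (B i - Q i).PosSemidef)), brascampLiebRatio C p B with hE
  change E * _ ≤ _
  rcases eq_or_ne E 0 with hE0 | hE0
  · rw [hE0, zero_mul]
    exact zero_le
  have hEt : E ≠ ∞ := ne_top_of_le_ne_top (brascampLiebRatio_ne_top (C := C) (p := p) hQ)
    (iInf₂_le Q ⟨hQ, fun i _ => by rw [sub_self]; exact PosSemidef.zero,
      fun i _ => by rw [sub_self]; exact PosSemidef.zero⟩)
  rw [← ENNReal.mul_le_mul_iff_right hE0 hEt, ← mul_assoc, ← ENNReal.div_le_iff_le_mul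
    (Or.inr hEt) (Or.inr hE0)]
  refine le_iInf₂ fun B hB => ENNReal.div_le_of_le_mul' ?_
  have hex : ∀ i, ∃ T T' s, GaussTransport (B i) (g i) T T' s ∧
      ∀ x ∈ s, (i ∈ I → (Q i - T' x).PosSemidef) ∧ (i ∉ I → (T' x - Q i).PosSemidef) := by
    intro i
    by_cases hi : i ∈ I
    · obtain ⟨T, T', s, h1, h2⟩ := (hgI i hi).exists_gaussTransport (hB.1 i) (hQ i)
        (hB.2.1 i hi) (hgint i) (hpos i)
      exact ⟨T, T', s, h1, fun x hx => ⟨fun _ => h2 x hx, fun h => absurd hi h⟩⟩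
    · obtain ⟨T, T', s, h1, h2⟩ := (hgIc i hi).exists_gaussTransport (hB.1 i) (hQ i)
        (hB.2.2 i hi) (hgint i) (hpos i)
      exact ⟨T, T', s, h1, fun x hx => ⟨fun h => absurd h hi, fun _ => h2 x hx⟩⟩
  choose T T' s hT hT' using hex
  exact mul_prod_le_lintegral_iSup hCsurj hker hp hB.1 hg0 hT fun x hx =>
    iInf₂_le (fun i => T' i (x i)) ⟨fun i => (hT i).posDef _ (hx i),
      fun i hi => (hT' i _ (hx i)).1 hi, fun i hi => (hT' i _ (hx i)).2 hi⟩
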